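/- arXiv:2501.13498 — 6 statements merged into one kernel-verified Lean document; each statement's English description precedes it below -/
import Mathlib

section
/- Let N ≥ 1 and suppose (X_n)_{0≤n<N} satisfies the functional correlation bound with rate function R and constant C_*. Then for every K ≥ 2 the following holds: whenever I ⊂ ℤ₊ ∩ [0,N−1] is decomposed as I = I₁ ∪ ⋯ ∪ I_K into nonempty pairwise disjoint sets with max I_k < min I_{k+1} for each 1 ≤ k ≤ K−1, with gaps g_k = min I_{k+1} − max I_k, and F : [−L,L]^{|I|} → ℝ is separately Lipschitz, then |∫ F dν_I − ∫ F d(ν_{I₁} ⊗ ⋯ ⊗ ν_{I_K})| ≤ C_* ‖F‖_Lip ∑_{k=1}^{K−1} R(g_k). -/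
set_option autoImplicit false

open MeasureTheory Filter
open scoped ENNReal NNReal Topology

noncomputable section

/-- The cube `[-L,L]^n`. -/
def cube (L : ℝ) (n : ℕ) : Set (Fin n → ℝ) := {x | ∀ j, |x j| ≤ L}

/-- `F : [-L,L]^n → ℝ` is separately Lipschitz, with `Fb` a bound for `sup |F|` on the cube
and `Fl` a bound for the maximal Lipschitz constant `[F]₁` in any single coordinate
(so that `Fb + Fl` is a bound for `‖F‖_Lip = ‖F‖_∞ + [F]₁`). -/
structure SepLipBound (L : ℝ) {n : ℕ} (F : (Fin n → ℝ) → ℝ) (Fb Fl : ℝ) : Prop where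
  bound : ∀ x ∈ cube L n, |F x| ≤ Fb
  lip : ∀ (j : Fin n), ∀ x ∈ cube L n, ∀ a b : ℝ, |a| ≤ L → |b| ≤ L →
    |F (Function.update x j a) - F (Function.update x j b)| ≤ Fl * |a - b|

/-- The functional correlation bound (FCB) for `(X_n)_{0 ≤ n < N}` with rate function `R` and
constant `Cs`: for every finite ordered index set `i 0 < i 1 < ⋯ < i (n-1)` inside `[0, N)`,
split at position `p` into two blocks, and every separately Lipschitz
`F : [-L,L]^n → ℝ`, the correlation between the two blocks is at most
`Cs ‖F‖_Lip R(g₁)` where `g₁ = i p − i (p−1)` is the gap between the blocks. -/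
def FCB {M : Type*} [MeasurableSpace M] (μ : MeasureTheory.Measure M)
    (X : ℕ → M → ℝ) (N : ℕ) (L Cs : ℝ) (R : ℕ → ℝ) : Prop :=
  ∀ (n : ℕ) (i : ℕ → ℕ), StrictMono i → (∀ j < n, i j < N) →
  ∀ p : ℕ, 0 < p → p < n →
  ∀ (F : (Fin n → ℝ) → ℝ) (Fb Fl : ℝ), SepLipBound L F Fb Fl →
    |(∫ x, F (fun j => X (i j) x) ∂μ) -
      ∫ x, ∫ y, F (fun j => if (j : ℕ) < p then X (i j) x else X (i j) y) ∂μ ∂μ|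
    ≤ Cs * (Fb + Fl) * R (i p - i (p - 1))

lemma fcbaux_pi_update {M : Type*} [MeasurableSpace M] (μ : Measure M) [IsProbabilityMeasure μ]
    {K : ℕ} (m : Fin K) :
    MeasurePreserving (fun q : (Fin K → M) × M => Function.update q.1 m q.2)
      ((Measure.pi fun _ => μ).prod μ) (Measure.pi fun _ => μ) := by
  have hmeas : Measurable (fun q : (Fin K → M) × M => Function.update q.1 m q.2) := by
    rw [measurable_pi_iff]
    intro j
    by_cases h : j = m
    · subst h
      simpa using measurable_snd
    · simp only [Function.update_of_ne h]
      exact (measurable_pi_apply j).comp measurable_fst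
  refine ⟨hmeas, ?_⟩
  symm
  apply Measure.pi_eq
  intro s hs
  rw [Measure.map_apply hmeas (MeasurableSet.univ_pi hs)]
  have : (fun q : (Fin K → M) × M => Function.update q.1 m q.2) ⁻¹' (Set.univ.pi s)
      = (Set.univ.pi (Function.update s m Set.univ)) ×ˢ s m := by
    ext q
    simp only [Set.mem_preimage, Set.mem_pi, Set.mem_univ, true_implies, Set.mem_prod]
    constructor
    · intro h
      refine ⟨fun j => ?_, by simpa using h m⟩
      by_cases hj : j = m
      · subst hj; simp
      · have := h j
        rw [Function.update_of_ne hj] at this ⊢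
        exact this
    · rintro ⟨h1, h2⟩ j
      by_cases hj : j = m
      · subst hj; simpa using h2
      · have := h1 j
        rw [Function.update_of_ne hj] at this ⊢
        exact this
  rw [this, Measure.prod_prod, Measure.pi_pi]
  rw [← Finset.mul_prod_erase Finset.univ (fun j => μ (s j)) (Finset.mem_univ m),
    ← Finset.mul_prod_erase Finset.univ (fun j => μ (Function.update s m Set.univ j))
      (Finset.mem_univ m)]
  simp only [Function.update_self, measure_univ, one_mul]
  rw [mul_comm]
  congr 1
  apply Finset.prod_congr rfl
  intro j hj
  rw [Function.update_of_ne (Finset.ne_of_mem_erase hj)]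

lemma fcbaux_integral_update {M : Type*} [MeasurableSpace M] (μ : Measure M)
    [IsProbabilityMeasure μ] {K : ℕ} (m : Fin K) (f : (Fin K → M) → ℝ)
    (hf : Integrable f (Measure.pi fun _ => μ)) :
    Integrable (fun z => ∫ x, f (Function.update z m x) ∂μ) (Measure.pi fun _ => μ) ∧
    ∫ z, f z ∂(Measure.pi fun _ => μ)
      = ∫ z, ∫ x, f (Function.update z m x) ∂μ ∂(Measure.pi fun _ => μ) := by
  have hp := fcbaux_pi_update μ m
  have hi : Integrable (fun q : (Fin K → M) × M => f (Function.update q.1 m q.2))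
      ((Measure.pi fun _ => μ).prod μ) := hp.integrable_comp_of_integrable hf
  refine ⟨hi.integral_prod_left, ?_⟩
  have h1 := integral_prod _ hi
  rw [← h1]
  conv_lhs => rw [← hp.map_eq]
  rw [integral_map hp.measurable.aemeasurable]
  rw [hp.map_eq]
  exact hf.aestronglyMeasurable

def fcbauxClamp (L t : ℝ) : ℝ := max (-L) (min L t)

lemma fcbaux_clamp_abs {L : ℝ} (hL : 0 ≤ L) (t : ℝ) : |fcbauxClamp L t| ≤ L := by
  unfold fcbauxClamp
  rw [abs_le]
  exact ⟨le_max_left _ _, max_le (by linarith) (min_le_left _ _)⟩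

lemma fcbaux_clamp_eq {L t : ℝ} (h : |t| ≤ L) : fcbauxClamp L t = t := by
  unfold fcbauxClamp
  rw [abs_le] at h
  rw [min_eq_right h.2, max_eq_right h.1]

lemma fcbaux_lip {L : ℝ} {n : ℕ} {F : (Fin n → ℝ) → ℝ} {Fb Fl : ℝ}
    (hF : SepLipBound L F Fb Fl) (x y : Fin n → ℝ) (hx : x ∈ cube L n) (hy : y ∈ cube L n)
    (s : Finset (Fin n)) :
    |F (s.piecewise y x) - F x| ≤ ∑ j ∈ s, Fl * |y j - x j| := by
  induction s using Finset.induction_on with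
  | empty => simp
  | insert j s hj ih =>
    rw [Finset.sum_insert hj, Finset.piecewise_insert]
    have hc : s.piecewise y x ∈ cube L n := by
      intro k
      by_cases hk : k ∈ s
      · rw [Finset.piecewise_eq_of_mem _ _ _ hk]; exact hy k
      · rw [Finset.piecewise_eq_of_notMem _ _ _ hk]; exact hx k
    have h := hF.lip j _ hc (y j) (x j) (hy j) (hx j)
    have h2 : Function.update (s.piecewise y x) j (x j) = s.piecewise y x := by
      conv_rhs => rw [← Function.update_eq_self j (s.piecewise y x)]
      rw [Finset.piecewise_eq_of_notMem _ _ _ hj]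
    rw [h2] at h
    calc _ ≤ |F (Function.update (s.piecewise y x) j (y j)) - F (s.piecewise y x)|
          + |F (s.piecewise y x) - F x| := abs_sub_le _ _ _
      _ ≤ _ := add_le_add h ih

lemma fcbaux_cont {L : ℝ} (hL : 0 ≤ L) {n : ℕ} {F : (Fin n → ℝ) → ℝ} {Fb Fl : ℝ}
    (hF : SepLipBound L F Fb Fl) :
    Continuous (fun x : Fin n → ℝ => F (fun j => fcbauxClamp L (x j))) := by
  have hcl : Continuous (fcbauxClamp L) := by unfold fcbauxClamp; fun_prop
  rw [continuous_iff_continuousAt]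
  intro x
  unfold ContinuousAt
  rw [tendsto_iff_norm_sub_tendsto_zero]
  have hb : ∀ y : Fin n → ℝ, ‖F (fun j => fcbauxClamp L (y j)) - F (fun j => fcbauxClamp L (x j))‖
      ≤ ∑ j, Fl * |fcbauxClamp L (y j) - fcbauxClamp L (x j)| := by
    intro y
    have := fcbaux_lip hF (fun j => fcbauxClamp L (x j)) (fun j => fcbauxClamp L (y j))
      (fun j => fcbaux_clamp_abs hL _) (fun j => fcbaux_clamp_abs hL _) Finset.univ
    rw [Finset.piecewise_univ] at this
    exact this
  refine squeeze_zero (fun _ => norm_nonneg _) hb ?_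
  have hc : Continuous (fun y : Fin n → ℝ =>
      ∑ j, Fl * |fcbauxClamp L (y j) - fcbauxClamp L (x j)|) := by fun_prop
  have := hc.tendsto x
  simpa using this

lemma fcbaux_integrable {M : Type*} [MeasurableSpace M] (μ : Measure M) [IsProbabilityMeasure μ]
    {K n : ℕ} {L : ℝ} (hL : 0 ≤ L) {F : (Fin n → ℝ) → ℝ} {Fb Fl : ℝ}
    (hF : SepLipBound L F Fb Fl) (Y : Fin n → M → ℝ) (hY : ∀ j, Measurable (Y j))
    (hYb : ∀ j x, |Y j x| ≤ L) (e : Fin n → Fin K) :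
    Integrable (fun z : Fin K → M => F (fun j => Y j (z (e j)))) (Measure.pi fun _ => μ) := by
  have heq : (fun z : Fin K → M => F (fun j => Y j (z (e j))))
      = fun z => (fun x : Fin n → ℝ => F (fun j => fcbauxClamp L (x j)))
          (fun j => Y j (z (e j))) := by
    funext z
    simp only [fcbaux_clamp_eq (hYb _ _)]
  have hm : Measurable (fun z : Fin K → M => F (fun j => Y j (z (e j)))) := by
    rw [heq]
    refine (fcbaux_cont hL hF).measurable.comp ?_
    rw [measurable_pi_iff]
    intro j
    exact (hY j).comp (measurable_pi_apply _)
  refine Integrable.of_bound hm.aestronglyMeasurable Fb (Filter.Eventually.of_forall fun z => ?_)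
  exact hF.bound _ (fun j => hYb _ _)

/-- Proposition 2.5 of the paper: if `(X_n)_{0 ≤ n < N}` satisfies the
functional correlation bound with rate function `R` and constant `C_*`, then for every
`K ≥ 2` and every decomposition `I = I₁ ∪ ⋯ ∪ I_K` of an ordered index set
`i 0 < ⋯ < i (n-1) < N` into `K` consecutive blocks (block `k`, `1 ≤ k ≤ K`, consisting of the
coordinates `j` with `b (k-1) ≤ j < b k`, and `blk j` denoting the block of coordinate `j`),
and every separately Lipschitz `F : [-L,L]^n → ℝ`,
`|∫ F dν_I − ∫ F d(ν_{I₁} ⊗ ⋯ ⊗ ν_{I_K})| ≤ C_* ‖F‖_Lip ∑_{k=1}^{K−1} R(g_k)`,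
where `g_k = i (b k) − i (b k − 1)` is the gap between blocks `k` and `k+1`. -/
theorem fcb_multiple_blocks
    {M : Type*} [MeasurableSpace M] (μ : Measure M) [IsProbabilityMeasure μ]
    (X : ℕ → M → ℝ) (hXmeas : ∀ n, Measurable (X n))
    (N : ℕ) (hN : 1 ≤ N) (L : ℝ) (hL : 0 ≤ L)
    (hbdd : ∀ n < N, ∀ x, |X n x| ≤ L)
    (hcent : ∀ n < N, ∫ x, X n x ∂μ = 0)
    (Cs : ℝ) (R : ℕ → ℝ) (hR : ∀ n, 0 ≤ R n)
    (hfcb : FCB μ X N L Cs R) :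
    ∀ K : ℕ, 2 ≤ K →
    ∀ (n : ℕ) (i : ℕ → ℕ), StrictMono i → (∀ j < n, i j < N) →
    ∀ b : ℕ → ℕ, b 0 = 0 → b K = n → (∀ k < K, b k < b (k + 1)) →
    ∀ blk : ℕ → Fin K, (∀ j < n, b (blk j) ≤ j ∧ j < b ((blk j : ℕ) + 1)) →
    ∀ (F : (Fin n → ℝ) → ℝ) (Fb Fl : ℝ), SepLipBound L F Fb Fl →
      |(∫ x, F (fun j => X (i j) x) ∂μ) -
          ∫ z : Fin K → M, F (fun j => X (i j) (z (blk j))) ∂(Measure.pi fun _ => μ)|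
        ≤ Cs * (Fb + Fl) * ∑ k ∈ Finset.Ico 1 K, R (i (b k) - i (b k - 1)) := by
  intro K hK n i hi hiN b hb0 hbK hb blk hblk F Fb Fl hF
  have hmono : ∀ k l, k ≤ l → l ≤ K → b k ≤ b l := by
    intro k l hkl
    induction l, hkl using Nat.le_induction with
    | base => intro _; exact le_rfl
    | succ l hl ih => intro h; exact (ih (by omega)).trans (hb l (by omega)).le
  have hlt : ∀ j < n, ∀ m ≤ K, (j < b m ↔ (blk j : ℕ) < m) := by
    intro j hj m hm
    obtain ⟨h1, h2⟩ := hblk j hj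
    constructor
    · intro h
      by_contra hc
      have := hmono m (blk j) (by omega) (blk j).2.le
      omega
    · intro h
      have := hmono (blk j + 1) m (by omega) hm
      omega
  let e : ℕ → ℕ → Fin K := fun m j => ⟨min (blk j) m, by have := (blk j).2; omega⟩
  let H : ℕ → (Fin K → M) → ℝ := fun m z => F (fun j => X (i j) (z (e m j)))
  have hXb : ∀ (j : Fin n) x, |X (i j) x| ≤ L := fun j x => hbdd _ (hiN j j.2) x
  have hHint : ∀ m, Integrable (H m) (Measure.pi fun _ => μ) := fun m =>
    fcbaux_integrable μ hL hF (fun j => X (i j)) (fun j => hXmeas _) hXb (fun j => e m j)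
  have hstep : ∀ m, m + 1 < K →
      |(∫ z, H m z ∂(Measure.pi fun _ => μ)) - ∫ z, H (m + 1) z ∂(Measure.pi fun _ => μ)|
        ≤ Cs * (Fb + Fl) * R (i (b (m + 1)) - i (b (m + 1) - 1)) := by
    intro m hm
    let m0 : Fin K := ⟨m, by omega⟩
    let m1 : Fin K := ⟨m + 1, hm⟩
    have hne : m0 ≠ m1 := by simp [m0, m1]
    obtain ⟨hu, hu'⟩ := fcbaux_integral_update μ m0 (H m) (hHint m)
    obtain ⟨hw, hw'⟩ := fcbaux_integral_update μ m1 (H (m + 1)) (hHint (m + 1))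
    obtain ⟨hv, hv'⟩ := fcbaux_integral_update μ m0 _ hw
    rw [hu', hw', hv', ← integral_sub hu hv]
    have key : ∀ z : Fin K → M,
        ‖(∫ x, H m (Function.update z m0 x) ∂μ) -
          ∫ x, ∫ y, H (m + 1) (Function.update (Function.update z m0 x) m1 y) ∂μ ∂μ‖
        ≤ Cs * (Fb + Fl) * R (i (b (m + 1)) - i (b (m + 1) - 1)) := by
      intro z
      have hbm := hb m (by omega)
      have hbn : b (m + 1) < n := by
        have h1 := hb (m + 1) hm
        have h2 := hmono (m + 1 + 1) K (by omega) le_rfl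
        omega
      let base : (Fin (n - b m) → ℝ) → (Fin n → ℝ) := fun y j =>
        if h : (j : ℕ) < b m then X (i j) (z (blk j)) else y ⟨j - b m, by omega⟩
      have hbase : ∀ y ∈ cube L (n - b m), base y ∈ cube L n := by
        intro y hy j
        simp only [base]
        split_ifs with h
        · exact hXb _ _
        · exact hy _
      have hupd : ∀ (y : Fin (n - b m) → ℝ) (k : Fin (n - b m)) (a : ℝ),
          base (Function.update y k a)
            = Function.update (base y) ⟨b m + k, by omega⟩ a := by
        intro y k a
        funext j
        simp only [base, Function.update_apply, Fin.ext_iff]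
        by_cases h : (j : ℕ) < b m
        · have : ¬ ((j : ℕ) = b m + k) := by omega
          simp [h, this]
        · by_cases h' : (j : ℕ) = b m + k
          · simp [h']
          · have : ¬ ((j : ℕ) - b m = k) := by omega
            simp [h, h', this]
      have hF' : SepLipBound L (fun y => F (base y)) Fb Fl := by
        refine ⟨fun y hy => hF.bound _ (hbase y hy), fun k y hy a c ha hc => ?_⟩
        simp only [hupd]
        exact hF.lip _ _ (hbase y hy) a c ha hc
      have hmain := hfcb (n - b m) (fun j => i (b m + j))
        (fun p q hpq => hi (by omega)) (fun j hj => hiN _ (by omega))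
        (b (m + 1) - b m) (by omega) (by omega) _ Fb Fl hF'
      have e1 : b m + (b (m + 1) - b m) = b (m + 1) := by omega
      have e2 : b m + (b (m + 1) - b m - 1) = b (m + 1) - 1 := by omega
      simp only [e1, e2] at hmain
      rw [Real.norm_eq_abs]
      convert hmain using 6 with x x
      · funext j
        simp only [base]
        have hj := hlt j j.2 m (by omega)
        split_ifs with h
        · have hl := hj.1 h
          have : e m j = blk j := by
            simp only [e, Fin.ext_iff]; omega
          rw [this, Function.update_of_ne]
          simp only [m0, ne_eq, Fin.ext_iff]; omega
        · have : e m j = m0 := by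
            simp only [e, m0, Fin.ext_iff]; omega
          rw [this, Function.update_self]
          have : b m + (j - b m) = (j : ℕ) := by omega
          rw [this]
      · funext y
        simp only [H]
        congr 1
        funext j
        simp only [base]
        have hj := hlt j j.2 m (by omega)
        have hj' := hlt j j.2 (m + 1) (by omega)
        by_cases h : (j : ℕ) < b m
        · have hl := hj.1 h
          have : e (m + 1) j = blk j := by
            simp only [e, Fin.ext_iff]; omega
          rw [dif_pos h, this, Function.update_of_ne, Function.update_of_ne]
          · simp only [m0, ne_eq, Fin.ext_iff]; omega
          · simp only [m1, ne_eq, Fin.ext_iff]; omega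
        · rw [dif_neg h]
          have h3 : b m + (j - b m) = (j : ℕ) := by omega
          rw [h3]
          by_cases h' : (j : ℕ) < b (m + 1)
          · have : e (m + 1) j = m0 := by
              simp only [e, m0, Fin.ext_iff]; omega
            rw [this, if_pos (by omega), Function.update_of_ne hne, Function.update_self]
          · have : e (m + 1) j = m1 := by
              simp only [e, m1, Fin.ext_iff]; omega
            rw [this, if_neg (by omega), Function.update_self]
    have := norm_integral_le_of_norm_le_const (μ := Measure.pi fun _ : Fin K => μ)
      (Filter.Eventually.of_forall key)
    simpa using this
  have hall : ∀ m, m < K →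
      |(∫ z, H 0 z ∂(Measure.pi fun _ => μ)) - ∫ z, H m z ∂(Measure.pi fun _ => μ)|
        ≤ Cs * (Fb + Fl) * ∑ k ∈ Finset.Ico 1 (m + 1), R (i (b k) - i (b k - 1)) := by
    intro m
    induction m with
    | zero => intro _; simp
    | succ m ih =>
      intro hm
      rw [Finset.sum_Ico_succ_top (by omega), mul_add]
      exact (abs_sub_le _ _ _).trans (add_le_add (ih (by omega)) (hstep m hm))
  have h0 : (∫ z, H 0 z ∂(Measure.pi fun _ => μ)) = ∫ x, F (fun j => X (i j) x) ∂μ := by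
    let m0 : Fin K := ⟨0, by omega⟩
    rw [(fcbaux_integral_update μ m0 (H 0) (hHint 0)).2]
    have : ∀ z x, H 0 (Function.update z m0 x) = F (fun j => X (i j) x) := by
      intro z x
      simp only [H]
      congr 1
      funext j
      have : e 0 j = m0 := by simp [e, m0, Fin.ext_iff]
      rw [this, Function.update_self]
    simp [this]
  have h1 : (∫ z, H (K - 1) z ∂(Measure.pi fun _ => μ))
      = ∫ z : Fin K → M, F (fun j => X (i j) (z (blk j))) ∂(Measure.pi fun _ => μ) := by
    have : ∀ j, e (K - 1) j = blk j := by
      intro j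
      have := (blk j).2
      simp only [e, Fin.ext_iff]; omega
    simp only [H, this]
  have hfin := hall (K - 1) (by omega)
  rw [h0, h1, Nat.sub_add_cancel (by omega)] at hfin
  exact hfin


end
end

section
/- Let N ≥ 1, let B_0,…,B_{N−1} be real numbers and B > 0. Suppose there exist C₁ > 0 and an integer M ≥ 1 such that B_v − B_u ≥ C₁M whenever 0 ≤ u < v < N and v − u ≥ M. Then for all 0 ≤ s ≤ t ≤ 1 the set I(s,t) = {0 ≤ k < N : B_k/B ∈ (s,t]} satisfies |I(s,t)| ≤ 3M + B(t−s)/C₁. -/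
set_option autoImplicit false

/-- Let `N ≥ 1`, `B₀,…,B_{N−1}` real, `B > 0`.  If there are `C₁ > 0` and an
integer `M ≥ 1` such that `B_v − B_u ≥ C₁·M` whenever `0 ≤ u < v < N` and `v − u ≥ M`, then for
all `0 ≤ s ≤ t ≤ 1` the set `I(s,t) = {0 ≤ k < N : B_k/B ∈ (s,t]}` satisfies
`|I(s,t)| ≤ 3M + B(t−s)/C₁`. -/
theorem card_level_set_le (N : ℕ) (hN : 1 ≤ N) (Bs : ℕ → ℝ) (B : ℝ) (hB : 0 < B)
    (C₁ : ℝ) (hC₁ : 0 < C₁) (M : ℕ) (hM : 1 ≤ M)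
    (hgap : ∀ u v : ℕ, u < v → v < N → M ≤ v - u → C₁ * M ≤ Bs v - Bs u) :
    ∀ s t : ℝ, 0 ≤ s → s ≤ t → t ≤ 1 →
      ((((Finset.range N).filter fun k => s < Bs k / B ∧ Bs k / B ≤ t).card : ℝ))
        ≤ 3 * M + B * (t - s) / C₁ := by
  intro s t _ hst _
  set I := (Finset.range N).filter fun k => s < Bs k / B ∧ Bs k / B ≤ t with hI
  have hX : 0 ≤ B * (t - s) / C₁ := by
    have : 0 ≤ t - s := by linarith
    positivity
  have hMR : (1 : ℝ) ≤ M := by exact_mod_cast hM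
  rcases I.eq_empty_or_nonempty with h0 | hne
  · rw [h0]
    simp only [Finset.card_empty, Nat.cast_zero]
    linarith
  have key : ∀ a q b : ℕ, a + (q + 1) * M ≤ b → b < N →
      C₁ * M * (q + 1) ≤ Bs b - Bs a := by
    intro a q
    induction q with
    | zero =>
      intro b h1 h2
      have := hgap a b (by omega) h2 (by omega)
      simpa using this
    | succ q ih =>
      intro b h1 h2
      have e : (q + 1 + 1) * M = (q + 1) * M + M := by ring
      have h3 := ih (b - M) (by omega) (by omega)
      have h4 := hgap (b - M) b (by omega) h2 (by omega)
      push_cast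
      linarith
  obtain ⟨ha, ha1⟩ : I.min' hne ∈ I ∧ ∀ x ∈ I, I.min' hne ≤ x :=
    ⟨I.min'_mem hne, fun x hx => I.min'_le x hx⟩
  obtain ⟨hb, hb1⟩ : I.max' hne ∈ I ∧ ∀ x ∈ I, x ≤ I.max' hne :=
    ⟨I.max'_mem hne, fun x hx => I.le_max' x hx⟩
  generalize I.min' hne = a at *
  generalize I.max' hne = b at *
  have hcard : I.card ≤ b + 1 - a := by
    rw [← Nat.card_Icc]
    exact Finset.card_le_card fun x hx => Finset.mem_Icc.2 ⟨ha1 x hx, hb1 x hx⟩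
  have hab := ha1 b hb
  simp only [hI, Finset.mem_filter, Finset.mem_range] at ha hb
  have hdm := Nat.div_add_mod (b - a) M
  have hlt := Nat.mod_lt (b - a) (show M > 0 by omega)
  have h5 : I.card ≤ M * ((b - a) / M) + M := by omega
  have h5' : (I.card : ℝ) ≤ M * (((b - a) / M : ℕ) : ℝ) + M := by exact_mod_cast h5
  generalize (b - a) / M = q at *
  have h6 : M * (q : ℝ) ≤ B * (t - s) / C₁ := by
    cases q with
    | zero => simpa using hX
    | succ q =>
      have h7 := key a q b (by rw [mul_comm]; omega) hb.1
      have h8 := (div_le_iff₀ hB).1 hb.2.2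
      have h9 := (lt_div_iff₀ hB).1 ha.2.1
      rw [le_div_iff₀ hC₁]
      push_cast
      nlinarith
  linarith
end

section
/- Let (X_n)_{n≥0} be real random variables on (M,𝓕,μ) with ‖X_n‖_∞ ≤ L and μ(X_n) = 0 for all n ≥ 0. Assume: (a) for every N ≥ 1 the sequence (X_n)_{0≤n<N} satisfies the functional correlation bound with constant C_* and a nonincreasing rate function R (independent of N) with ∑_{n=1}^∞ R(n)^{1/2} < ∞, where we set R(0) = 1; (b) there exist C₁ > 0, N₀ ≥ 1 and integers M_N ≥ 1 such that for every N ≥ N₀, B_v^{(N)} − B_u^{(N)} ≥ C₁ M_N whenever 0 ≤ u < v < N and v − u ≥ M_N, where B_u^{(N)} = ∑_{i=0}^{u−1} ∑_{j=0}^{N−1} μ(X_iX_j); and (c) B_N := B_N^{(N)} > 0 for N ≥ N₀. Then there exists a constant C > 0, depending only on L, C_*, C₁ and ∑_{n} R(n)^{1/2}, such that for all N ≥ N₀ and all 0 ≤ s ≤ t ≤ 1, μ[(W_N(t) − W_N(s))⁴] ≤ C(|t−s|² + (M_N/B_N)²). -/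
set_option autoImplicit false

open MeasureTheory Filter
open scoped ENNReal NNReal Topology

noncomputable section

/-- The covariance `σ_{i,j} = μ(X_i X_j)`. -/
def sigmaCov {M : Type*} [MeasurableSpace M] (μ : Measure M) (X : ℕ → M → ℝ) (i j : ℕ) : ℝ :=
  ∫ x, X i x * X j x ∂μ

/-- `B_u^{(N)} = ∑_{i<u} ∑_{j<N} μ(X_i X_j)`. -/
def Bpart {M : Type*} [MeasurableSpace M] (μ : Measure M) (X : ℕ → M → ℝ) (N u : ℕ) : ℝ :=
  ∑ i ∈ Finset.range u, ∑ j ∈ Finset.range N, sigmaCov μ X i j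

/-- `B_N = B_N^{(N)}`. -/
def Bvar {M : Type*} [MeasurableSpace M] (μ : Measure M) (X : ℕ → M → ℝ) (N : ℕ) : ℝ :=
  Bpart μ X N N

/-- The value of the partial-sum process at time `t ∈ [0,1]`:
`W_N(t) = B_N^{-1/2} ∑_{n<N} θ_n^{(N)}(t) X_n` where `θ_n^{(N)}(t) = 1_{t ≥ B_n^{(N)}/B_N}`. -/
def WNval {M : Type*} [MeasurableSpace M] (μ : Measure M) (X : ℕ → M → ℝ) (N : ℕ)
    (t : ℝ) (x : M) : ℝ :=
  (Bvar μ X N) ^ (-(1:ℝ)/2) *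
    ∑ n ∈ Finset.range N, (if Bpart μ X N n / Bvar μ X N ≤ t then (1:ℝ) else 0) * X n x

theorem seplip_coord (L : ℝ) (hL : 0 ≤ L) {n : ℕ} (q : Fin n) :
    SepLipBound L (fun x : Fin n → ℝ => x q) L 1 := by
  constructor
  · intro x hx; exact hx q
  · intro j x hx a b ha hb
    by_cases h : q = j
    · subst h; simp
    · simp [Function.update_of_ne h]

theorem cube_update {L : ℝ} {n : ℕ} {x : Fin n → ℝ} (hx : x ∈ cube L n) (j : Fin n) {a : ℝ}
    (ha : |a| ≤ L) : Function.update x j a ∈ cube L n := by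
  intro k
  by_cases h : k = j
  · subst h; simpa using ha
  · simpa [Function.update_of_ne h] using hx k

theorem seplip_mul {L : ℝ} {n : ℕ} {F G : (Fin n → ℝ) → ℝ} {Fb Fl Gb Gl : ℝ}
    (hF : SepLipBound L F Fb Fl) (hG : SepLipBound L G Gb Gl) (hFb : 0 ≤ Fb) (hGb : 0 ≤ Gb) :
    SepLipBound L (fun x => F x * G x) (Fb * Gb) (Fb * Gl + Fl * Gb) := by
  constructor
  · intro x hx
    rw [abs_mul]
    exact mul_le_mul (hF.bound x hx) (hG.bound x hx) (abs_nonneg _) hFb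
  · intro j x hx a b ha hb
    have h1 := hF.lip j x hx a b ha hb
    have h2 := hG.lip j x hx a b ha hb
    have h3 := hF.bound _ (cube_update hx j ha)
    have h4 := hG.bound _ (cube_update hx j hb)
    set fa := F (Function.update x j a)
    set fb := F (Function.update x j b)
    set ga := G (Function.update x j a)
    set gb := G (Function.update x j b)
    have e : fa * ga - fb * gb = fa * (ga - gb) + (fa - fb) * gb := by ring
    calc |fa * ga - fb * gb| ≤ |fa * (ga - gb)| + |(fa - fb) * gb| := by
          rw [e]; exact abs_add_le _ _
      _ = |fa| * |ga - gb| + |fa - fb| * |gb| := by rw [abs_mul, abs_mul]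
      _ ≤ Fb * (Gl * |a - b|) + (Fl * |a - b|) * Gb := by
          apply add_le_add
          · exact mul_le_mul h3 h2 (abs_nonneg _) hFb
          · exact mul_le_mul h1 h4 (abs_nonneg _) ((abs_nonneg _).trans h1)
      _ = _ := by ring

/-- FCB for two blocks of consecutive integers `[a,b]` and `[c,d]`. -/
theorem fcb_blocks {M : Type*} [MeasurableSpace M] (μ : Measure M)
    (X : ℕ → M → ℝ) (L Cs : ℝ) (R : ℕ → ℝ) (hF : ∀ N, FCB μ X N L Cs R)
    (a b c d : ℕ) (hab : a ≤ b) (hbc : b < c) (hcd : c ≤ d) :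
    ∃ (n : ℕ) (pos : ℕ → Fin n) (i : ℕ → ℕ) (p : ℕ),
      (∀ k, a ≤ k → k ≤ b → i (pos k) = k ∧ (pos k : ℕ) < p) ∧
      (∀ k, c ≤ k → k ≤ d → i (pos k) = k ∧ ¬ (pos k : ℕ) < p) ∧
      ∀ (F : (Fin n → ℝ) → ℝ) (Fb Fl : ℝ), SepLipBound L F Fb Fl →
    |(∫ x, F (fun j => X (i j) x) ∂μ) -
      ∫ x, ∫ y, F (fun j => if (j : ℕ) < p then X (i j) x else X (i j) y) ∂μ ∂μ|
    ≤ Cs * (Fb + Fl) * R (c - b) := by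
  let n := (b - a + 1) + (d - c + 1)
  let i : ℕ → ℕ := fun m => if m ≤ b - a then a + m else c + (m - (b - a) - 1)
  let p := b - a + 1
  let posn : ℕ → ℕ := fun k => if k ≤ b then (k - a) else
    if k ≤ d then (b - a + 1) + (k - c) else 0
  have hpos : ∀ k, posn k < n := by
    intro k; simp only [posn, n]; split_ifs <;> omega
  refine ⟨n, fun k => ⟨posn k, hpos k⟩, i, p, ?_, ?_, ?_⟩
  · intro k h1 h2
    simp only [posn, i, p]
    constructor <;> split_ifs <;> omega
  · intro k h1 h2
    simp only [posn, i, p]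
    constructor <;> split_ifs <;> omega
  · intro F Fb Fl h
    have hm : StrictMono i := by
      apply strictMono_nat_of_lt_succ
      intro m; simp only [i]; split_ifs <;> omega
    have hlt : ∀ j < n, i j < d + 1 := by
      intro j hj; simp only [i, n] at *; split_ifs <;> omega
    have := hF (d + 1) n i hm hlt p (by simp [p]) (by simp only [p, n]; omega) F Fb Fl h
    have e : i p - i (p - 1) = c - b := by
      simp only [i, p]; split_ifs <;> omega
    rwa [e] at this

section moments
variable {M : Type*} [MeasurableSpace M] {μ : Measure M}
    {X : ℕ → M → ℝ} {L Cs : ℝ} {R : ℕ → ℝ}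

theorem cov2 (hF : ∀ N, FCB μ X N L Cs R) (hL : 0 ≤ L) {i j : ℕ} (hij : i < j) :
    |(∫ x, X i x * X j x ∂μ) - (∫ x, X i x ∂μ) * ∫ x, X j x ∂μ| ≤
      Cs * (L ^ 2 + 2 * L) * R (j - i) := by
  obtain ⟨n, pos, ι, p, h1, h2, h⟩ := fcb_blocks μ X L Cs R hF i i j j le_rfl hij le_rfl
  have := h _ _ _ (seplip_mul (seplip_coord L hL (pos i)) (seplip_coord L hL (pos j)) hL hL)
  obtain ⟨a1, a2⟩ := h1 i le_rfl le_rfl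
  obtain ⟨b1, b2⟩ := h2 j le_rfl le_rfl
  simp only [a1, a2, b1, b2, if_true, if_false, integral_const_mul, integral_mul_const] at this
  refine this.trans (le_of_eq ?_)
  ring

theorem sep4 (hL : 0 ≤ L) {n : ℕ} (a b c d : Fin n) :
    SepLipBound L (fun x : Fin n → ℝ => (x a * x b) * (x c * x d))
      ((L * L) * (L * L)) ((L * L) * (L * 1 + 1 * L) + (L * 1 + 1 * L) * (L * L)) :=
  seplip_mul (seplip_mul (seplip_coord L hL a) (seplip_coord L hL b) hL hL)
    (seplip_mul (seplip_coord L hL c) (seplip_coord L hL d) hL hL) (by positivity) (by positivity)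

theorem cov4a (hF : ∀ N, FCB μ X N L Cs R) (hL : 0 ≤ L) {i j k l : ℕ} (hij : i < j)
    (hjk : j ≤ k) (hkl : k ≤ l) :
    |(∫ x, (X i x * X j x) * (X k x * X l x) ∂μ) -
      (∫ x, X i x ∂μ) * ∫ x, X j x * (X k x * X l x) ∂μ| ≤
      Cs * (L ^ 4 + 4 * L ^ 3) * R (j - i) := by
  obtain ⟨n, pos, ι, p, h1, h2, h⟩ := fcb_blocks μ X L Cs R hF i i j l le_rfl hij (by omega)
  have := h _ _ _ (sep4 hL (pos i) (pos j) (pos k) (pos l))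
  obtain ⟨a1, a2⟩ := h1 i le_rfl le_rfl
  obtain ⟨b1, b2⟩ := h2 j le_rfl (by omega)
  obtain ⟨c1, c2⟩ := h2 k (by omega) (by omega)
  obtain ⟨d1, d2⟩ := h2 l (by omega) (by omega)
  simp only [a1, a2, b1, b2, c1, c2, d1, d2, if_true, if_false] at this
  have e : ∀ x y, X i x * X j y * (X k y * X l y) = X i x * (X j y * (X k y * X l y)) := by
    intro x y; ring
  simp only [e, integral_const_mul, integral_mul_const] at this
  have e2 : ∀ x, X i x * X j x * (X k x * X l x) = X i x * (X j x * (X k x * X l x)) := by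
    intro x; ring
  simp only [e, integral_const_mul, integral_mul_const] at this ⊢
  refine this.trans (le_of_eq ?_)
  ring

theorem cov4b (hF : ∀ N, FCB μ X N L Cs R) (hL : 0 ≤ L) {i j k l : ℕ} (hij : i ≤ j)
    (hjk : j < k) (hkl : k ≤ l) :
    |(∫ x, (X i x * X j x) * (X k x * X l x) ∂μ) -
      (∫ x, X i x * X j x ∂μ) * ∫ x, (X k x * X l x) ∂μ| ≤
      Cs * (L ^ 4 + 4 * L ^ 3) * R (k - j) := by
  obtain ⟨n, pos, ι, p, h1, h2, h⟩ := fcb_blocks μ X L Cs R hF i j k l hij hjk hkl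
  have := h _ _ _ (sep4 hL (pos i) (pos j) (pos k) (pos l))
  obtain ⟨a1, a2⟩ := h1 i le_rfl (by omega)
  obtain ⟨b1, b2⟩ := h1 j (by omega) (by omega)
  obtain ⟨c1, c2⟩ := h2 k (by omega) (by omega)
  obtain ⟨d1, d2⟩ := h2 l (by omega) (by omega)
  simp only [a1, a2, b1, b2, c1, c2, d1, d2, if_true, if_false, integral_const_mul,
    integral_mul_const] at this
  refine this.trans (le_of_eq ?_)
  ring

theorem cov4c (hF : ∀ N, FCB μ X N L Cs R) (hL : 0 ≤ L) {i j k l : ℕ} (hij : i ≤ j)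
    (hjk : j ≤ k) (hkl : k < l) :
    |(∫ x, (X i x * X j x) * (X k x * X l x) ∂μ) -
      (∫ x, X i x * X j x * X k x ∂μ) * ∫ x, X l x ∂μ| ≤
      Cs * (L ^ 4 + 4 * L ^ 3) * R (l - k) := by
  obtain ⟨n, pos, ι, p, h1, h2, h⟩ := fcb_blocks μ X L Cs R hF i k l l (by omega) hkl le_rfl
  have := h _ _ _ (sep4 hL (pos i) (pos j) (pos k) (pos l))
  obtain ⟨a1, a2⟩ := h1 i le_rfl (by omega)
  obtain ⟨b1, b2⟩ := h1 j (by omega) (by omega)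
  obtain ⟨c1, c2⟩ := h1 k (by omega) (by omega)
  obtain ⟨d1, d2⟩ := h2 l (by omega) (by omega)
  simp only [a1, a2, b1, b2, c1, c2, d1, d2, if_true, if_false] at this
  simp only [← mul_assoc, integral_const_mul, integral_mul_const] at this ⊢
  refine this.trans (le_of_eq ?_)
  ring

/-- Sorted fourth-order bound. -/
theorem sorted4 [IsProbabilityMeasure μ] (hF : ∀ N, FCB μ X N L Cs R) (hL : 0 ≤ L) (hCs : 0 ≤ Cs)
    (hb : ∀ n x, |X n x| ≤ L) (h0 : ∀ n, ∫ x, X n x ∂μ = 0)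
    (hR : ∀ n, 0 ≤ R n) (hanti : Antitone R) (hR0 : R 0 = 1)
    {i j k l : ℕ} (hij : i ≤ j) (hjk : j ≤ k) (hkl : k ≤ l) :
    |∫ x, (X i x * X j x) * (X k x * X l x) ∂μ| ≤
      (L ^ 4 + Cs * (L ^ 4 + 4 * L ^ 3) + (L ^ 2 + Cs * (L ^ 2 + 2 * L)) ^ 2) *
        (√(R (j - i)) * √(R (l - k))) := by
  have hR1 : ∀ n, R n ≤ 1 := fun n => hR0 ▸ hanti (Nat.zero_le n)
  have hs1 : ∀ n, √(R n) ≤ 1 := fun n => Real.sqrt_le_one.mpr (hR1 n)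
  have hRs : ∀ n, R n ≤ √(R n) := fun n => by
    have := Real.mul_self_sqrt (hR n)
    nlinarith [hs1 n, Real.sqrt_nonneg (R n)]
  have key : ∀ m, j - i ≤ m → l - k ≤ m → R m ≤ √(R (j - i)) * √(R (l - k)) := by
    intro m h1 h2
    calc R m = √(R m) * √(R m) := (Real.mul_self_sqrt (hR m)).symm
      _ ≤ _ := mul_le_mul (Real.sqrt_le_sqrt (hanti h1)) (Real.sqrt_le_sqrt (hanti h2))
        (Real.sqrt_nonneg _) (Real.sqrt_nonneg _)
  have hsig : ∀ u v, u ≤ v → |∫ x, X u x * X v x ∂μ| ≤ (L ^ 2 + Cs * (L ^ 2 + 2 * L)) * √(R (v - u)) := by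
    intro u v huv
    rcases huv.eq_or_lt with rfl | h
    · have : ‖∫ x, X u x * X u x ∂μ‖ ≤ (L * L) * μ.real Set.univ := by
        apply norm_integral_le_of_norm_le_const
        refine Eventually.of_forall fun x => ?_
        rw [norm_mul]
        exact mul_le_mul (hb u x) (hb u x) (norm_nonneg _) hL
      simp only [Real.norm_eq_abs, probReal_univ, mul_one] at this
      simp only [Nat.sub_self, hR0, Real.sqrt_one, mul_one]
      have : 0 ≤ Cs * (L ^ 2 + 2 * L) := by positivity
      nlinarith
    · have := cov2 hF hL h
      rw [h0 u, zero_mul, sub_zero] at this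
      refine this.trans ?_
      apply mul_le_mul _ (hRs _) (hR _) (by positivity)
      nlinarith
  set T := √(R (j - i)) * √(R (l - k)) with hT
  have hT0 : 0 ≤ T := by positivity
  have hc1 : 0 ≤ Cs * (L ^ 4 + 4 * L ^ 3) := by positivity
  have hc2 : 0 ≤ (L ^ 2 + Cs * (L ^ 2 + 2 * L)) ^ 2 := by positivity
  have hc3 : 0 ≤ L ^ 4 := by positivity
  have fin : ∀ m, j - i ≤ m → l - k ≤ m → Cs * (L ^ 4 + 4 * L ^ 3) * R m ≤
      (L ^ 4 + Cs * (L ^ 4 + 4 * L ^ 3) + (L ^ 2 + Cs * (L ^ 2 + 2 * L)) ^ 2) * T := by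
    intro m h1 h2
    apply mul_le_mul _ (key m h1 h2) (hR m) (by positivity)
    linarith
  by_cases hz : i = l
  · have e1 : j = i := by omega
    have e2 : k = i := by omega
    subst hz
    subst e1
    subst e2
    have : ‖∫ x, (X k x * X k x) * (X k x * X k x) ∂μ‖ ≤ ((L * L) * (L * L)) * μ.real Set.univ := by
      apply norm_integral_le_of_norm_le_const
      refine Eventually.of_forall fun x => ?_
      have h2 : ‖X k x * X k x‖ ≤ L * L := by
        rw [norm_mul]
        exact mul_le_mul (hb k x) (hb k x) (norm_nonneg _) hL
      rw [norm_mul]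
      exact mul_le_mul h2 h2 (norm_nonneg _) (by positivity)
    simp only [Real.norm_eq_abs, probReal_univ, mul_one] at this
    have hT1 : T = 1 := by simp [hT, hR0]
    rw [hT1]
    nlinarith
  by_cases hA : k - j ≤ j - i ∧ l - k ≤ j - i
  · have := cov4a hF hL (show i < j by omega) hjk hkl
    rw [h0 i, zero_mul, sub_zero] at this
    exact this.trans (fin _ le_rfl hA.2)
  by_cases hC : k - j ≤ l - k ∧ j - i ≤ l - k
  · have := cov4c hF hL hij hjk (show k < l by omega)
    rw [h0 l, mul_zero, sub_zero] at this
    exact this.trans (fin _ hC.2 le_rfl)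
  have h1 := cov4b hF hL hij (show j < k by omega) hkl
  have h2 : |(∫ x, X i x * X j x ∂μ) * ∫ x, (X k x * X l x) ∂μ| ≤
      (L ^ 2 + Cs * (L ^ 2 + 2 * L)) ^ 2 * T := by
    rw [abs_mul]
    calc _ ≤ _ := mul_le_mul (hsig i j hij) (hsig k l hkl) (abs_nonneg _) (by positivity)
      _ = _ := by rw [hT]; ring
  have h3 : Cs * (L ^ 4 + 4 * L ^ 3) * R (k - j) ≤ Cs * (L ^ 4 + 4 * L ^ 3) * T :=
    mul_le_mul_of_nonneg_left (key _ (by omega) (by omega)) hc1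
  have h4 := abs_sub_abs_le_abs_sub (∫ x, (X i x * X j x) * (X k x * X l x) ∂μ)
    ((∫ x, X i x * X j x ∂μ) * ∫ x, (X k x * X l x) ∂μ)
  nlinarith [mul_nonneg hc3 hT0]

end moments

theorem sort4 (P : ℕ → ℕ → ℕ → ℕ → Prop) (h1 : ∀ i j k l, P i j k l → P j i k l)
    (h2 : ∀ i j k l, P i j k l → P i k j l) (h3 : ∀ i j k l, P i j k l → P i j l k)
    (hs : ∀ i j k l, i ≤ j → j ≤ k → k ≤ l → P i j k l) (i j k l : ℕ) : P i j k l := by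
  have s1 : ∀ i j k l, i ≤ k → j ≤ k → k ≤ l → P i j k l := by
    intro i j k l a b c
    rcases le_total i j with h | h
    · exact hs _ _ _ _ h b c
    · exact h1 _ _ _ _ (hs _ _ _ _ h a c)
  have s2 : ∀ i j k l, i ≤ l → j ≤ l → k ≤ l → P i j k l := by
    intro i j k l a b c
    rcases le_total i k with h | h
    · rcases le_total j k with h' | h'
      · exact s1 _ _ _ _ h h' c
      · exact h2 _ _ _ _ (s1 _ _ _ _ (h.trans h') h' b)
    · rcases le_total j i with h' | h'
      · exact h1 _ _ _ _ (h2 _ _ _ _ (s1 _ _ _ _ h' h a))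
      · exact h2 _ _ _ _ (s1 _ _ _ _ h' (h.trans h') b)
  rcases le_total k l with h | h
  · rcases le_total j l with h' | h'
    · rcases le_total i l with h'' | h''
      · exact s2 _ _ _ _ h'' h' h
      · exact h1 _ _ _ _ (h2 _ _ _ _ (h3 _ _ _ _ (s2 _ _ _ _ (by omega) (by omega) (by omega))))
    · rcases le_total i j with h'' | h''
      · exact h2 _ _ _ _ (h3 _ _ _ _ (s2 _ _ _ _ (by omega) (by omega) (by omega)))
      · exact h1 _ _ _ _ (h2 _ _ _ _ (h3 _ _ _ _ (s2 _ _ _ _ (by omega) (by omega) (by omega))))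
  · apply h3
    rcases le_total j k with h' | h'
    · rcases le_total i k with h'' | h''
      · exact s2 _ _ _ _ h'' h' h
      · exact h1 _ _ _ _ (h2 _ _ _ _ (h3 _ _ _ _ (s2 _ _ _ _ (by omega) (by omega) (by omega))))
    · rcases le_total i j with h'' | h''
      · exact h2 _ _ _ _ (h3 _ _ _ _ (s2 _ _ _ _ (by omega) (by omega) (by omega)))
      · exact h1 _ _ _ _ (h2 _ _ _ _ (h3 _ _ _ _ (s2 _ _ _ _ (by omega) (by omega) (by omega))))

theorem row_sum (r : ℕ → ℝ) (hr : ∀ n, 0 ≤ r n) (hs : Summable r) (S : ℝ) (hS : ∑' n, r n ≤ S)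
    (J : Finset ℕ) (i : ℕ) : ∑ j ∈ J, r ((i - j) + (j - i)) ≤ 2 * S := by
  have gen : ∀ (A : Finset ℕ) (g : ℕ → ℕ), Set.InjOn g A → ∑ j ∈ A, r (g j) ≤ S := by
    intro A g hg
    rw [← Finset.sum_image (f := r) hg]
    exact (hs.sum_le_tsum _ fun n _ => hr n).trans hS
  rw [← Finset.sum_filter_add_sum_filter_not J (fun j => j ≤ i)]
  have a := gen (J.filter (fun j => j ≤ i)) (fun j => (i - j) + (j - i)) (by
    intro x hx y hy h
    simp at hx hy h
    omega)
  have b := gen (J.filter (fun j => ¬ j ≤ i)) (fun j => (i - j) + (j - i)) (by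
    intro x hx y hy h
    simp at hx hy h
    omega)
  linarith

theorem fourth_sum {M : Type*} [MeasurableSpace M] {μ : Measure M} [IsProbabilityMeasure μ]
    {X : ℕ → M → ℝ} {L Cs S : ℝ} {R : ℕ → ℝ} (hX : ∀ n, Measurable (X n))
    (hF : ∀ N, FCB μ X N L Cs R) (hL : 0 ≤ L) (hCs : 0 ≤ Cs)
    (hb : ∀ n x, |X n x| ≤ L) (h0 : ∀ n, ∫ x, X n x ∂μ = 0)
    (hR : ∀ n, 0 ≤ R n) (hanti : Antitone R) (hR0 : R 0 = 1)
    (hs : Summable (fun n => √(R n))) (hS : ∑' n, √(R n) ≤ S) (J : Finset ℕ) :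
    ∫ x, (∑ n ∈ J, X n x) ^ 4 ∂μ ≤
      (L ^ 4 + Cs * (L ^ 4 + 4 * L ^ 3) + (L ^ 2 + Cs * (L ^ 2 + 2 * L)) ^ 2) *
        (3 * (2 * S * J.card) ^ 2) := by
  set K := (L ^ 4 + Cs * (L ^ 4 + 4 * L ^ 3) + (L ^ 2 + Cs * (L ^ 2 + 2 * L)) ^ 2) with hK
  have hK0 : 0 ≤ K := by positivity
  let ρ : ℕ → ℕ → ℝ := fun i j => √(R ((i - j) + (j - i)))
  have hρ0 : ∀ i j, 0 ≤ ρ i j := fun i j => Real.sqrt_nonneg _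
  have hρs : ∀ i j, ρ i j = ρ j i := fun i j => by simp only [ρ, add_comm]
  have hρle : ∀ i j, i ≤ j → ρ i j = √(R (j - i)) := fun i j h => by
    simp only [ρ]; congr 2; omega
  have hall : ∀ i j k l, |∫ x, (X i x * X j x) * (X k x * X l x) ∂μ| ≤
      K * (ρ i j * ρ k l + ρ i k * ρ j l + ρ i l * ρ j k) := by
    apply sort4
    · intro i j k l h
      have e : ∀ x, X j x * X i x * (X k x * X l x) = X i x * X j x * (X k x * X l x) :=
        fun x => by ring
      simp only [e, hρs j i]
      refine h.trans (le_of_eq (by ring))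
    · intro i j k l h
      have e : ∀ x, X i x * X k x * (X j x * X l x) = X i x * X j x * (X k x * X l x) :=
        fun x => by ring
      simp only [e, hρs k j]
      refine h.trans (le_of_eq (by ring))
    · intro i j k l h
      have e : ∀ x, X i x * X j x * (X l x * X k x) = X i x * X j x * (X k x * X l x) :=
        fun x => by ring
      simp only [e, hρs l k]
      refine h.trans (le_of_eq (by ring))
    · intro i j k l hij hjk hkl
      have := sorted4 hF hL hCs hb h0 hR hanti hR0 hij hjk hkl
      rw [← hρle i j hij, ← hρle k l hkl] at this
      refine this.trans (mul_le_mul_of_nonneg_left ?_ hK0)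
      have := mul_nonneg (hρ0 i k) (hρ0 j l)
      have := mul_nonneg (hρ0 i l) (hρ0 j k)
      linarith
  have hint : ∀ i j k l, Integrable (fun x => (X i x * X j x) * (X k x * X l x)) μ := by
    intro i j k l
    refine Integrable.of_bound (C := (L * L) * (L * L)) ?_ ?_
    · exact (((hX i).mul (hX j)).mul ((hX k).mul (hX l))).aestronglyMeasurable
    · refine Eventually.of_forall fun x => ?_
      have h2 : ∀ i j, ‖X i x * X j x‖ ≤ L * L := fun i j => by
        rw [norm_mul]
        exact mul_le_mul (hb i x) (hb j x) (norm_nonneg _) hL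
      rw [norm_mul]
      exact mul_le_mul (h2 i j) (h2 k l) (norm_nonneg _) (by positivity)
  have hexp : ∀ x, (∑ n ∈ J, X n x) ^ 4 =
      ∑ i ∈ J, ∑ j ∈ J, ∑ k ∈ J, ∑ l ∈ J, (X i x * X j x) * (X k x * X l x) := by
    intro x
    have : (∑ n ∈ J, X n x) ^ 4 = ((∑ n ∈ J, X n x) * (∑ n ∈ J, X n x)) *
      ((∑ n ∈ J, X n x) * (∑ n ∈ J, X n x)) := by ring
    rw [this]
    simp only [Finset.sum_mul, Finset.mul_sum]
    rw [Finset.sum_comm]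
    refine Finset.sum_congr rfl fun i _ => Finset.sum_congr rfl fun j _ => ?_
    rw [Finset.sum_comm]
    refine Finset.sum_congr rfl fun k _ => Finset.sum_congr rfl fun l _ => ?_
    ring
  have hI : ∫ x, (∑ n ∈ J, X n x) ^ 4 ∂μ =
      ∑ i ∈ J, ∑ j ∈ J, ∑ k ∈ J, ∑ l ∈ J, ∫ x, (X i x * X j x) * (X k x * X l x) ∂μ := by
    simp only [hexp]
    rw [integral_finsetSum _ fun i _ => integrable_finsetSum _ fun j _ =>
      integrable_finsetSum _ fun k _ => integrable_finsetSum _ fun l _ => hint i j k l]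
    refine Finset.sum_congr rfl fun i _ => ?_
    rw [integral_finsetSum _ fun j _ =>
      integrable_finsetSum _ fun k _ => integrable_finsetSum _ fun l _ => hint i j k l]
    refine Finset.sum_congr rfl fun j _ => ?_
    rw [integral_finsetSum _ fun k _ => integrable_finsetSum _ fun l _ => hint i j k l]
    refine Finset.sum_congr rfl fun k _ => ?_
    rw [integral_finsetSum _ fun l _ => hint i j k l]
  set Q := ∑ i ∈ J, ∑ j ∈ J, ρ i j with hQ
  have hQ0 : 0 ≤ Q := Finset.sum_nonneg fun i _ => Finset.sum_nonneg fun j _ => hρ0 i j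
  have hQle : Q ≤ 2 * S * J.card := by
    calc Q ≤ ∑ i ∈ J, 2 * S := Finset.sum_le_sum fun i _ =>
          row_sum (fun n => √(R n)) (fun n => Real.sqrt_nonneg _) hs S hS J i
      _ = _ := by simp; ring
  have q1 : ∑ i ∈ J, ∑ j ∈ J, ∑ k ∈ J, ∑ l ∈ J, ρ i j * ρ k l = Q ^ 2 := by
    rw [sq, hQ]
    simp only [← Finset.mul_sum, ← Finset.sum_mul]
  have q2 : ∑ i ∈ J, ∑ j ∈ J, ∑ k ∈ J, ∑ l ∈ J, ρ i k * ρ j l = Q ^ 2 := by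
    rw [← q1]
    refine Finset.sum_congr rfl fun i _ => ?_
    rw [Finset.sum_comm]
  have q3 : ∑ i ∈ J, ∑ j ∈ J, ∑ k ∈ J, ∑ l ∈ J, ρ i l * ρ j k = Q ^ 2 := by
    rw [← q2]
    refine Finset.sum_congr rfl fun i _ => Finset.sum_congr rfl fun j _ => ?_
    rw [Finset.sum_comm]
  rw [hI]
  calc _ ≤ ∑ i ∈ J, ∑ j ∈ J, ∑ k ∈ J, ∑ l ∈ J,
          K * (ρ i j * ρ k l + ρ i k * ρ j l + ρ i l * ρ j k) :=
        Finset.sum_le_sum fun i _ => Finset.sum_le_sum fun j _ => Finset.sum_le_sum fun k _ =>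
          Finset.sum_le_sum fun l _ => (le_abs_self _).trans (hall i j k l)
    _ = K * (Q ^ 2 + Q ^ 2 + Q ^ 2) := by
        have e : ∑ i ∈ J, ∑ j ∈ J, ∑ k ∈ J, ∑ l ∈ J,
            (ρ i j * ρ k l + ρ i k * ρ j l + ρ i l * ρ j k) = Q ^ 2 + Q ^ 2 + Q ^ 2 := by
          simp only [Finset.sum_add_distrib]
          rw [q1, q2, q3]
        rw [← e]
        simp only [Finset.mul_sum]
    _ ≤ _ := by
        apply mul_le_mul_of_nonneg_left _ hK0
        have := pow_le_pow_left₀ hQ0 hQle 2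
        linarith

theorem growth (B : ℕ → ℝ) (N m : ℕ) (C : ℝ) (hm : 1 ≤ m)
    (h : ∀ u v : ℕ, u < v → v < N → m ≤ v - u → C * m ≤ B v - B u) (q : ℕ) :
    ∀ u v : ℕ, v < N → (q + 1) * m ≤ v - u → (q + 1) * (C * m) ≤ B v - B u := by
  induction q with
  | zero =>
    intro u v hv h'
    have := h u v (by omega) hv (by omega)
    simpa using this
  | succ q ih =>
    intro u v hv h'
    have e : (q + 1 + 1) * m = (q + 1) * m + m := by ring
    have h1 := ih (u + m) v hv (by omega)
    have h2 := h u (u + m) (by omega) (by omega) (by omega)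
    push_cast
    linarith

theorem card_bound (B : ℕ → ℝ) (N m : ℕ) (C D : ℝ) (hC : 0 < C) (hD : 0 ≤ D) (hm : 1 ≤ m)
    (h : ∀ u v : ℕ, u < v → v < N → m ≤ v - u → C * m ≤ B v - B u) (J : Finset ℕ)
    (hJ : ∀ u ∈ J, u < N) (hJD : ∀ u ∈ J, ∀ v ∈ J, B v - B u ≤ D) :
    (J.card : ℝ) ≤ m + D / C := by
  have hDC : 0 ≤ D / C := by positivity
  rcases J.eq_empty_or_nonempty with rfl | hne
  · simp; positivity
  set u := J.min' hne
  set v := J.max' hne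
  have hu : u ∈ J := J.min'_mem hne
  have hv : v ∈ J := J.max'_mem hne
  have hcard : J.card ≤ v + 1 - u := by
    rw [← Nat.card_Icc]
    apply Finset.card_le_card
    intro w hw
    exact Finset.mem_Icc.mpr ⟨J.min'_le w hw, J.le_max' w hw⟩
  by_cases hd : v - u < m
  · have : (J.card : ℝ) ≤ m := by exact_mod_cast (by omega : J.card ≤ m)
    linarith
  · obtain ⟨q, hq⟩ : ∃ q, (v - u) / m = q + 1 :=
      Nat.exists_eq_succ_of_ne_zero (Nat.div_pos (by omega) (by omega)).ne'
    have h1 := growth B N m C hm h q u v (hJ v hv) (by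
      rw [← hq]; exact Nat.div_mul_le_self _ _)
    have h2 := h1.trans (hJD u hu v hv)
    have h3 : v - u < (q + 1) * m + m := by
      rw [← hq]
      have := Nat.lt_div_mul_add (a := v - u) (b := m) (by omega)
      exact this
    have h4 : (J.card : ℝ) ≤ (q + 1) * m + m := by
      exact_mod_cast (by omega : J.card ≤ (q + 1) * m + m)
    have h5 : ((q : ℝ) + 1) * m ≤ D / C := by
      rw [le_div_iff₀ hC]; linarith
    linarith

theorem fourth_moment_bound (L Cs C₁ S : ℝ) (hL : 0 ≤ L) (hCs : 0 ≤ Cs) (hC₁ : 0 < C₁) :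
    ∃ C : ℝ, 0 < C ∧
      ∀ (M : Type) (_ : MeasurableSpace M) (μ : Measure M), IsProbabilityMeasure μ →
      ∀ X : ℕ → M → ℝ, (∀ n, Measurable (X n)) →
      (∀ n, ∀ x, |X n x| ≤ L) →
      (∀ n, ∫ x, X n x ∂μ = 0) →
      ∀ R : ℕ → ℝ, (∀ n, 0 ≤ R n) → Antitone R → R 0 = 1 →
      Summable (fun n => Real.sqrt (R n)) →
      (∑' n : ℕ, Real.sqrt (R n)) ≤ S →
      (∀ N : ℕ, FCB μ X N L Cs R) →
      ∀ (N₀ : ℕ) (MN : ℕ → ℕ), (∀ N, 1 ≤ MN N) →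
      (∀ N, N₀ ≤ N → ∀ u v : ℕ, u < v → v < N → MN N ≤ v - u →
        C₁ * MN N ≤ Bpart μ X N v - Bpart μ X N u) →
      (∀ N, N₀ ≤ N → 0 < Bvar μ X N) →
      ∀ N, N₀ ≤ N → ∀ s t : ℝ, 0 ≤ s → s ≤ t → t ≤ 1 →
        (∫ x, (WNval μ X N t x - WNval μ X N s x) ^ 4 ∂μ)
          ≤ C * (|t - s| ^ 2 + ((MN N : ℝ) / Bvar μ X N) ^ 2) := by
  set K := (L ^ 4 + Cs * (L ^ 4 + 4 * L ^ 3) + (L ^ 2 + Cs * (L ^ 2 + 2 * L)) ^ 2) with hK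
  have hK0 : 0 ≤ K := by positivity
  refine ⟨K * (12 * S ^ 2) * (2 + 2 / C₁ ^ 2) + 1, by positivity, ?_⟩
  intro M _ μ _ X hX hb h0 R hR hanti hR0 hs hS hF N₀ MN hMN hgrow hpos N hN s t hs0 hst ht1
  have hB := hpos N hN
  set B := Bvar μ X N with hBdef
  set m := MN N
  let J := (Finset.range N).filter (fun n => s < Bpart μ X N n / B ∧ Bpart μ X N n / B ≤ t)
  have hW : ∀ x, (WNval μ X N t x - WNval μ X N s x) ^ 4 =
      (B ^ 2)⁻¹ * (∑ n ∈ J, X n x) ^ 4 := by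
    intro x
    have e : WNval μ X N t x - WNval μ X N s x = B ^ (-(1:ℝ)/2) * ∑ n ∈ J, X n x := by
      simp only [WNval, ← hBdef]
      rw [← mul_sub, ← Finset.sum_sub_distrib, Finset.sum_filter]
      congr 1
      refine Finset.sum_congr rfl fun n _ => ?_
      by_cases h1 : Bpart μ X N n / B ≤ s
      · simp [h1, h1.trans hst, not_lt.mpr h1]
      · by_cases h2 : Bpart μ X N n / B ≤ t
        · simp [h1, h2, not_le.mp h1]
        · simp [h1, h2]
    rw [e, mul_pow]
    congr 1
    rw [← Real.rpow_natCast, ← Real.rpow_mul hB.le, ← Real.rpow_natCast, ← Real.rpow_neg hB.le]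
    norm_num
  have hcard := card_bound (Bpart μ X N) N m C₁ ((t - s) * B) hC₁
    (mul_nonneg (by linarith) hB.le) (hMN N) (hgrow N hN) J
    (fun u hu => by simp [J] at hu; exact hu.1) (fun u hu v hv => by
      simp only [J, Finset.mem_filter] at hu hv
      have a := hu.2.1
      have b := hv.2.2
      rw [lt_div_iff₀ hB] at a
      rw [div_le_iff₀ hB] at b
      linarith)
  have h4 := fourth_sum hX hF hL hCs hb h0 hR hanti hR0 hs hS J
  rw [← hK] at h4
  simp only [hW, integral_const_mul]
  have hc2 : ((J.card : ℝ) / B) ^ 2 ≤ (2 + 2 / C₁ ^ 2) * (|t - s| ^ 2 + ((m : ℝ) / B) ^ 2) := by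
    have h1 : (J.card : ℝ) / B ≤ m / B + (t - s) / C₁ := by
      rw [div_le_iff₀ hB]
      refine hcard.trans (le_of_eq ?_)
      field_simp
    have h2 : 0 ≤ (J.card : ℝ) / B := by positivity
    have h3 := pow_le_pow_left₀ h2 h1 2
    rw [sq_abs]
    have e : 2 / C₁ ^ 2 * (t - s) ^ 2 = 2 * ((t - s) / C₁) ^ 2 := by field_simp
    have e2 : 0 ≤ 2 / C₁ ^ 2 * ((m : ℝ) / B) ^ 2 := by positivity
    nlinarith [sq_nonneg ((m : ℝ) / B - (t - s) / C₁), sq_nonneg (t - s)]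
  calc (B ^ 2)⁻¹ * ∫ x, (∑ n ∈ J, X n x) ^ 4 ∂μ
      ≤ (B ^ 2)⁻¹ * (K * (3 * (2 * S * J.card) ^ 2)) :=
        mul_le_mul_of_nonneg_left h4 (by positivity)
    _ = K * (12 * S ^ 2) * ((J.card : ℝ) / B) ^ 2 := by field_simp; ring
    _ ≤ K * (12 * S ^ 2) * ((2 + 2 / C₁ ^ 2) * (|t - s| ^ 2 + ((m : ℝ) / B) ^ 2)) :=
        mul_le_mul_of_nonneg_left hc2 (by positivity)
    _ ≤ _ := by
        have : 0 ≤ |t - s| ^ 2 + ((m : ℝ) / B) ^ 2 := by positivity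
        nlinarith

end
end

section
/- Let (X_n)_{n≥0} be real random variables on (M,𝓕,μ) with ‖X_n‖_∞ ≤ L and μ(X_n) = 0 for all n, satisfying: (i) for every N ≥ 1 the sequence (X_n)_{0≤n<N} satisfies the functional correlation bound with constant C_* and nonincreasing rate function R with ∑_{n=1}^∞ nR(n) < ∞ and ∑_{n=1}^∞ R(n)^{1/2} < ∞; (ii) B_N^{−1} = o(N^{−2/3}) as N → ∞; (iii) there exist C₁ > 0, N₀ ≥ 1 and M_N ≥ 1 with M_N = o(B_N) such that for N ≥ N₀, B_v^{(N)} − B_u^{(N)} ≥ C₁M_N whenever 0 ≤ u < v < N and v − u ≥ M_N. Then for every λ > 0 there exists a constant C_λ > 0 (independent of ε) such that for all sufficiently large N and all ε ∈ (1/K_N, 1), where K_N = ⌊B_N/M_N⌋, one has μ(‖(W_N)_ε − W_N‖_∞ ≥ λ) ≤ C_λ(M_N/B_N + ε). In particular, for every λ > 0, limsup_{ε→0} limsup_{N→∞} μ(‖(W_N)_ε − W_N‖_∞ ≥ λ) = 0. -/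
set_option autoImplicit false

open MeasureTheory Filter
open scoped ENNReal NNReal Topology

noncomputable section

/-- Clamping of a time point to `[0,1]` (realizing the convention `w(t) = w(0)` for `t < 0`
and `w(t) = w(1)` for `t > 1`). -/
def clamp (r : ℝ) : ℝ := max 0 (min 1 r)

/-- The smoothed process `(W_N)_ε(s) = ∫₀¹ W_N(s + εu) du`. -/
def WNsmooth {M : Type*} [MeasurableSpace M] (μ : Measure M) (X : ℕ → M → ℝ) (N : ℕ)
    (ε : ℝ) (s : ℝ) (x : M) : ℝ :=
  ∫ u in (0:ℝ)..1, WNval μ X N (clamp (s + ε * u)) x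

/-- `‖(W_N)_ε − W_N‖_∞` at the sample point `x`. -/
def smoothDist {M : Type*} [MeasurableSpace M] (μ : Measure M) (X : ℕ → M → ℝ) (N : ℕ)
    (ε : ℝ) (x : M) : ℝ :=
  ⨆ t : Set.Icc (0:ℝ) 1, |WNsmooth μ X N ε (t : ℝ) x - WNval μ X N (t : ℝ) x|

def extz {n : ℕ} (x : Fin n → ℝ) (q : ℕ) : ℝ := if h : q < n then x ⟨q, h⟩ else 0

lemma abs_list_prod_le (L' : ℝ) (hL' : 1 ≤ L') (f : ℕ → ℝ) (hf : ∀ q, |f q| ≤ L') (qs : List ℕ) :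
    |(qs.map f).prod| ≤ L' ^ qs.length := by
  induction qs with
  | nil => simp
  | cons q qs ih =>
    simp only [List.map_cons, List.prod_cons, List.length_cons, abs_mul, pow_succ']
    exact mul_le_mul (hf q) ih (abs_nonneg _) (by linarith)

lemma abs_list_prod_sub_le (L' : ℝ) (hL' : 1 ≤ L') (f g : ℕ → ℝ) (hf : ∀ q, |f q| ≤ L')
    (hg : ∀ q, |g q| ≤ L') (d : ℝ) (hd : ∀ q, |f q - g q| ≤ d) (qs : List ℕ) :
    |(qs.map f).prod - (qs.map g).prod| ≤ qs.length * L' ^ qs.length * d := by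
  have hd0 : 0 ≤ d := (abs_nonneg _).trans (hd 0)
  induction qs with
  | nil => simp
  | cons q qs ih =>
    simp only [List.map_cons, List.prod_cons, List.length_cons]
    have e : f q * (qs.map f).prod - g q * (qs.map g).prod
      = (f q - g q) * (qs.map f).prod + g q * ((qs.map f).prod - (qs.map g).prod) := by ring
    rw [e]
    refine (abs_add_le _ _).trans ?_
    rw [abs_mul, abs_mul]
    have h1 := mul_le_mul (hd q) (abs_list_prod_le L' hL' f hf qs) (abs_nonneg _) hd0
    have h2 := mul_le_mul (hg q) ih (abs_nonneg _) (by linarith)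
    have h3 : d * L' ^ qs.length ≤ L' ^ (qs.length + 1) * d := by
      rw [pow_succ]
      have : 0 ≤ L' ^ qs.length * d := by positivity
      nlinarith
    push_cast
    rw [pow_succ] at *
    nlinarith

lemma sepLip_prod (L : ℝ) (hL : 0 ≤ L) {n : ℕ} (qs : List ℕ) :
    SepLipBound L (fun x : Fin n → ℝ => (qs.map (extz x)).prod)
      ((max L 1) ^ qs.length) (qs.length * (max L 1) ^ qs.length) := by
  have key : ∀ x ∈ cube L n, ∀ q, |extz x q| ≤ max L 1 := by
    intro x hx q
    unfold extz
    split_ifs with h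
    · exact (hx _).trans (le_max_left _ _)
    · simp
  have upd : ∀ x ∈ cube L n, ∀ j a, |a| ≤ L → Function.update x j a ∈ cube L n := by
    intro x hx j a ha k
    by_cases h : k = j
    · subst h; simpa using ha
    · simpa [h] using hx k
  constructor
  · intro x hx
    exact abs_list_prod_le _ (le_max_right _ _) _ (key x hx) qs
  · intro j x hx a b ha hb
    refine abs_list_prod_sub_le _ (le_max_right _ _) _ _ (key _ (upd x hx j a ha))
      (key _ (upd x hx j b hb)) _ ?_ qs
    intro q
    unfold extz
    split_ifs with h
    · by_cases hq : (⟨q, h⟩ : Fin n) = j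
      · subst hq; simp
      · simp [Function.update_of_ne hq]
    · simp

lemma fcb_list {M : Type*} [MeasurableSpace M] (μ : Measure M)
    (X : ℕ → M → ℝ) (L : ℝ) (hL : 0 ≤ L) (Cs : ℝ) (R : ℕ → ℝ)
    (hfcb : ∀ N : ℕ, FCB μ X N L Cs R) (a b : ℕ) (hab : a < b) (ls rs : List ℕ)
    (hls : ∀ l ∈ ls, l ≤ a) (hrs : ∀ r ∈ rs, b ≤ r) :
    |(∫ x, (ls.map (fun l => X l x)).prod * (rs.map (fun l => X l x)).prod ∂μ)
      - (∫ x, (ls.map (fun l => X l x)).prod ∂μ) * (∫ x, (rs.map (fun l => X l x)).prod ∂μ)|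
    ≤ Cs * ((max L 1) ^ (ls.length + rs.length) +
        ((ls.length + rs.length : ℕ) : ℝ) * (max L 1) ^ (ls.length + rs.length)) * R (b - a) := by
  set i : ℕ → ℕ := fun q => if q ≤ a then q else q + (b - a - 1) with hi
  have him : StrictMono i := by
    intro p q hpq
    simp only [hi]
    split_ifs <;> omega
  set n := a + 2 + rs.sum with hn
  have h := hfcb (i n) n i him (fun j hj => him hj) (a + 1) (by omega) (by omega)
    _ _ _ (sepLip_prod L hL (n := n) (ls ++ rs.map (fun r => r - (b - a - 1))))
  have e1 : i (a + 1) - i (a + 1 - 1) = b - a := by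
    simp only [hi]; split_ifs <;> omega
  rw [e1] at h
  have hr : ∀ r ∈ rs, ¬ (r - (b - a - 1) < a + 1) ∧ r - (b - a - 1) < n ∧
      i (r - (b - a - 1)) = r := by
    intro r hr
    have h1 := hrs r hr
    have h2 := List.le_sum_of_mem hr
    refine ⟨by omega, by omega, ?_⟩
    simp only [hi]; split_ifs <;> omega
  have eL : ∀ x : M, ∀ g : ℕ → ℝ, ls.map (extz (fun j : Fin n => if (j : ℕ) < a + 1 then X (i j) x else g j))
      = ls.map (fun l => X l x) := by
    intro x g
    refine List.map_congr_left fun l hl => ?_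
    have := hls l hl
    have h1 : l < n := by omega
    have h2 : l < a + 1 := by omega
    simp only [extz, h1, h2, dite_true, if_true, hi, this]
  have eL' : ∀ x : M, ls.map (extz (fun j : Fin n => X (i j) x))
      = ls.map (fun l => X l x) := by
    intro x
    refine List.map_congr_left fun l hl => ?_
    have := hls l hl
    have h1 : l < n := by omega
    simp only [extz, h1, dite_true, hi, this, if_true]
  have eR : ∀ x : M, ∀ g : ℕ → ℝ, rs.map (extz (fun j : Fin n => if (j : ℕ) < a + 1 then g j else X (i j) x) ∘ (fun r => r - (b - a - 1)))
      = rs.map (fun l => X l x) := by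
    intro x g
    refine List.map_congr_left fun l hl => ?_
    obtain ⟨h1, h2, h3⟩ := hr l hl
    simp only [extz, h1, h2, dite_true, if_false, h3, Function.comp]
  have eR' : ∀ x : M, rs.map (extz (fun j : Fin n => X (i j) x) ∘ (fun r => r - (b - a - 1)))
      = rs.map (fun l => X l x) := by
    intro x
    refine List.map_congr_left fun l hl => ?_
    obtain ⟨h1, h2, h3⟩ := hr l hl
    simp only [extz, h2, dite_true, h3, Function.comp]
  simp only [List.map_append, List.prod_append, List.map_map, List.length_append,
    List.length_map] at h
  have eRR : ∀ x y : M, rs.map (extz (fun j : Fin n => if (j : ℕ) < a + 1 then X (i j) x else X (i j) y) ∘ (fun r => r - (b - a - 1)))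
      = rs.map (fun l => X l y) := fun x y => eR y (fun j => X (i j) x)
  have eLL : ∀ x y : M, ls.map (extz (fun j : Fin n => if (j : ℕ) < a + 1 then X (i j) x else X (i j) y))
      = ls.map (fun l => X l x) := fun x y => eL x (fun j => X (i j) y)
  simp only [eL', eR', eRR, eLL, integral_const_mul, integral_mul_const] at h
  exact h

def ddist (i j : ℕ) : ℕ := (i - j) + (j - i)

def rr (R : ℕ → ℝ) (n : ℕ) : ℝ := R n + if n = 0 then 1 else 0

def trm (R : ℕ → ℝ) (a b c : ℕ) : ℝ := if ddist b c ≤ ddist a b then rr R (ddist a b) else 0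

lemma ddist_comm (i j : ℕ) : ddist i j = ddist j i := by unfold ddist; omega

lemma rr_nonneg (R : ℕ → ℝ) (hRpos : ∀ n, 0 ≤ R n) (n : ℕ) : 0 ≤ rr R n := by
  unfold rr; have := hRpos n; split_ifs <;> linarith

lemma le_rr (R : ℕ → ℝ) (n : ℕ) : R n ≤ rr R n := by
  unfold rr; split_ifs <;> linarith

lemma trm_nonneg (R : ℕ → ℝ) (hRpos : ∀ n, 0 ≤ R n) (a b c : ℕ) : 0 ≤ trm R a b c := by
  unfold trm; split_ifs
  · exact rr_nonneg R hRpos _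
  · exact le_rfl

lemma integrable_of_bdd {M : Type*} [MeasurableSpace M] (μ : Measure M) [IsProbabilityMeasure μ]
    (f : M → ℝ) (hf : Measurable f) (C : ℝ) (h : ∀ x, |f x| ≤ C) : Integrable f μ :=
  Integrable.of_bound hf.aestronglyMeasurable C (Eventually.of_forall h)

lemma abs_integral_le_of_bdd {M : Type*} [MeasurableSpace M] (μ : Measure M)
    [IsProbabilityMeasure μ] (f : M → ℝ) (C : ℝ) (h : ∀ x, |f x| ≤ C) : |∫ x, f x ∂μ| ≤ C := by
  have := norm_integral_le_of_norm_le_const (μ := μ) (f := f) (C := C) (Eventually.of_forall h)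
  simpa using this

def DD (L Cs : ℝ) : ℝ := 5 * (Cs + 1) * (max L 1) ^ 4

lemma DD_pos (L Cs : ℝ) (hCs : 0 ≤ Cs) : 0 < DD L Cs := by unfold DD; positivity

lemma pow_le_DD (L Cs : ℝ) (hCs : 0 ≤ Cs) (m : ℕ) (hm : m ≤ 4) : (max L 1) ^ m ≤ DD L Cs := by
  have h1 : (max L 1) ^ m ≤ (max L 1) ^ 4 := pow_le_pow_right₀ (le_max_right _ _) hm
  have h2 : 0 ≤ (max L 1) ^ 4 := by positivity
  unfold DD
  nlinarith [mul_nonneg hCs h2]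

lemma fcb_list' {M : Type*} [MeasurableSpace M] (μ : Measure M)
    (X : ℕ → M → ℝ) (L : ℝ) (hL : 0 ≤ L) (Cs : ℝ) (hCs : 0 ≤ Cs) (R : ℕ → ℝ)
    (hRpos : ∀ n, 0 ≤ R n)
    (hfcb : ∀ N : ℕ, FCB μ X N L Cs R) (a b : ℕ) (hab : a < b) (ls rs : List ℕ)
    (hls : ∀ l ∈ ls, l ≤ a) (hrs : ∀ r ∈ rs, b ≤ r) (hlen : ls.length + rs.length ≤ 4) :
    |(∫ x, (ls.map (fun l => X l x)).prod * (rs.map (fun l => X l x)).prod ∂μ)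
      - (∫ x, (ls.map (fun l => X l x)).prod ∂μ) * (∫ x, (rs.map (fun l => X l x)).prod ∂μ)|
    ≤ DD L Cs * rr R (b - a) := by
  refine (fcb_list μ X L hL Cs R hfcb a b hab ls rs hls hrs).trans ?_
  refine mul_le_mul ?_ (le_rr R _) (hRpos _) (DD_pos L Cs hCs).le
  have h1 : (max L 1) ^ (ls.length + rs.length) ≤ (max L 1) ^ 4 :=
    pow_le_pow_right₀ (le_max_right _ _) hlen
  have h2 : 0 ≤ (max L 1) ^ 4 := by positivity
  have h3 : ((ls.length + rs.length : ℕ) : ℝ) ≤ 4 := by exact_mod_cast hlen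
  have h4 : ((ls.length + rs.length : ℕ) : ℝ) * (max L 1) ^ (ls.length + rs.length)
      ≤ 4 * (max L 1) ^ 4 := mul_le_mul h3 h1 (by positivity) (by norm_num)
  unfold DD
  have h5 : (max L 1) ^ (ls.length + rs.length) + ((ls.length + rs.length : ℕ) : ℝ) * (max L 1) ^ (ls.length + rs.length) ≤ 5 * (max L 1) ^ 4 := by linarith
  have := mul_le_mul_of_nonneg_left h5 hCs
  nlinarith

lemma cov_bound {M : Type*} [MeasurableSpace M] (μ : Measure M) [IsProbabilityMeasure μ]
    (X : ℕ → M → ℝ) (L : ℝ) (hL : 0 ≤ L) (hbdd : ∀ n, ∀ x, |X n x| ≤ L)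
    (hcent : ∀ n, ∫ x, X n x ∂μ = 0)
    (Cs : ℝ) (hCs : 0 ≤ Cs) (R : ℕ → ℝ) (hRpos : ∀ n, 0 ≤ R n)
    (hfcb : ∀ N : ℕ, FCB μ X N L Cs R) (i j : ℕ) :
    |sigmaCov μ X i j| ≤ DD L Cs * rr R (ddist i j) := by
  have aux : ∀ i j, i < j → |sigmaCov μ X i j| ≤ DD L Cs * rr R (ddist i j) := by
    intro i j hij
    have h := fcb_list' μ X L hL Cs hCs R hRpos hfcb i j hij [i] [j] (by simp) (by simp) (by simp)
    simp only [List.map_cons, List.map_nil, List.prod_cons, List.prod_nil, mul_one, hcent,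
      sub_zero, mul_zero] at h
    have e : ddist i j = j - i := by unfold ddist; omega
    rw [e]; exact h
  rcases lt_trichotomy i j with h | h | h
  · exact aux i j h
  · subst h
    have h1 : |sigmaCov μ X i i| ≤ (max L 1) ^ 2 := by
      refine abs_integral_le_of_bdd μ _ _ fun x => ?_
      have := (hbdd i x).trans (le_max_left L 1)
      rw [abs_mul, sq]
      exact mul_le_mul this this (abs_nonneg _) (by positivity)
    have h2 : 1 ≤ rr R (ddist i i) := by
      have := hRpos 0
      simp [ddist, rr, this]
    have h3 := pow_le_DD L Cs hCs 2 (by norm_num)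
    have h4 := DD_pos L Cs hCs
    nlinarith
  · have := aux j i h
    rw [ddist_comm]
    have e : sigmaCov μ X i j = sigmaCov μ X j i := by
      unfold sigmaCov; simp only [mul_comm]
    rw [e]; exact this

def GG (L Cs : ℝ) (R : ℕ → ℝ) (i j k l : ℕ) : ℝ :=
  (DD L Cs * rr R (ddist i j)) * (DD L Cs * rr R (ddist k l)) +
    DD L Cs * (trm R i j k + trm R k j i + trm R l k j)

lemma GG_nonneg (L Cs : ℝ) (hCs : 0 ≤ Cs) (R : ℕ → ℝ) (hRpos : ∀ n, 0 ≤ R n) (i j k l : ℕ) :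
    0 ≤ GG L Cs R i j k l := by
  have h1 := DD_pos L Cs hCs
  have h2 := rr_nonneg R hRpos (ddist i j)
  have h3 := rr_nonneg R hRpos (ddist k l)
  have h4 := trm_nonneg R hRpos i j k
  have h5 := trm_nonneg R hRpos k j i
  have h6 := trm_nonneg R hRpos l k j
  unfold GG
  positivity

lemma four_bound {M : Type*} [MeasurableSpace M] (μ : Measure M) [IsProbabilityMeasure μ]
    (X : ℕ → M → ℝ) (L : ℝ) (hL : 0 ≤ L) (hbdd : ∀ n, ∀ x, |X n x| ≤ L)
    (hcent : ∀ n, ∫ x, X n x ∂μ = 0)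
    (Cs : ℝ) (hCs : 0 ≤ Cs) (R : ℕ → ℝ) (hRpos : ∀ n, 0 ≤ R n)
    (hfcb : ∀ N : ℕ, FCB μ X N L Cs R) (i j k l : ℕ) (hij : i ≤ j) (hjk : j ≤ k) (hkl : k ≤ l) :
    |∫ x, X i x * X j x * X k x * X l x ∂μ| ≤ GG L Cs R i j k l := by
  have h1 := DD_pos L Cs hCs
  have h2 := rr_nonneg R hRpos (ddist i j)
  have h3 := rr_nonneg R hRpos (ddist k l)
  have h4 := trm_nonneg R hRpos i j k
  have h5 := trm_nonneg R hRpos k j i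
  have h6 := trm_nonneg R hRpos l k j
  have h7 := mul_nonneg (mul_nonneg h1.le h2) (mul_nonneg h1.le h3)
  have h8 := mul_nonneg h1.le h4
  have h9 := mul_nonneg h1.le h5
  have h10 := mul_nonneg h1.le h6
  by_cases hil : i = l
  · obtain rfl : i = j := by omega
    obtain rfl : i = k := by omega
    subst hil
    have h : |∫ x, X i x * X i x * X i x * X i x ∂μ| ≤ (max L 1) ^ 4 := by
      refine abs_integral_le_of_bdd μ _ _ fun x => ?_
      have := (hbdd i x).trans (le_max_left L 1)
      have e : X i x * X i x * X i x * X i x = X i x ^ 4 := by ring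
      rw [e, abs_pow]
      exact pow_le_pow_left₀ (abs_nonneg _) this 4
    have h2 : 1 ≤ trm R i i i := by
      have := hRpos 0
      simp [ddist, rr, trm, this]
    have h3 := pow_le_DD L Cs hCs 4 (by norm_num)
    unfold GG
    nlinarith
  by_cases c1 : k - j ≤ j - i ∧ l - k ≤ j - i
  · have h := fcb_list' μ X L hL Cs hCs R hRpos hfcb i j (by omega) [i] [j, k, l] (by simp)
      (by simp; omega) (by simp)
    simp only [List.map_cons, List.map_nil, List.prod_cons, List.prod_nil, mul_one, hcent,
      sub_zero, zero_mul] at h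
    have e : ddist i j = j - i := by unfold ddist; omega
    have e' : trm R i j k = rr R (j - i) := by
      unfold trm; rw [if_pos (by unfold ddist; omega), e]
    simp only [← mul_assoc] at h
    rw [← e'] at h
    unfold GG
    linarith
  by_cases c2 : j - i ≤ k - j ∧ l - k ≤ k - j
  · have h := fcb_list' μ X L hL Cs hCs R hRpos hfcb j k (by omega) [i, j] [k, l] (by simp; omega)
      (by simp; omega) (by simp)
    simp only [List.map_cons, List.map_nil, List.prod_cons, List.prod_nil, mul_one] at h
    have e : ddist k j = k - j := by unfold ddist; omega
    have e' : trm R k j i = rr R (k - j) := by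
      unfold trm; rw [if_pos (by unfold ddist; omega), e]
    simp only [← mul_assoc] at h
    rw [← e'] at h
    have b1 := cov_bound μ X L hL hbdd hcent Cs hCs R hRpos hfcb i j
    have b2 := cov_bound μ X L hL hbdd hcent Cs hCs R hRpos hfcb k l
    have b3 := mul_le_mul b1 b2 (abs_nonneg _) (mul_nonneg h1.le h2)
    rw [← abs_mul] at b3
    have b4 := (abs_sub_abs_le_abs_sub _ _).trans h
    unfold sigmaCov at b3
    unfold GG
    linarith
  · have h := fcb_list' μ X L hL Cs hCs R hRpos hfcb k l (by omega) [i, j, k] [l] (by simp; omega)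
      (by simp) (by simp)
    simp only [List.map_cons, List.map_nil, List.prod_cons, List.prod_nil, mul_one, hcent,
      sub_zero, mul_zero] at h
    have e : ddist l k = l - k := by unfold ddist; omega
    have e' : trm R l k j = rr R (l - k) := by
      unfold trm; rw [if_pos (by unfold ddist; omega), e]
    simp only [← mul_assoc] at h
    rw [← e'] at h
    unfold GG
    linarith

lemma sum_ddist_le (h : ℕ → ℝ) (hh : ∀ n, 0 ≤ h n) (hs : Summable h) (A : Finset ℕ) (a : ℕ) :
    ∑ b ∈ A, h (ddist a b) ≤ 2 * ∑' n, h n := by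
  rw [← Finset.sum_filter_add_sum_filter_not A (fun b => a ≤ b), two_mul]
  refine add_le_add ?_ ?_
  · have : Set.InjOn (ddist a) (A.filter (fun b => a ≤ b) : Finset ℕ) := by
      intro x hx y hy hxy
      simp [ddist] at hx hy hxy
      omega
    rw [← Finset.sum_image (f := h) this]
    exact hs.sum_le_tsum _ (fun i _ => hh i)
  · have : Set.InjOn (ddist a) (A.filter (fun b => ¬ a ≤ b) : Finset ℕ) := by
      intro x hx y hy hxy
      simp [ddist] at hx hy hxy
      omega
    rw [← Finset.sum_image (f := h) this]
    exact hs.sum_le_tsum _ (fun i _ => hh i)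

def hw (R : ℕ → ℝ) (n : ℕ) : ℝ := (2 * n + 1) * rr R n

lemma hw_nonneg (R : ℕ → ℝ) (hRpos : ∀ n, 0 ≤ R n) (n : ℕ) : 0 ≤ hw R n :=
  mul_nonneg (by positivity) (rr_nonneg R hRpos n)

lemma hw_summable (R : ℕ → ℝ) (hRpos : ∀ n, 0 ≤ R n)
    (hR1 : Summable fun n : ℕ => (n : ℝ) * R n) : Summable (hw R) := by
  have h2 : Summable (fun n => hw R (n + 1)) := by
    have h3 := ((summable_nat_add_iff 1).mpr hR1).mul_left 3
    refine Summable.of_nonneg_of_le (fun n => hw_nonneg R hRpos _) (fun n => ?_) h3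
    have := hRpos (n + 1)
    simp only [hw, rr]
    push_cast
    simp
    nlinarith [mul_nonneg (Nat.cast_nonneg (α := ℝ) n) this]
  exact (summable_nat_add_iff 1).mp h2

lemma sum_trm_le (R : ℕ → ℝ) (hRpos : ∀ n, 0 ≤ R n)
    (hR1 : Summable fun n : ℕ => (n : ℝ) * R n) (A : Finset ℕ) :
    ∑ a ∈ A, ∑ b ∈ A, ∑ c ∈ A, trm R a b c ≤ A.card * (2 * ∑' n, hw R n) := by
  rw [← nsmul_eq_mul]
  refine Finset.sum_le_card_nsmul _ _ _ fun a _ => ?_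
  refine le_trans (Finset.sum_le_sum fun b _ => ?_)
    (sum_ddist_le (hw R) (hw_nonneg R hRpos) (hw_summable R hRpos hR1) A a)
  unfold trm
  rw [← Finset.sum_filter, Finset.sum_const, nsmul_eq_mul]
  refine mul_le_mul_of_nonneg_right ?_ (rr_nonneg R hRpos _)
  have : (A.filter (fun c => ddist b c ≤ ddist a b)).card ≤ (Finset.Icc (b - ddist a b) (b + ddist a b)).card := by
    refine Finset.card_le_card fun c hc => ?_
    simp only [Finset.mem_filter, Finset.mem_Icc] at hc ⊢
    have := hc.2
    generalize ddist a b = d at this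
    unfold ddist at this
    omega
  rw [Nat.card_Icc] at this
  have : (A.filter (fun c => ddist b c ≤ ddist a b)).card ≤ 2 * ddist a b + 1 := by omega
  exact_mod_cast this

lemma sum_rr_le (R : ℕ → ℝ) (hRpos : ∀ n, 0 ≤ R n)
    (hR1 : Summable fun n : ℕ => (n : ℝ) * R n) (A : Finset ℕ) (a : ℕ) :
    ∑ b ∈ A, rr R (ddist a b) ≤ 2 * ∑' n, hw R n := by
  refine le_trans (Finset.sum_le_sum fun b _ => ?_)
    (sum_ddist_le (hw R) (hw_nonneg R hRpos) (hw_summable R hRpos hR1) A a)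
  have := rr_nonneg R hRpos (ddist a b)
  unfold hw
  nlinarith [mul_nonneg (Nat.cast_nonneg (α := ℝ) (ddist a b)) this]

lemma sum_GG_le (L Cs : ℝ) (hCs : 0 ≤ Cs) (R : ℕ → ℝ) (hRpos : ∀ n, 0 ≤ R n)
    (hR1 : Summable fun n : ℕ => (n : ℝ) * R n) (A : Finset ℕ) :
    ∑ i ∈ A, ∑ j ∈ A, ∑ k ∈ A, ∑ l ∈ A, GG L Cs R i j k l ≤
      ((DD L Cs * (2 * ∑' n, hw R n)) ^ 2 + 3 * (DD L Cs * (2 * ∑' n, hw R n))) * (A.card : ℝ) ^ 2 := by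
  set H := 2 * ∑' n, hw R n with hH
  have hH0 : 0 ≤ H := mul_nonneg (by norm_num) (tsum_nonneg (hw_nonneg R hRpos))
  have hD := DD_pos L Cs hCs
  set D := DD L Cs
  have hT := sum_trm_le R hRpos hR1 A
  have hrr : ∑ i ∈ A, ∑ j ∈ A, D * rr R (ddist i j) ≤ A.card * (D * H) := by
    rw [← nsmul_eq_mul]
    refine Finset.sum_le_card_nsmul _ _ _ fun a _ => ?_
    rw [← Finset.mul_sum]
    exact mul_le_mul_of_nonneg_left (sum_rr_le R hRpos hR1 A a) hD.le
  have hrr0 : 0 ≤ ∑ i ∈ A, ∑ j ∈ A, D * rr R (ddist i j) :=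
    Finset.sum_nonneg fun i _ => Finset.sum_nonneg fun j _ => mul_nonneg hD.le (rr_nonneg R hRpos _)
  have e0 : ∑ i ∈ A, ∑ j ∈ A, ∑ k ∈ A, ∑ l ∈ A,
      (D * rr R (ddist i j)) * (D * rr R (ddist k l)) = (∑ i ∈ A, ∑ j ∈ A, D * rr R (ddist i j)) ^ 2 := by
    rw [sq]
    simp only [Finset.sum_mul, Finset.mul_sum]
    exact Finset.sum_congr rfl fun i _ => Finset.sum_congr rfl fun j _ =>
      Finset.sum_congr rfl fun k _ => Finset.sum_congr rfl fun l _ => mul_comm _ _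
  have e1 : ∑ i ∈ A, ∑ j ∈ A, ∑ k ∈ A, ∑ _l ∈ A, trm R i j k =
      A.card * ∑ i ∈ A, ∑ j ∈ A, ∑ k ∈ A, trm R i j k := by
    simp only [Finset.sum_const, nsmul_eq_mul, Finset.mul_sum]
  have e2 : ∑ i ∈ A, ∑ j ∈ A, ∑ k ∈ A, ∑ _l ∈ A, trm R k j i =
      A.card * ∑ i ∈ A, ∑ j ∈ A, ∑ k ∈ A, trm R i j k := by
    simp only [Finset.sum_const, nsmul_eq_mul, ← Finset.mul_sum]
    congr 1
    rw [Finset.sum_comm]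
    rw [Finset.sum_comm (s := A) (t := A) (f := fun i j => ∑ k ∈ A, trm R i j k)]
    refine Finset.sum_congr rfl fun j _ => ?_
    rw [Finset.sum_comm]
  have e3 : ∑ i ∈ A, ∑ j ∈ A, ∑ k ∈ A, ∑ l ∈ A, trm R l k j =
      A.card * ∑ i ∈ A, ∑ j ∈ A, ∑ k ∈ A, trm R i j k := by
    rw [Finset.sum_const, nsmul_eq_mul]
    congr 1
    rw [Finset.sum_comm]
    rw [Finset.sum_comm (s := A) (t := A) (f := fun i j => ∑ k ∈ A, trm R i j k)]
    refine Finset.sum_congr rfl fun j _ => ?_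
    rw [Finset.sum_comm]
  have e : ∑ i ∈ A, ∑ j ∈ A, ∑ k ∈ A, ∑ l ∈ A, GG L Cs R i j k l =
      (∑ i ∈ A, ∑ j ∈ A, D * rr R (ddist i j)) ^ 2 +
        D * (3 * (A.card * ∑ i ∈ A, ∑ j ∈ A, ∑ k ∈ A, trm R i j k)) := by
    have e4 : ∀ x : ℝ, D * (3 * (A.card * x)) = D * (A.card * x) + D * (A.card * x)
        + D * (A.card * x) := fun x => by ring
    rw [e4]
    nth_rewrite 1 [← e1]
    nth_rewrite 1 [← e2]
    rw [← e3, ← e0]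
    simp only [GG, mul_add, Finset.sum_add_distrib, Finset.mul_sum]
    simp only [add_assoc]
    rfl
  rw [e]
  have h1 : (∑ i ∈ A, ∑ j ∈ A, D * rr R (ddist i j)) ^ 2 ≤ (A.card * (D * H)) ^ 2 :=
    pow_le_pow_left₀ hrr0 hrr 2
  have h2 := mul_le_mul_of_nonneg_left hT (mul_nonneg hD.le (Nat.cast_nonneg (α := ℝ) A.card))
  nlinarith

lemma four_moment {M : Type*} [MeasurableSpace M] (μ : Measure M) [IsProbabilityMeasure μ]
    (X : ℕ → M → ℝ) (hXmeas : ∀ n, Measurable (X n))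
    (L : ℝ) (hL : 0 ≤ L) (hbdd : ∀ n, ∀ x, |X n x| ≤ L)
    (hcent : ∀ n, ∫ x, X n x ∂μ = 0)
    (Cs : ℝ) (hCs : 0 ≤ Cs) (R : ℕ → ℝ) (hRpos : ∀ n, 0 ≤ R n)
    (hfcb : ∀ N : ℕ, FCB μ X N L Cs R)
    (hR1 : Summable fun n : ℕ => (n : ℝ) * R n) (A : Finset ℕ) :
    ∫ x, (∑ i ∈ A, X i x) ^ 4 ∂μ ≤ 24 *
      ((DD L Cs * (2 * ∑' n, hw R n)) ^ 2 + 3 * (DD L Cs * (2 * ∑' n, hw R n))) * (A.card : ℝ) ^ 2 := by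
  have hintgr : ∀ f : Fin 4 → ℕ, Integrable (fun x => ∏ s, X (f s) x) μ := by
    intro f
    refine integrable_of_bdd μ _ (Finset.measurable_prod _ fun s _ => hXmeas _) (∏ _s : Fin 4, L) ?_
    intro x
    rw [Finset.abs_prod]
    exact Finset.prod_le_prod (fun _ _ => abs_nonneg _) fun s _ => hbdd _ _
  have e1 : ∀ x, (∑ i ∈ A, X i x) ^ 4 =
      ∑ f ∈ Fintype.piFinset (fun _ : Fin 4 => A), ∏ s, X (f s) x := by
    intro x
    have := Finset.prod_univ_sum (fun _ : Fin 4 => A) (fun _ i => X i x)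
    rw [← this]
    simp
  simp only [e1]
  rw [integral_finsetSum _ (fun f _ => hintgr f)]
  set G' : (Fin 4 → ℕ) → ℝ := fun f => GG L Cs R (f 0) (f 1) (f 2) (f 3) with hG'
  have hG0 : ∀ f, 0 ≤ G' f := fun f => GG_nonneg L Cs hCs R hRpos _ _ _ _
  have key : ∀ f : Fin 4 → ℕ, ∫ x, ∏ s, X (f s) x ∂μ ≤ ∑ σ : Equiv.Perm (Fin 4), G' (f ∘ σ) := by
    intro f
    set σ := Tuple.sort f
    have hm : Monotone (f ∘ σ) := Tuple.monotone_sort f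
    have h1 : ∫ x, ∏ s, X (f s) x ∂μ ≤ G' (f ∘ σ) := by
      have : ∀ x, ∏ s, X (f s) x = X ((f ∘ σ) 0) x * X ((f ∘ σ) 1) x * X ((f ∘ σ) 2) x * X ((f ∘ σ) 3) x := by
        intro x
        rw [← Equiv.prod_comp σ, Fin.prod_univ_four]
        rfl
      simp only [this]
      exact (le_abs_self _).trans (four_bound μ X L hL hbdd hcent Cs hCs R hRpos hfcb _ _ _ _
        (hm (by decide)) (hm (by decide)) (hm (by decide)))
    exact h1.trans (Finset.single_le_sum (f := fun σ : Equiv.Perm (Fin 4) => G' (f ∘ σ))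
      (fun σ _ => hG0 _) (Finset.mem_univ σ))
  refine (Finset.sum_le_sum fun f _ => key f).trans ?_
  rw [Finset.sum_comm]
  have e2 : ∀ σ : Equiv.Perm (Fin 4), ∑ f ∈ Fintype.piFinset (fun _ : Fin 4 => A), G' (f ∘ σ)
      = ∑ f ∈ Fintype.piFinset (fun _ : Fin 4 => A), G' f := by
    intro σ
    refine Finset.sum_nbij' (fun f => f ∘ σ) (fun f => f ∘ σ.symm) ?_ ?_ ?_ ?_ ?_
    · intro f hf
      simp only [Fintype.mem_piFinset] at hf ⊢
      exact fun a => hf _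
    · intro f hf
      simp only [Fintype.mem_piFinset] at hf ⊢
      exact fun a => hf _
    · intro f _; ext a; simp
    · intro f _; ext a; simp
    · intro f _; rfl
  have e3 : ∑ f ∈ Fintype.piFinset (fun _ : Fin 4 => A), G' f =
      ∑ i ∈ A, ∑ j ∈ A, ∑ k ∈ A, ∑ l ∈ A, GG L Cs R i j k l := by
    simp only [← Finset.sum_product']
    refine Finset.sum_nbij' (fun f => (f 0, f 1, f 2, f 3))
      (fun p => ![p.1, p.2.1, p.2.2.1, p.2.2.2]) ?_ ?_ ?_ ?_ ?_
    · intro f hf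
      simp only [Fintype.mem_piFinset] at hf
      simp [hf]
    · intro p hp
      simp only [Finset.mem_product] at hp
      simp only [Fintype.mem_piFinset]
      intro a
      fin_cases a <;> simp [hp]
    · intro f _
      ext a
      fin_cases a <;> rfl
    · intro p _; rfl
    · intro f _; rfl
  simp only [e2, e3, Finset.sum_const, Finset.card_univ, Fintype.card_perm, Fintype.card_fin, nsmul_eq_mul]
  have := sum_GG_le L Cs hCs R hRpos hR1 A
  have e4 : ((Nat.factorial 4 : ℕ) : ℝ) = 24 := by norm_num [Nat.factorial]
  rw [e4]
  linarith

/-- dyadic maximal function -/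
def Zrec {M : Type*} (Y : ℕ → M → ℝ) : ℕ → ℕ → M → ℝ
  | 0, a, x => |Y a x|
  | (p + 1), a, x => max (Zrec Y p a x) (Zrec Y p (a + 2 ^ p) x)
      + |∑ i ∈ Finset.Ico a (a + 2 ^ p), Y i x|

lemma Zrec_nonneg {M : Type*} (Y : ℕ → M → ℝ) (p a : ℕ) (x : M) : 0 ≤ Zrec Y p a x := by
  induction p generalizing a with
  | zero => exact abs_nonneg _
  | succ p ih => exact add_nonneg ((ih a).trans (le_max_left _ _)) (abs_nonneg _)

lemma Zrec_meas {M : Type*} [MeasurableSpace M] (Y : ℕ → M → ℝ) (hY : ∀ n, Measurable (Y n))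
    (p a : ℕ) : Measurable (Zrec Y p a) := by
  induction p generalizing a with
  | zero => exact (hY a).abs
  | succ p ih =>
    exact ((ih a).max (ih _)).add (Finset.measurable_sum _ fun i _ => hY i).abs

lemma le_Zrec {M : Type*} (Y : ℕ → M → ℝ) (p a : ℕ) (x : M) (k : ℕ) (hk : k ≤ 2 ^ p) :
    |∑ i ∈ Finset.Ico a (a + k), Y i x| ≤ Zrec Y p a x := by
  induction p generalizing a k with
  | zero =>
    simp only [pow_zero] at hk
    interval_cases k
    · simp [Zrec]
    · simp [Zrec]
  | succ p ih =>
    simp only [Zrec]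
    by_cases h : k ≤ 2 ^ p
    · have := ih a k h
      have := le_max_left (Zrec Y p a x) (Zrec Y p (a + 2 ^ p) x)
      have := abs_nonneg (∑ i ∈ Finset.Ico a (a + 2 ^ p), Y i x)
      linarith
    · rw [pow_succ] at hk
      have h1 := ih (a + 2 ^ p) (k - 2 ^ p) (by omega)
      have e : a + 2 ^ p + (k - 2 ^ p) = a + k := by omega
      rw [e] at h1
      rw [← Finset.sum_Ico_consecutive _ (show a ≤ a + 2 ^ p by omega)
        (show a + 2 ^ p ≤ a + k by omega)]
      have := abs_add_le (∑ i ∈ Finset.Ico a (a + 2 ^ p), Y i x) (∑ i ∈ Finset.Ico (a + 2 ^ p) (a + k), Y i x)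
      have := le_max_right (Zrec Y p a x) (Zrec Y p (a + 2 ^ p) x)
      linarith

lemma pow_four_ineq (x y : ℝ) : (x + y) ^ 4 ≤ 3 / 2 * x ^ 4 + 900 * y ^ 4 := by
  have h1 : (x + y) ^ 2 ≤ 6 / 5 * x ^ 2 + 6 * y ^ 2 := by nlinarith [sq_nonneg (x - 5 * y)]
  have h2 : ((x + y) ^ 2) ^ 2 ≤ (6 / 5 * x ^ 2 + 6 * y ^ 2) ^ 2 :=
    pow_le_pow_left₀ (sq_nonneg _) h1 2
  nlinarith [sq_nonneg (x ^ 2 - 120 * y ^ 2)]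

lemma max_pow_four (x y : ℝ) : (max x y) ^ 4 ≤ x ^ 4 + y ^ 4 := by
  have : 0 ≤ x ^ 4 := by positivity
  have : 0 ≤ y ^ 4 := by positivity
  rcases max_choice x y with h | h <;> rw [h] <;> linarith

lemma Zrec_moment {M : Type*} [MeasurableSpace M] (μ : Measure M)
    (Y : ℕ → M → ℝ) (hY : ∀ n, Measurable (Y n)) (K : ℝ) (hK : 0 ≤ K)
    (hmom : ∀ a k : ℕ, ∫⁻ x, ENNReal.ofReal ((∑ i ∈ Finset.Ico a (a + k), Y i x) ^ 4) ∂μ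
      ≤ ENNReal.ofReal (K * (k : ℝ) ^ 2)) (p a : ℕ) :
    ∫⁻ x, ENNReal.ofReal ((Zrec Y p a x) ^ 4) ∂μ ≤ ENNReal.ofReal (900 * K * 4 ^ p) := by
  induction p generalizing a with
  | zero =>
    have := hmom a 1
    simp only [Zrec]
    simp at this
    have e : ∀ x, |Y a x| ^ 4 = Y a x ^ 4 := fun x => by
      rw [← abs_pow]; exact abs_of_nonneg (by positivity)
    simp only [e]
    exact this.trans (ENNReal.ofReal_le_ofReal (by linarith))
  | succ p ih =>
    have hp : ∀ x, ENNReal.ofReal ((Zrec Y (p + 1) a x) ^ 4) ≤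
        (ENNReal.ofReal (3 / 2) * ENNReal.ofReal ((Zrec Y p a x) ^ 4) +
        ENNReal.ofReal (3 / 2) * ENNReal.ofReal ((Zrec Y p (a + 2 ^ p) x) ^ 4)) +
        ENNReal.ofReal 900 * ENNReal.ofReal ((∑ i ∈ Finset.Ico a (a + 2 ^ p), Y i x) ^ 4) := by
      intro x
      rw [← ENNReal.ofReal_mul (by norm_num), ← ENNReal.ofReal_mul (by norm_num),
        ← ENNReal.ofReal_mul (by norm_num), ← ENNReal.ofReal_add (by positivity) (by positivity),
        ← ENNReal.ofReal_add (by positivity) (by positivity)]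
      refine ENNReal.ofReal_le_ofReal ?_
      simp only [Zrec]
      refine (pow_four_ineq _ _).trans ?_
      have e : |∑ i ∈ Finset.Ico a (a + 2 ^ p), Y i x| ^ 4 = (∑ i ∈ Finset.Ico a (a + 2 ^ p), Y i x) ^ 4 := by
        rw [← abs_pow]; exact abs_of_nonneg (by positivity)
      rw [e]
      have := max_pow_four (Zrec Y p a x) (Zrec Y p (a + 2 ^ p) x)
      linarith
    refine (lintegral_mono hp).trans ?_
    have m1 : ∀ b, Measurable (fun x => ENNReal.ofReal ((Zrec Y p b x) ^ 4)) := fun b =>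
      ((Zrec_meas Y hY p b).pow_const 4).ennreal_ofReal
    have m2 : Measurable (fun x => ENNReal.ofReal ((∑ i ∈ Finset.Ico a (a + 2 ^ p), Y i x) ^ 4)) :=
      ((Finset.measurable_sum _ fun i _ => hY i).pow_const 4).ennreal_ofReal
    rw [lintegral_add_right _ (m2.const_mul _),
      lintegral_add_left ((m1 _).const_mul _), lintegral_const_mul _ (m1 _),
      lintegral_const_mul _ (m1 _), lintegral_const_mul _ m2]
    have i1 := ih a
    have i2 := ih (a + 2 ^ p)
    have i3 := hmom a (2 ^ p)
    calc _ ≤ (ENNReal.ofReal (3 / 2) * ENNReal.ofReal (900 * K * 4 ^ p) +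
        ENNReal.ofReal (3 / 2) * ENNReal.ofReal (900 * K * 4 ^ p)) +
        ENNReal.ofReal 900 * ENNReal.ofReal (K * ((2 ^ p : ℕ) : ℝ) ^ 2) := by gcongr
      _ = ENNReal.ofReal (900 * K * 4 ^ (p + 1)) := by
        rw [← ENNReal.ofReal_mul (by norm_num),
          ← ENNReal.ofReal_mul (by norm_num), ← ENNReal.ofReal_add (by positivity) (by positivity),
          ← ENNReal.ofReal_add (by positivity) (by positivity)]
        congr 1
        push_cast
        rw [← pow_mul, mul_comm p 2, pow_mul]
        norm_num
        ring

lemma core_max {M : Type*} [MeasurableSpace M] (μ : Measure M)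
    (X : ℕ → M → ℝ) (hXmeas : ∀ n, Measurable (X n)) (K : ℝ) (hK : 0 ≤ K)
    (hmom : ∀ A : Finset ℕ, ∫⁻ x, ENNReal.ofReal ((∑ i ∈ A, X i x) ^ 4) ∂μ
      ≤ ENNReal.ofReal (K * (A.card : ℝ) ^ 2)) (N : ℕ) (b : ℕ → ℝ) (p : ℕ) (δ : ℝ)
    (hcard : ∀ s, ((Finset.range N).filter (fun n => s < b n ∧ b n ≤ s + δ)).card ≤ 2 ^ p)
    (c : ℝ) (hc : 0 < c) :
    ∃ E : Set M, μ E ≤ ENNReal.ofReal (((N / 2 ^ p + 1 : ℕ) : ℝ) * (900 * K * 4 ^ (p + 1) / c ^ 4)) ∧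
      ∀ x, x ∉ E → ∀ s s', s ≤ s' → s' ≤ s + δ →
        |∑ n ∈ Finset.range N, (if b n ≤ s' then (1:ℝ) else 0) * X n x -
          ∑ n ∈ Finset.range N, (if b n ≤ s then (1:ℝ) else 0) * X n x| ≤ 2 * c := by
  set f : Fin N → ℝ := fun j => b j with hf
  set σ := Tuple.sort f with hσ
  have hmono : Monotone (f ∘ σ) := Tuple.monotone_sort f
  set π : ℕ → ℕ := fun k => if h : k < N then (σ ⟨k, h⟩ : ℕ) else k with hπ
  have hπinj : Function.Injective π := by
    intro u v huv
    simp only [hπ] at huv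
    by_cases hu : u < N <;> by_cases hv : v < N
    · simp only [hu, hv, dite_true] at huv
      have := σ.injective (Fin.ext huv)
      simpa using this
    · simp only [hu, hv, dite_true, dite_false] at huv
      have := (σ ⟨u, hu⟩).2
      omega
    · simp only [hu, hv, dite_true, dite_false] at huv
      have := (σ ⟨v, hv⟩).2
      omega
    · simpa only [hu, hv, dite_false] using huv
  have hπf : ∀ j : Fin N, π j = σ j := by
    intro j
    simp [hπ]
  set Y : ℕ → M → ℝ := fun k => X (π k) with hY
  have hYmeas : ∀ k, Measurable (Y k) := fun k => hXmeas _
  have hYmom : ∀ a k : ℕ, ∫⁻ x, ENNReal.ofReal ((∑ i ∈ Finset.Ico a (a + k), Y i x) ^ 4) ∂μ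
      ≤ ENNReal.ofReal (K * (k : ℝ) ^ 2) := by
    intro a k
    have h := hmom ((Finset.Ico a (a + k)).image π)
    rw [Finset.card_image_of_injective _ hπinj] at h
    simp only [Finset.sum_image hπinj.injOn, Nat.card_Ico, Nat.add_sub_cancel_left] at h
    exact h
  set κ : ℝ → ℕ := fun s => Fintype.card {i : Fin N // (f ∘ σ) i ≤ s} with hκ
  have hκN : ∀ s, κ s ≤ N := by
    intro s
    have := Fintype.card_subtype_le (fun i : Fin N => (f ∘ σ) i ≤ s)
    exact this.trans (Fintype.card_fin N).le
  have hsum : ∀ s x, ∑ n ∈ Finset.range N, (if b n ≤ s then (1:ℝ) else 0) * X n x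
      = ∑ k ∈ Finset.range (κ s), Y k x := by
    intro s x
    have e1 : ∑ k ∈ Finset.range (κ s), Y k x =
        ∑ k ∈ Finset.range N, if k < κ s then Y k x else 0 := by
      rw [← Finset.sum_filter]
      refine Finset.sum_congr ?_ fun _ _ => rfl
      ext k
      have := hκN s
      simp only [Finset.mem_range, Finset.mem_filter]
      omega
    rw [e1, Finset.sum_range, Finset.sum_range, ← Equiv.sum_comp σ]
    refine Finset.sum_congr rfl fun j _ => ?_
    have h : (j : ℕ) < κ s ↔ (f ∘ σ) j ≤ s := by
      simp only [hκ, Fintype.card_subtype]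
      exact Tuple.lt_card_le_iff_apply_le_of_monotone hmono
    by_cases hj : (f ∘ σ) j ≤ s
    · have h1 : (j : ℕ) < κ s := h.2 hj
      have h2 : b (σ j) ≤ s := hj
      simp [h1, h2, hY, hπf]
    · have h1 : ¬ (j : ℕ) < κ s := fun h' => hj (h.1 h')
      have h2 : ¬ b (σ j) ≤ s := hj
      simp [h1, h2]
  have hκmono : ∀ s s', s ≤ s' → κ s ≤ κ s' := by
    intro s s' hs
    exact Fintype.card_subtype_mono _ _ (fun i hi => le_trans hi hs)
  have hκstep : ∀ s s', s' ≤ s + δ → κ s' ≤ κ s + 2 ^ p := by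
    intro s s' hs'
    simp only [hκ, Fintype.card_subtype]
    refine le_trans (Finset.card_le_card (t := Finset.univ.filter (fun i => (f ∘ σ) i ≤ s) ∪
      Finset.univ.filter (fun i => s < (f ∘ σ) i ∧ (f ∘ σ) i ≤ s + δ)) ?_) ?_
    · intro i hi
      simp only [Finset.mem_filter, Finset.mem_univ, true_and, Finset.mem_union] at hi ⊢
      rcases le_or_gt ((f ∘ σ) i) s with h | h
      · exact Or.inl h
      · exact Or.inr ⟨h, hi.trans hs'⟩
    · refine (Finset.card_union_le _ _).trans (Nat.add_le_add_left ?_ _)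
      refine le_trans (Finset.card_le_card_of_injOn (fun i => ((σ i : Fin N) : ℕ)) ?_ ?_) (hcard s)
      · intro i hi
        simp only [Finset.coe_filter, Finset.mem_univ, true_and, Set.mem_ofPred_eq,
          Finset.mem_range] at hi ⊢
        exact ⟨(σ i).2, hi⟩
      · intro i _ j _ hij
        exact σ.injective (Fin.ext hij)
  refine ⟨⋃ j ∈ Finset.range (N / 2 ^ p + 1), {x | c ≤ Zrec Y (p + 1) (j * 2 ^ p) x}, ?_, ?_⟩
  · refine (measure_biUnion_finset_le _ _).trans ?_
    have hone : ∀ j ∈ Finset.range (N / 2 ^ p + 1), μ {x | c ≤ Zrec Y (p + 1) (j * 2 ^ p) x} ≤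
        ENNReal.ofReal (900 * K * 4 ^ (p + 1) / c ^ 4) := by
      intro j _
      have hc4 : 0 < c ^ 4 := by positivity
      have h1 : {x | c ≤ Zrec Y (p + 1) (j * 2 ^ p) x} ⊆
          {x | ENNReal.ofReal (c ^ 4) ≤ ENNReal.ofReal ((Zrec Y (p + 1) (j * 2 ^ p) x) ^ 4)} := by
        intro x hx
        exact ENNReal.ofReal_le_ofReal (pow_le_pow_left₀ hc.le hx 4)
      refine (measure_mono h1).trans ?_
      refine (meas_ge_le_lintegral_div
        ((Zrec_meas Y hYmeas (p + 1) (j * 2 ^ p)).pow_const 4).ennreal_ofReal.aemeasurable ?_ ?_).trans ?_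
      · simpa using hc4
      · exact ENNReal.ofReal_ne_top
      · rw [ENNReal.ofReal_div_of_pos hc4]
        exact ENNReal.div_le_div_right (Zrec_moment μ Y hYmeas K hK hYmom _ _) _
    refine (Finset.sum_le_card_nsmul _ _ _ hone).trans ?_
    rw [Finset.card_range, nsmul_eq_mul, ENNReal.ofReal_mul (by positivity), ENNReal.ofReal_natCast]
  · intro x hx s s' hs hs'
    rw [hsum, hsum]
    set j := κ s / 2 ^ p with hj
    have hjN : j ≤ N / 2 ^ p := Nat.div_le_div_right (hκN s)
    have h2p : 0 < 2 ^ p := by positivity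
    have ha1 : j * 2 ^ p ≤ κ s := Nat.div_mul_le_self _ _
    have ha2 : κ s < j * 2 ^ p + 2 ^ p := by
      have := Nat.lt_div_mul_add (a := κ s) h2p
      omega
    have hk1 := hκmono s s' hs
    have hk2 := hκstep s s' hs'
    have hZ : Zrec Y (p + 1) (j * 2 ^ p) x < c := by
      by_contra hcon
      push Not at hcon
      apply hx
      simp only [Set.mem_iUnion]
      exact ⟨j, Finset.mem_range.2 (by omega), hcon⟩
    have b1 := le_Zrec Y (p + 1) (j * 2 ^ p) x (κ s - j * 2 ^ p) (by rw [pow_succ]; omega)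
    have b2 := le_Zrec Y (p + 1) (j * 2 ^ p) x (κ s' - j * 2 ^ p) (by rw [pow_succ]; omega)
    rw [Nat.add_sub_cancel' ha1] at b1
    rw [Nat.add_sub_cancel' (ha1.trans hk1)] at b2
    rw [Finset.sum_Ico_eq_sub _ ha1] at b1
    rw [Finset.sum_Ico_eq_sub _ (ha1.trans hk1)] at b2
    rw [abs_le] at *
    constructor <;> linarith

lemma clamp_mem (t ε u : ℝ) (ht0 : 0 ≤ t) (ht1 : t ≤ 1) (hε : 0 < ε) (hu0 : 0 ≤ u) (hu1 : u ≤ 1) :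
    t ≤ clamp (t + ε * u) ∧ clamp (t + ε * u) ≤ t + ε := by
  have h1 : 0 ≤ ε * u := by positivity
  have h2 : ε * u ≤ ε := by nlinarith
  unfold clamp
  constructor
  · exact (le_min ht1 (by linarith)).trans (le_max_right _ _)
  · exact max_le (by linarith) ((min_le_right _ _).trans (by linarith))

lemma smooth_le {M : Type*} [MeasurableSpace M] (μ : Measure M) (X : ℕ → M → ℝ) (N : ℕ)
    (ε : ℝ) (hε : 0 < ε) (hB : 0 < Bvar μ X N) (x : M) (c : ℝ)
    (h : ∀ s s', s ≤ s' → s' ≤ s + ε * Bvar μ X N →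
        |∑ n ∈ Finset.range N, (if Bpart μ X N n ≤ s' then (1:ℝ) else 0) * X n x -
          ∑ n ∈ Finset.range N, (if Bpart μ X N n ≤ s then (1:ℝ) else 0) * X n x| ≤ 2 * c) :
    smoothDist μ X N ε x ≤ (Bvar μ X N) ^ (-(1:ℝ)/2) * (2 * c) := by
  have hBr : 0 ≤ (Bvar μ X N) ^ (-(1:ℝ)/2) := Real.rpow_nonneg hB.le _
  have hW : ∀ t t', t ≤ t' → t' ≤ t + ε →
      |WNval μ X N t' x - WNval μ X N t x| ≤ (Bvar μ X N) ^ (-(1:ℝ)/2) * (2 * c) := by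
    intro t t' ht ht'
    unfold WNval
    rw [← mul_sub, abs_mul, abs_of_nonneg hBr]
    refine mul_le_mul_of_nonneg_left ?_ hBr
    simp only [div_le_iff₀ hB]
    refine h _ _ (mul_le_mul_of_nonneg_right ht hB.le) ?_
    rw [← add_mul]
    exact mul_le_mul_of_nonneg_right ht' hB.le
  have hmeas : ∀ t : ℝ, Measurable (fun u : ℝ => WNval μ X N (clamp (t + ε * u)) x) := by
    intro t
    have hcl : Measurable (fun u : ℝ => clamp (t + ε * u)) := by
      unfold clamp
      fun_prop
    unfold WNval
    refine Measurable.const_mul (Finset.measurable_sum _ fun n _ => Measurable.mul_const ?_ _) _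
    exact Measurable.ite (measurableSet_le measurable_const hcl) measurable_const measurable_const
  unfold smoothDist
  have : Nonempty (Set.Icc (0:ℝ) 1) := ⟨⟨0, by simp⟩⟩
  refine ciSup_le fun t => ?_
  obtain ⟨t, ht0, ht1⟩ := t
  have hdiff : ∀ u ∈ Set.uIoc (0:ℝ) 1, ‖WNval μ X N (clamp (t + ε * u)) x - WNval μ X N t x‖
      ≤ (Bvar μ X N) ^ (-(1:ℝ)/2) * (2 * c) := by
    intro u hu
    rw [Set.uIoc_of_le zero_le_one] at hu
    obtain ⟨c1, c2⟩ := clamp_mem t ε u ht0 ht1 hε hu.1.le hu.2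
    exact hW _ _ c1 c2
  have hintgr : IntervalIntegrable (fun u : ℝ => WNval μ X N (clamp (t + ε * u)) x) volume 0 1 := by
    rw [intervalIntegrable_iff]
    refine Measure.integrableOn_of_bounded (M := |WNval μ X N t x| + (Bvar μ X N) ^ (-(1:ℝ)/2) * (2 * c))
      (by simp) (hmeas t).aestronglyMeasurable ?_
    refine (ae_restrict_mem measurableSet_uIoc).mono fun u hu => ?_
    have h1 := hdiff u hu
    rw [Real.norm_eq_abs] at h1 ⊢
    have h2 := abs_sub_abs_le_abs_sub (WNval μ X N (clamp (t + ε * u)) x) (WNval μ X N t x)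
    linarith
  have e : WNsmooth μ X N ε t x - WNval μ X N t x =
      ∫ u in (0:ℝ)..1, (WNval μ X N (clamp (t + ε * u)) x - WNval μ X N t x) := by
    rw [intervalIntegral.integral_sub hintgr (by simp)]
    simp [WNsmooth]
  show |WNsmooth μ X N ε t x - WNval μ X N t x| ≤ _
  rw [e]
  have := intervalIntegral.norm_integral_le_of_norm_le_const hdiff
  simpa using this

lemma lin_gap (b : ℕ → ℝ) (N m : ℕ) (hm : 1 ≤ m) (C : ℝ) (hC : 0 < C)
    (hgap : ∀ u v : ℕ, u < v → v < N → m ≤ v - u → C * (m : ℝ) ≤ b v - b u) :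
    ∀ d u : ℕ, m ≤ d → u + d < N → C * (d : ℝ) / 2 ≤ b (u + d) - b u := by
  intro d
  induction d using Nat.strong_induction_on with
  | _ d ih =>
    intro u hd hN
    by_cases h : d < 2 * m
    · have h1 := hgap u (u + d) (by omega) hN (by omega)
      have h2 : (d : ℝ) ≤ 2 * m := by exact_mod_cast h.le
      nlinarith
    · have h1 := hgap u (u + m) (by omega) (by omega) (by omega)
      have h2 := ih (d - m) (by omega) (u + m) (by omega) (by omega)
      have e : u + m + (d - m) = u + d := by omega
      rw [e, Nat.cast_sub hd] at h2
      have : 0 ≤ C * (m : ℝ) := by positivity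
      nlinarith

lemma card_le (b : ℕ → ℝ) (N m : ℕ) (hm : 1 ≤ m) (C : ℝ) (hC : 0 < C)
    (hgap : ∀ u v : ℕ, u < v → v < N → m ≤ v - u → C * (m : ℝ) ≤ b v - b u)
    (δ : ℝ) (hδ : 0 ≤ δ) (s : ℝ) :
    (((Finset.range N).filter (fun n => s < b n ∧ b n ≤ s + δ)).card : ℝ) ≤ m + 2 * δ / C + 1 := by
  set D := (Finset.range N).filter (fun n => s < b n ∧ b n ≤ s + δ) with hD
  have hq : 0 ≤ 2 * δ / C := by positivity
  by_cases hne : D.Nonempty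
  · set u := D.min' hne
    have hu : u ∈ D := D.min'_mem hne
    have hsub : D ⊆ Finset.Icc u (u + (m + ⌊2 * δ / C⌋₊)) := by
      intro v hv
      have huv : u ≤ v := D.min'_le v hv
      simp only [Finset.mem_Icc]
      refine ⟨huv, ?_⟩
      by_cases h : v - u < m
      · omega
      · have hu' := (Finset.mem_filter.1 hu).2
        have hv' := Finset.mem_filter.1 hv
        have hvN := Finset.mem_range.1 hv'.1
        have h1 := lin_gap b N m hm C hC hgap (v - u) u (by omega) (by omega)
        rw [Nat.add_sub_cancel' huv] at h1
        have h2 : ((v - u : ℕ) : ℝ) ≤ 2 * δ / C := by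
          rw [le_div_iff₀ hC]
          linarith [hv'.2.2, hu'.1]
        have h3 := Nat.le_floor h2
        omega
    have h1 := Finset.card_le_card hsub
    rw [Nat.card_Icc] at h1
    have h2 : D.card ≤ m + ⌊2 * δ / C⌋₊ + 1 := by omega
    have h3 : (D.card : ℝ) ≤ m + (⌊2 * δ / C⌋₊ : ℝ) + 1 := by exact_mod_cast h2
    have h4 := Nat.floor_le hq
    linarith
  · rw [Finset.not_nonempty_iff_eq_empty] at hne
    rw [hne]
    simp
    positivity

lemma Bpart_succ {M : Type*} [MeasurableSpace M] (μ : Measure M) (X : ℕ → M → ℝ) (N u : ℕ)  :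
    Bpart μ X N (u + 1) = Bpart μ X N u + ∑ j ∈ Finset.range N, sigmaCov μ X u j := by
  unfold Bpart
  rw [Finset.sum_range_succ]

/-- The main estimate for one `N`. -/
lemma one_N {M : Type*} [MeasurableSpace M] (μ : Measure M)
    (X : ℕ → M → ℝ) (hXmeas : ∀ n, Measurable (X n)) (K : ℝ) (hK : 0 ≤ K)
    (hmom : ∀ A : Finset ℕ, ∫⁻ x, ENNReal.ofReal ((∑ i ∈ A, X i x) ^ 4) ∂μ
      ≤ ENNReal.ofReal (K * (A.card : ℝ) ^ 2)) (N m : ℕ) (hm : 1 ≤ m) (C : ℝ) (hC : 0 < C)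
    (hgap : ∀ u v : ℕ, u < v → v < N → m ≤ v - u →
      C * (m : ℝ) ≤ Bpart μ X N v - Bpart μ X N u)
    (hB : 0 < Bvar μ X N) (hNB : C * N / 4 ≤ Bvar μ X N) (ε : ℝ) (hε1 : ε < 1)
    (hmε : m ≤ ε * Bvar μ X N) (lam : ℝ) (hlam : 0 < lam) :
    μ {x | lam ≤ smoothDist μ X N ε x} ≤ ENNReal.ofReal
      ((900 * K * 256 / lam ^ 4 * (4 * (4 / C + 2 * (2 + 2 / C)) * (2 * (2 + 2 / C)))) * ε) := by
  set B := Bvar μ X N with hBdef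
  have hm' : (1 : ℝ) ≤ m := by exact_mod_cast hm
  have hεB : 1 ≤ ε * B := hm'.trans hmε
  have hε : 0 < ε := by
    by_contra hcon
    push Not at hcon
    nlinarith
  set c2 := 2 + 2 / C with hc2
  have hc2p : 2 ≤ c2 := by
    have : 0 < 2 / C := by positivity
    linarith
  have hmm : 1 ≤ c2 * (ε * B) := by nlinarith
  obtain ⟨q, hq1, hq2⟩ := exists_nat_pow_near hmm (one_lt_two (α := ℝ))
  set p := q + 1 with hp
  have hp2 : (2:ℝ) ^ p ≤ 2 * (c2 * (ε * B)) := by rw [hp, pow_succ]; linarith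
  have hcard : ∀ s, ((Finset.range N).filter
      (fun n => s < Bpart μ X N n ∧ Bpart μ X N n ≤ s + ε * B)).card ≤ 2 ^ p := by
    intro s
    have h := card_le (Bpart μ X N) N m hm C hC hgap (ε * B) (by linarith) s
    have h1 : (m : ℝ) + 2 * (ε * B) / C + 1 ≤ c2 * (ε * B) := by
      have : c2 * (ε * B) = 2 * (ε * B) + 2 * (ε * B) / C := by rw [hc2]; ring
      linarith
    have h2 := h.trans (h1.trans hq2.le)
    exact_mod_cast h2
  have hsB : 0 < Real.sqrt B := Real.sqrt_pos.2 hB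
  set c := lam * Real.sqrt B / 4 with hc
  have hcp : 0 < c := by positivity
  obtain ⟨E, hE1, hE2⟩ := core_max μ X hXmeas K hK hmom N (Bpart μ X N) p (ε * B) hcard c hcp
  have hsub : {x | lam ≤ smoothDist μ X N ε x} ⊆ E := by
    intro x hx
    by_contra hxE
    have h := smooth_le μ X N ε hε hB x c (hE2 x hxE)
    have e : (Bvar μ X N) ^ (-(1:ℝ)/2) * (2 * c) = lam / 2 := by
      rw [neg_div, Real.rpow_neg hB.le, ← Real.sqrt_eq_rpow, hc]
      field_simp
      norm_num
    rw [e] at h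
    have : lam ≤ smoothDist μ X N ε x := hx
    linarith
  refine (measure_mono hsub).trans (hE1.trans (ENNReal.ofReal_le_ofReal ?_))
  have hc4 : c ^ 4 = lam ^ 4 * B ^ 2 / 256 := by
    have : Real.sqrt B ^ 2 = B := Real.sq_sqrt hB.le
    calc c ^ 4 = lam ^ 4 * (Real.sqrt B ^ 2) ^ 2 / 256 := by rw [hc]; ring
      _ = _ := by rw [this]
  have h2p : (0:ℝ) < 2 ^ p := by positivity
  have hdiv : ((N / 2 ^ p + 1 : ℕ) : ℝ) * 2 ^ p ≤ N + 2 ^ p := by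
    have : (N / 2 ^ p) * 2 ^ p ≤ N := Nat.div_mul_le_self _ _
    have h : ((N / 2 ^ p : ℕ) : ℝ) * 2 ^ p ≤ N := by exact_mod_cast this
    push_cast at h ⊢
    linarith
  have hN : (N : ℝ) ≤ 4 / C * B := by
    rw [div_mul_eq_mul_div, le_div_iff₀ hC]
    linarith
  have h3 : ((N / 2 ^ p + 1 : ℕ) : ℝ) * 4 ^ (p + 1) ≤ 4 * (4 / C + 2 * c2) * (2 * c2) * ε * B ^ 2 := by
    have e : (4:ℝ) ^ (p + 1) = 4 * (2 ^ p * 2 ^ p) := by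
      rw [pow_succ, ← mul_pow]; norm_num; ring
    rw [e]
    have a1 : (N : ℝ) + 2 ^ p ≤ (4 / C + 2 * c2) * B := by
      have : c2 * (ε * B) ≤ c2 * B := by
        refine mul_le_mul_of_nonneg_left ?_ (by linarith)
        nlinarith
      linarith
    calc _ = 4 * ((((N / 2 ^ p + 1 : ℕ) : ℝ) * 2 ^ p) * 2 ^ p) := by ring
      _ ≤ 4 * (((4 / C + 2 * c2) * B) * (2 * (c2 * (ε * B)))) := by
        have := mul_le_mul (hdiv.trans a1) hp2 h2p.le (by positivity)
        linarith
      _ = _ := by ring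
  rw [hc4]
  calc _ = (900 * K * 256 / (lam ^ 4 * B ^ 2)) * (((N / 2 ^ p + 1 : ℕ) : ℝ) * 4 ^ (p + 1)) := by
        field_simp
    _ ≤ (900 * K * 256 / (lam ^ 4 * B ^ 2)) * (4 * (4 / C + 2 * c2) * (2 * c2) * ε * B ^ 2) :=
        mul_le_mul_of_nonneg_left h3 (by positivity)
    _ = _ := by field_simp

/-- equation (2.14) in the proof of Proposition 2.7: under (i) the functional
correlation bound with nonincreasing rate `R`, `∑ n R(n) < ∞`, `∑ √R(n) < ∞`; (ii)
`B_N⁻¹ = o(N^{−2/3})`; and (iii) the variance growth condition with `M_N = o(B_N)`, for every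
`λ > 0` there is `C_λ > 0` such that for all large `N` and all `ε ∈ (1/K_N, 1)`,
`μ(‖(W_N)_ε − W_N‖_∞ ≥ λ) ≤ C_λ (M_N/B_N + ε)` with `K_N = ⌊B_N/M_N⌋`; in particular
`limsup_{ε→0} limsup_{N→∞} μ(‖(W_N)_ε − W_N‖_∞ ≥ λ) = 0`. -/
theorem smoothing_estimate
    {M : Type} [MeasurableSpace M] (μ : Measure M) [IsProbabilityMeasure μ]
    (X : ℕ → M → ℝ) (hXmeas : ∀ n, Measurable (X n))
    (L : ℝ) (hL : 0 ≤ L) (hbdd : ∀ n, ∀ x, |X n x| ≤ L) (hcent : ∀ n, ∫ x, X n x ∂μ = 0)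
    (Cs : ℝ) (hCs : 0 ≤ Cs) (R : ℕ → ℝ) (hRpos : ∀ n, 0 ≤ R n) (hRanti : Antitone R)
    (hfcb : ∀ N : ℕ, FCB μ X N L Cs R)
    (hR1 : Summable fun n : ℕ => (n : ℝ) * R n)
    (hR2 : Summable fun n : ℕ => Real.sqrt (R n))
    (hBN : Filter.Tendsto (fun N : ℕ => ((N : ℝ)) ^ ((2:ℝ)/3) / Bvar μ X N)
      Filter.atTop (nhds 0))
    (N₀ : ℕ) (MN : ℕ → ℕ) (hMN1 : ∀ N, 1 ≤ MN N)
    (hMNo : Filter.Tendsto (fun N : ℕ => (MN N : ℝ) / Bvar μ X N) Filter.atTop (nhds 0))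
    (hBpos : ∀ N, N₀ ≤ N → 0 < Bvar μ X N)
    (C₁gap : ℝ) (hC₁ : 0 < C₁gap)
    (hgap : ∀ N, N₀ ≤ N → ∀ u v : ℕ, u < v → v < N → MN N ≤ v - u →
      C₁gap * (MN N : ℝ) ≤ Bpart μ X N v - Bpart μ X N u) :
    (∀ lam : ℝ, 0 < lam →
      ∃ Clam : ℝ, 0 < Clam ∧ ∃ N₁ : ℕ,
        ∀ N, N₁ ≤ N → ∀ ε : ℝ,
          ((Nat.floor (Bvar μ X N / MN N) : ℝ))⁻¹ < ε → ε < 1 →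
          μ {x | lam ≤ smoothDist μ X N ε x}
            ≤ ENNReal.ofReal (Clam * ((MN N : ℝ) / Bvar μ X N + ε))) ∧
    (∀ lam : ℝ, 0 < lam →
      Filter.limsup
        (fun ε : ℝ => Filter.limsup (fun N : ℕ => μ {x | lam ≤ smoothDist μ X N ε x})
          Filter.atTop)
        (nhdsWithin 0 (Set.Ioi 0)) = 0) := by
  have part1 : ∀ lam : ℝ, 0 < lam →
      ∃ Clam : ℝ, 0 < Clam ∧ ∃ N₁ : ℕ,
        ∀ N, N₁ ≤ N → ∀ ε : ℝ,
          ((Nat.floor (Bvar μ X N / MN N) : ℝ))⁻¹ < ε → ε < 1 →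
          μ {x | lam ≤ smoothDist μ X N ε x}
            ≤ ENNReal.ofReal (Clam * ((MN N : ℝ) / Bvar μ X N + ε)) := by
    intro lam hlam
    set H := DD L Cs * (2 * ∑' n, hw R n) with hH
    have hH0 : 0 ≤ H := mul_nonneg (DD_pos L Cs hCs).le
      (mul_nonneg (by norm_num) (tsum_nonneg (hw_nonneg R hRpos)))
    set K := 24 * (H ^ 2 + 3 * H) with hKdef
    have hK : 0 ≤ K := by positivity
    have hmom : ∀ A : Finset ℕ, ∫⁻ x, ENNReal.ofReal ((∑ i ∈ A, X i x) ^ 4) ∂μ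
        ≤ ENNReal.ofReal (K * (A.card : ℝ) ^ 2) := by
      intro A
      have hm : Measurable (fun x => (∑ i ∈ A, X i x) ^ 4) :=
        (Finset.measurable_sum _ fun i _ => hXmeas i).pow_const 4
      have hi : Integrable (fun x => (∑ i ∈ A, X i x) ^ 4) μ := by
        refine integrable_of_bdd μ _ hm ((∑ _i ∈ A, L) ^ 4) fun x => ?_
        rw [abs_pow]
        refine pow_le_pow_left₀ (abs_nonneg _) ?_ 4
        exact (Finset.abs_sum_le_sum_abs _ _).trans (Finset.sum_le_sum fun i _ => hbdd i x)
      rw [← ofReal_integral_eq_lintegral_ofReal hi (Eventually.of_forall fun x => by positivity)]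
      exact ENNReal.ofReal_le_ofReal
        (four_moment μ X hXmeas L hL hbdd hcent Cs hCs R hRpos hfcb hR1 A)
    have hrow : ∀ N u, |∑ j ∈ Finset.range N, sigmaCov μ X u j| ≤ H := by
      intro N u
      refine (Finset.abs_sum_le_sum_abs _ _).trans ?_
      refine (Finset.sum_le_sum fun j _ =>
        cov_bound μ X L hL hbdd hcent Cs hCs R hRpos hfcb u j).trans ?_
      rw [← Finset.mul_sum]
      exact mul_le_mul_of_nonneg_left (sum_rr_le R hRpos hR1 _ u) (DD_pos L Cs hCs).le
    have hBup : ∀ N : ℕ, Bvar μ X N ≤ N * H := by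
      intro N
      unfold Bvar Bpart
      refine (Finset.sum_le_card_nsmul _ _ H fun u _ => (le_abs_self _).trans (hrow N u)).trans ?_
      simp
    set A0 := 900 * K * 256 / lam ^ 4 * (4 * (4 / C₁gap + 2 * (2 + 2 / C₁gap)) *
      (2 * (2 + 2 / C₁gap))) with hA0
    have hA0n : 0 ≤ A0 := by positivity
    have hη : (0:ℝ) < 1 / (2 * (H + 1)) := by positivity
    obtain ⟨N₂, hN₂⟩ := eventually_atTop.1 (hMNo.eventually (gt_mem_nhds hη))
    obtain ⟨N₃, hN₃⟩ := exists_nat_ge (2 + 4 * H / C₁gap)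
    refine ⟨A0 + 1, by linarith, max N₀ (max N₂ (max N₃ 2)), ?_⟩
    intro N hN ε hεK hε1
    have hNN₀ : N₀ ≤ N := (le_max_left _ _).trans hN
    have hNr := (le_max_right _ _).trans hN
    have hNN₂ : N₂ ≤ N := (le_max_left _ _).trans hNr
    have hNr' := (le_max_right _ _).trans hNr
    have hNN₃ : N₃ ≤ N := (le_max_left _ _).trans hNr'
    have hN2 : 2 ≤ N := (le_max_right _ _).trans hNr'
    have hB := hBpos N hNN₀
    have hMr : (1:ℝ) ≤ MN N := by exact_mod_cast hMN1 N
    have hMsmall : (MN N : ℝ) / Bvar μ X N < 1 / (2 * (H + 1)) := hN₂ N hNN₂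
    rw [div_lt_div_iff₀ hB (by positivity)] at hMsmall
    have hMB : (MN N : ℝ) ≤ Bvar μ X N := by nlinarith
    have hMN2 : 2 * (MN N : ℝ) ≤ N := by
      have h1 := hBup N
      have h2 : (0:ℝ) ≤ N := Nat.cast_nonneg _
      have h3 : (2 * (MN N : ℝ)) * (H + 1) ≤ N * (H + 1) := by nlinarith
      exact le_of_mul_le_mul_right h3 (by linarith)
    have hMN2' : 2 * MN N ≤ N := by exact_mod_cast hMN2
    have hM1 := hMN1 N
    have hNB : C₁gap * N / 4 ≤ Bvar μ X N := by
      have h1 := lin_gap (Bpart μ X N) N (MN N) hM1 C₁gap hC₁ (hgap N hNN₀) (N - 1) 0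
        (by omega) (by omega)
      have h2 := Bpart_succ μ X N (N - 1)
      have e : N - 1 + 1 = N := by omega
      rw [e] at h2
      have h3 := (abs_le.1 (hrow N (N - 1))).1
      have h4 : Bpart μ X N 0 = 0 := by simp [Bpart]
      rw [zero_add, h4, Nat.cast_sub (by omega)] at h1
      push_cast at h1
      have h5 : (2 + 4 * H / C₁gap) ≤ (N : ℝ) := hN₃.trans (by exact_mod_cast hNN₃)
      have h6 : 4 * H ≤ C₁gap * (N - 2) := by
        have : 4 * H / C₁gap ≤ N - 2 := by linarith
        rw [div_le_iff₀ hC₁] at this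
        linarith
      have h7 : Bvar μ X N = Bpart μ X N N := rfl
      rw [h7, h2]
      nlinarith
    have hmε : (MN N : ℝ) ≤ ε * Bvar μ X N := by
      have hM0 : (0:ℝ) < MN N := by linarith
      have h1 : 1 ≤ Bvar μ X N / MN N := by rw [le_div_iff₀ hM0]; linarith
      have hf1 : 1 ≤ ⌊Bvar μ X N / MN N⌋₊ := Nat.le_floor (by simpa using h1)
      have hf2 : (⌊Bvar μ X N / MN N⌋₊ : ℝ) ≤ Bvar μ X N / MN N := Nat.floor_le (by linarith)
      have hf3 : (1:ℝ) ≤ (⌊Bvar μ X N / MN N⌋₊ : ℝ) := by exact_mod_cast hf1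
      have h2 := inv_anti₀ (by linarith) hf2
      have h3 := h2.trans hεK.le
      rw [inv_div, div_le_iff₀ hB] at h3
      exact h3
    refine (one_N μ X hXmeas K hK hmom N (MN N) hM1 C₁gap hC₁ (hgap N hNN₀) hB hNB ε hε1 hmε
      lam hlam).trans (ENNReal.ofReal_le_ofReal ?_)
    have hε : 0 < ε := by
      by_contra hcon
      push Not at hcon
      nlinarith
    have hq : 0 ≤ (MN N : ℝ) / Bvar μ X N := by positivity
    rw [← hA0]
    nlinarith [mul_nonneg hA0n hq]
  refine ⟨part1, ?_⟩
  intro lam hlam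
  obtain ⟨C, hC, N₁, hbound⟩ := part1 lam hlam
  have hlim : ∀ ε : ℝ, 0 < ε → ε < 1 →
      Filter.limsup (fun N : ℕ => μ {x | lam ≤ smoothDist μ X N ε x}) Filter.atTop
        ≤ ENNReal.ofReal (C * (2 * ε)) := by
    intro ε hε hε1
    refine Filter.limsup_le_of_le (by isBoundedDefault) ?_
    have hε2 : 0 < ε / 2 := by positivity
    filter_upwards [eventually_ge_atTop N₁, eventually_ge_atTop N₀,
      hMNo.eventually (gt_mem_nhds hε2)] with N hN hN0 hsm
    have hB := hBpos N hN0
    have hM0 : (0:ℝ) < MN N := by exact_mod_cast hMN1 N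
    refine (hbound N hN ε ?_ hε1).trans (ENNReal.ofReal_le_ofReal ?_)
    · have h1 : 2 / ε < Bvar μ X N / MN N := by
        rw [div_lt_div_iff₀ hB two_pos] at hsm
        rw [div_lt_div_iff₀ hε hM0]
        linarith
      have h2 := Nat.lt_floor_add_one (Bvar μ X N / MN N)
      have h3 : 2 / ε = 1 / ε + 1 / ε := by ring
      have h4 : 1 < 1 / ε := by rw [lt_div_iff₀ hε]; linarith
      have h5 : 1 / ε < (⌊Bvar μ X N / MN N⌋₊ : ℝ) := by linarith
      rw [one_div] at h5
      exact inv_lt_of_inv_lt₀ hε h5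
    · have : (MN N : ℝ) / Bvar μ X N + ε ≤ 2 * ε := by linarith
      exact mul_le_mul_of_nonneg_left this hC.le
  have htend : Tendsto (fun ε : ℝ => ENNReal.ofReal (C * (2 * ε))) (nhdsWithin 0 (Set.Ioi 0))
      (nhds 0) := by
    have hc : Continuous (fun ε : ℝ => ENNReal.ofReal (C * (2 * ε))) :=
      ENNReal.continuous_ofReal.comp (by fun_prop)
    have := hc.tendsto 0
    simp only [mul_zero, ENNReal.ofReal_zero] at this
    exact this.mono_left nhdsWithin_le_nhds
  refine le_antisymm ?_ zero_le
  rw [← htend.limsup_eq]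
  refine Filter.limsup_le_limsup ?_ (by isBoundedDefault) (by isBoundedDefault)
  have h1 : Set.Ioo (0:ℝ) 1 ∈ nhdsWithin (0:ℝ) (Set.Ioi 0) := Ioo_mem_nhdsGT one_pos
  filter_upwards [h1] with ε hε
  exact hlim ε hε.1 hε.2

end
end

section
/- For every γ > 1, the Pikovsky map T with parameter γ preserves the normalized Lebesgue measure λ on [−1,1]: λ(T^{−1}A) = λ(A) for every Borel set A ⊂ [−1,1]. -/
set_option autoImplicit false

open MeasureTheory Filter
open scoped ENNReal NNReal Topology

noncomputable section

/-- `T` is the Pikovsky map on `[-1,1]` with parameter `γ`: implicitly defined by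
`x = (1+T(x))^γ/(2γ)` on `(0, 1/(2γ)]`, `x = T(x) + (1−T(x))^γ/(2γ)` on `[1/(2γ), 1]`, and
the odd symmetry `T(x) = −T(−x)` on `[-1, 0)`. -/
def IsPikovsky (γ : ℝ) (T : ℝ → ℝ) : Prop :=
  (∀ x ∈ Set.Icc (-1:ℝ) 1, T x ∈ Set.Icc (-1:ℝ) 1) ∧
  (∀ x ∈ Set.Ioc (0:ℝ) (1/(2*γ)),
      T x ∈ Set.Icc (-1:ℝ) 0 ∧ x = (1 + T x) ^ γ / (2*γ)) ∧
  (∀ x ∈ Set.Icc (1/(2*γ)) 1,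
      T x ∈ Set.Icc (0:ℝ) 1 ∧ x = T x + (1 - T x) ^ γ / (2*γ)) ∧
  (∀ x ∈ Set.Ico (-1:ℝ) 0, T x = - T (-x))

/-- Lebesgue measure on `[-1,1]` normalized to a probability measure. -/
def pikMeasure : Measure ℝ := (2⁻¹ : ℝ≥0∞) • (volume.restrict (Set.Icc (-1:ℝ) 1))

instance : IsProbabilityMeasure pikMeasure := by
  constructor
  rw [pikMeasure, Measure.smul_apply, Measure.restrict_apply MeasurableSet.univ,
    Set.univ_inter, Real.volume_Icc, show ((1:ℝ) - -1 = 2) by norm_num,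
    ENNReal.ofReal_ofNat, smul_eq_mul]
  exact ENNReal.inv_mul_cancel (by norm_num) (by norm_num)

/-- The sup-norm of `f` on `[-1,1]`. -/
def supIcc (f : ℝ → ℝ) : ℝ := ⨆ x : Set.Icc (-1:ℝ) 1, |f (x:ℝ)|

/-- The Lipschitz seminorm of `f` on `[-1,1]`. -/
def lipIcc (f : ℝ → ℝ) : ℝ :=
  ⨆ p : (Set.Icc (-1:ℝ) 1) × (Set.Icc (-1:ℝ) 1),
    |f (p.1:ℝ) - f (p.2:ℝ)| / |(p.1:ℝ) - (p.2:ℝ)|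

/-- `‖f‖_Lip = ‖f‖_∞ + Lip(f)` on `[-1,1]`. -/
def nLipIcc (f : ℝ → ℝ) : ℝ := supIcc f + lipIcc f

/-- The inverse of the right branches of the Pikovsky map. -/
def pikG (γ y : ℝ) : ℝ := if y ≤ 0 then (1 + y) ^ γ / (2*γ) else y + (1 - y) ^ γ / (2*γ)

theorem pikG_left {γ y : ℝ} (h : y ≤ 0) : pikG γ y = (1 + y) ^ γ / (2*γ) := if_pos h

theorem pikG_right {γ y : ℝ} (h : 0 ≤ y) : pikG γ y = y + (1 - y) ^ γ / (2*γ) := by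
  rcases h.eq_or_lt with rfl | h
  · simp [pikG]
  · exact if_neg (not_le.2 h)

theorem pikG_strict {γ : ℝ} (hγ : 1 < γ) : StrictMonoOn (pikG γ) (Set.Icc (-1) 1) := by
  have hγ0 : 0 < 2 * γ := by linarith
  have h1 : StrictMonoOn (pikG γ) (Set.Icc (-1) 0) := by
    intro a ha b hb hab
    rw [pikG_left ha.2, pikG_left hb.2]
    apply div_lt_div_of_pos_right _ hγ0
    exact Real.rpow_lt_rpow (by linarith [ha.1]) (by linarith) (by linarith)
  have h2 : StrictMonoOn (pikG γ) (Set.Icc 0 1) := by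
    intro a ha b hb hab
    rw [pikG_right ha.1, pikG_right hb.1]
    have hu : 0 < 1 - a := by linarith [hb.2]
    have hv : 0 ≤ 1 - b := by linarith [hb.2]
    have hB := one_add_mul_self_le_rpow_one_add (s := (1 - b) / (1 - a) - 1)
      (by have := div_nonneg hv hu.le; linarith) hγ.le
    rw [add_sub_cancel, Real.div_rpow hv hu.le, le_div_iff₀ (Real.rpow_pos_of_pos hu γ)] at hB
    have hle : (1 - a) ^ γ ≤ 1 - a := by
      simpa using Real.rpow_le_rpow_of_exponent_ge hu (by linarith [ha.1]) hγ.le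
    have e : (1 - b) / (1 - a) - 1 = - ((b - a) / (1 - a)) := by field_simp; ring
    rw [e] at hB
    have hk : (b - a) / (1 - a) * (1 - a) ^ γ ≤ b - a := by
      calc _ ≤ (b - a) / (1 - a) * (1 - a) := by
            apply mul_le_mul_of_nonneg_left hle (div_nonneg (by linarith) hu.le)
        _ = b - a := by field_simp
    have : (1 - a) ^ γ - (1 - b) ^ γ ≤ γ * (b - a) := by nlinarith
    have : (1 - a) ^ γ / (2*γ) - (1 - b) ^ γ / (2*γ) ≤ (b - a) / 2 := by
      rw [← sub_div, div_le_iff₀ hγ0]; linarith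
    linarith
  have := h1.union h2 (c := 0) ⟨by simp, fun x hx => hx.2⟩ ⟨by simp, fun x hx => hx.1⟩
  rwa [Set.Icc_union_Icc_eq_Icc (by norm_num) (by norm_num)] at this

theorem pikG_sub {γ y : ℝ} : pikG γ y - pikG γ (-y) = y := by
  rcases le_total 0 y with h | h
  · rw [pikG_right h, pikG_left (by linarith)]; simp [← sub_eq_add_neg]
  · rw [pikG_left h, pikG_right (by linarith)]; simp

theorem pikG_neg_one {γ : ℝ} (hγ : 1 < γ) : pikG γ (-1) = 0 := by
  rw [pikG_left (by norm_num)]; simp [Real.zero_rpow (by linarith : γ ≠ 0)]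

theorem pikG_one {γ : ℝ} (hγ : 1 < γ) : pikG γ 1 = 1 := by
  have := pikG_sub (γ := γ) (y := 1)
  rw [pikG_neg_one hγ] at this; linarith

theorem pikG_mem {γ y : ℝ} (hγ : 1 < γ) (hy : y ∈ Set.Icc (-1:ℝ) 1) :
    pikG γ y ∈ Set.Icc (0:ℝ) 1 := by
  have m := (pikG_strict hγ).monotoneOn
  constructor
  · rw [← pikG_neg_one hγ]; exact m (by simp) hy hy.1
  · rw [← pikG_one hγ]; exact m hy (by simp) hy.2

theorem pik_inv {γ : ℝ} {T : ℝ → ℝ} (hT : IsPikovsky γ T) {x : ℝ}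
    (hx : x ∈ Set.Ioc (0:ℝ) 1) : T x ∈ Set.Icc (-1:ℝ) 1 ∧ pikG γ (T x) = x := by
  obtain ⟨h0, h1, h2, -⟩ := hT
  refine ⟨h0 x ⟨by linarith [hx.1], hx.2⟩, ?_⟩
  rcases le_total x (1/(2*γ)) with h | h
  · obtain ⟨a, b⟩ := h1 x ⟨hx.1, h⟩
    rw [pikG_left a.2, ← b]
  · obtain ⟨a, b⟩ := h2 x ⟨h, hx.2⟩
    rw [pikG_right a.1, ← b]

theorem pik_le_iff {γ : ℝ} (hγ : 1 < γ) {T : ℝ → ℝ} (hT : IsPikovsky γ T) {x a : ℝ}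
    (hx : x ∈ Set.Ioc (0:ℝ) 1) (ha : a ∈ Set.Icc (-1:ℝ) 1) : T x ≤ a ↔ x ≤ pikG γ a := by
  obtain ⟨h1, h2⟩ := pik_inv hT hx
  rw [← (pikG_strict hγ).le_iff_le h1 ha, h2]

theorem pik_ge_iff {γ : ℝ} (hγ : 1 < γ) {T : ℝ → ℝ} (hT : IsPikovsky γ T) {x a : ℝ}
    (hx : x ∈ Set.Ioc (0:ℝ) 1) (ha : a ∈ Set.Icc (-1:ℝ) 1) : a ≤ T x ↔ pikG γ a ≤ x := by
  obtain ⟨h1, h2⟩ := pik_inv hT hx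
  rw [← (pikG_strict hγ).le_iff_le ha h1, h2]

theorem pik_monoOn {γ : ℝ} (hγ : 1 < γ) {T : ℝ → ℝ} (hT : IsPikovsky γ T) :
    MonotoneOn T (Set.Ioc 0 1) := by
  intro x hx y hy hxy
  rw [pik_le_iff hγ hT hx (pik_inv hT hy).1, (pik_inv hT hy).2]
  exact hxy

theorem pik_aemeasurable {γ : ℝ} (hγ : 1 < γ) {T : ℝ → ℝ} (hT : IsPikovsky γ T) :
    AEMeasurable T (volume.restrict (Set.Icc (-1:ℝ) 1)) := by
  have m := pik_monoOn hγ hT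
  have h1 : AEMeasurable T (volume.restrict (Set.Ioc (0:ℝ) 1)) :=
    aemeasurable_restrict_of_monotoneOn measurableSet_Ioc m
  have h2 : AEMeasurable T (volume.restrict (Set.Ico (-1:ℝ) 0)) := by
    apply aemeasurable_restrict_of_monotoneOn measurableSet_Ico
    intro x hx y hy hxy
    rw [hT.2.2.2 x hx, hT.2.2.2 y hy]
    apply neg_le_neg
    exact m ⟨by linarith [hy.2], by linarith [hy.1]⟩ ⟨by linarith [hx.2], by linarith [hx.1]⟩
      (by linarith)
  have h3 : AEMeasurable T (volume.restrict ({0} : Set ℝ)) := by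
    rw [Measure.restrict_eq_zero.2 (by simp)]; exact aemeasurable_zero_measure
  have h := aemeasurable_union_iff.2 ⟨aemeasurable_union_iff.2 ⟨h1, h2⟩, h3⟩
  apply h.mono_set
  intro x hx
  rcases lt_trichotomy x 0 with h | h | h
  · exact Or.inl (Or.inr ⟨hx.1, h⟩)
  · exact Or.inr h
  · exact Or.inl (Or.inl ⟨h, hx.2⟩)

theorem pik_Iic {γ : ℝ} (hγ : 1 < γ) {T : ℝ → ℝ} (hT : IsPikovsky γ T) (a : ℝ) :
    volume (T ⁻¹' Set.Iic a ∩ Set.Icc (-1:ℝ) 1) = volume (Set.Iic a ∩ Set.Icc (-1:ℝ) 1) := by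
  rcases lt_or_ge a (-1) with h | h
  · rw [show T ⁻¹' Set.Iic a ∩ Set.Icc (-1:ℝ) 1 = ∅ from ?_,
      show Set.Iic a ∩ Set.Icc (-1:ℝ) 1 = ∅ from ?_]
    · ext x; simp; intros; linarith
    · ext x
      simp only [Set.mem_inter_iff, Set.mem_preimage, Set.mem_Iic, Set.mem_empty_iff_false,
        iff_false, not_and]
      intro h1 h2
      linarith [(hT.1 x h2).1]
  rcases lt_or_ge 1 a with h' | h'
  · congr 1
    ext x
    simp only [Set.mem_inter_iff, Set.mem_preimage, Set.mem_Iic, and_congr_left_iff]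
    intro hx
    exact iff_of_true (by linarith [(hT.1 x hx).2]) (by linarith [hx.2])
  have ha : a ∈ Set.Icc (-1:ℝ) 1 := ⟨h, h'⟩
  have hna : -a ∈ Set.Icc (-1:ℝ) 1 := ⟨by linarith, by linarith⟩
  have g1 := pikG_mem hγ ha
  have g2 := pikG_mem hγ hna
  have key : (T ⁻¹' Set.Iic a ∩ Set.Icc (-1:ℝ) 1 : Set ℝ) =ᵐ[volume]
      (Set.Ioc 0 (pikG γ a) ∪ Set.Icc (-1) (-pikG γ (-a)) : Set ℝ) := by
    have hne : ∀ᵐ x : ℝ, x ≠ 0 := by simp [ae_iff]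
    apply Filter.eventuallyEq_set.2
    filter_upwards [hne] with x hx
    simp only [Set.mem_inter_iff, Set.mem_preimage, Set.mem_Iic, Set.mem_union, Set.mem_Ioc,
      Set.mem_Icc]
    rcases lt_or_gt_of_ne hx with hx | hx
    · by_cases hx1 : -1 ≤ x
      · rw [hT.2.2.2 x ⟨hx1, hx⟩, neg_le,
          pik_ge_iff hγ hT ⟨by linarith, by linarith⟩ hna, le_neg]
        constructor
        · rintro ⟨p, -⟩; exact Or.inr ⟨hx1, p⟩
        · rintro (p | p)
          · linarith [p.1]
          · exact ⟨p.2, hx1, by linarith⟩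
      · constructor
        · rintro ⟨-, p, -⟩; exact absurd p hx1
        · rintro (p | p)
          · linarith [p.1]
          · exact absurd p.1 hx1
    · by_cases hx1 : x ≤ 1
      · rw [pik_le_iff hγ hT ⟨hx, hx1⟩ ha]
        constructor
        · rintro ⟨p, -⟩; exact Or.inl ⟨hx, p⟩
        · rintro (p | p)
          · exact ⟨p.2, by linarith, hx1⟩
          · linarith [p.2, g2.1]
      · constructor
        · rintro ⟨-, -, p⟩; exact absurd p hx1
        · rintro (p | p)
          · exact absurd (p.2.trans g1.2) hx1
          · linarith [p.2, g2.1]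
  rw [measure_congr key, measure_union _ measurableSet_Icc, Real.volume_Ioc, Real.volume_Icc,
    ← ENNReal.ofReal_add (by linarith [g1.1]) (by linarith [g2.2]),
    show Set.Iic a ∩ Set.Icc (-1:ℝ) 1 = Set.Icc (-1) a from ?_, Real.volume_Icc]
  · congr 1
    linarith [pikG_sub (γ := γ) (y := a)]
  · ext x
    simp only [Set.mem_inter_iff, Set.mem_Iic, Set.mem_Icc]
    constructor
    · rintro ⟨p, q, -⟩; exact ⟨q, p⟩
    · rintro ⟨p, q⟩; exact ⟨q, p, q.trans h'⟩
  · rw [Set.disjoint_left]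
    rintro x p q
    linarith [p.1, q.2, g2.1]

/-- for every `γ > 1`, the Pikovsky map with parameter `γ` preserves the
normalized Lebesgue measure `λ` on `[-1,1]`: `λ(T⁻¹A) = λ(A)` for every Borel set `A`. -/
theorem pikovsky_measure_preserving (γ : ℝ) (hγ : 1 < γ) (T : ℝ → ℝ)
    (hT : IsPikovsky γ T) :
    ∀ A : Set ℝ, MeasurableSet A → pikMeasure (T ⁻¹' A) = pikMeasure A := by
  intro A hA
  have hm := pik_aemeasurable hγ hT
  have e : (volume.restrict (Set.Icc (-1:ℝ) 1)).map T = volume.restrict (Set.Icc (-1:ℝ) 1) := by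
    have : IsFiniteMeasure ((volume.restrict (Set.Icc (-1:ℝ) 1)).map T) :=
      Measure.isFiniteMeasure_map _ _
    apply Measure.ext_of_Iic
    intro a
    rw [Measure.map_apply_of_aemeasurable hm measurableSet_Iic,
      Measure.restrict_apply' measurableSet_Icc, Measure.restrict_apply' measurableSet_Icc]
    exact pik_Iic hγ hT a
  have := congrArg (fun μ : Measure ℝ => μ A) e
  simp only [Measure.map_apply_of_aemeasurable hm hA] at this
  rw [pikMeasure, Measure.smul_apply, Measure.smul_apply, this]

end
end

section
/- Let γ > 1 and let T be the Pikovsky map with parameter γ. There exist constants Λ > 1 and C_γ > 0, depending only on γ, such that for all n ≥ 1 and all admissible tuples (ℓ₀,…,ℓ_p): (a) λ(C_n(ℓ₀)) ≤ C_γ ℓ₀^{−γ/(γ−1)} for p = 0; (b) for p ≥ 1, λ(C_n(ℓ₀,…,ℓ_p)) ≤ min{Λ^{−1}, C_γ ℓ₀^{−γ/(γ−1)}} · ∏_{j=0}^{p−1} min{Λ^{−1}, C_γ(ℓ_{j+1}−ℓ_j)^{−γ/(γ−1)}}; (c) for all p ≥ 0, λ(C_n(ℓ₀,…,ℓ_p))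 ≤ C_γ n^{−γ/(γ−1)}. -/
set_option autoImplicit false

open MeasureTheory Filter
open scoped ENNReal NNReal Topology

noncomputable section

/-- `Δ_n^-`: the sets `Δ₀^- = T⁻¹(M₊) ∩ M₋` and `Δ_n^- = T⁻¹(Δ_{n-1}^-) ∩ M₋`,
where `M₋ = (-1,0)` and `M₊ = (0,1)`. -/
def DeltaM (T : ℝ → ℝ) : ℕ → Set ℝ
  | 0 => T ⁻¹' (Set.Ioo (0:ℝ) 1) ∩ Set.Ioo (-1:ℝ) 0
  | n+1 => T ⁻¹' (DeltaM T n) ∩ Set.Ioo (-1:ℝ) 0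

/-- `Δ_n^+`: the sets `Δ₀^+ = T⁻¹(M₋) ∩ M₊` and `Δ_n^+ = T⁻¹(Δ_{n-1}^+) ∩ M₊`. -/
def DeltaP (T : ℝ → ℝ) : ℕ → Set ℝ
  | 0 => T ⁻¹' (Set.Ioo (-1:ℝ) 0) ∩ Set.Ioo (0:ℝ) 1
  | n+1 => T ⁻¹' (DeltaP T n) ∩ Set.Ioo (0:ℝ) 1

/-- `δ_n^- = T⁻¹(Δ_{n-1}^+) ∩ Δ₀^-` (for `n ≥ 1`). -/
def deltaMs (T : ℝ → ℝ) (n : ℕ) : Set ℝ := T ⁻¹' (DeltaP T (n-1)) ∩ DeltaM T 0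

/-- `δ_n^+ = T⁻¹(Δ_{n-1}^-) ∩ Δ₀^+` (for `n ≥ 1`). -/
def deltaPs (T : ℝ → ℝ) (n : ℕ) : Set ℝ := T ⁻¹' (DeltaM T (n-1)) ∩ DeltaP T 0

/-- `δ_n = δ_n^- ∪ δ_n^+`. -/
def smallDelta (T : ℝ → ℝ) (n : ℕ) : Set ℝ := deltaMs T n ∪ deltaPs T n

/-- `Δ_n = Δ_n^- ∪ Δ_n^+`. -/
def bigDelta (T : ℝ → ℝ) (n : ℕ) : Set ℝ := DeltaM T n ∪ DeltaP T n

/-- The base `Y = Δ₀^- ∪ Δ₀^+` of the first-return tower. -/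
def Yset (T : ℝ → ℝ) : Set ℝ := DeltaM T 0 ∪ DeltaP T 0

/-- Lebesgue measure on `Y` normalized to a probability measure. -/
def mY (T : ℝ → ℝ) : Measure ℝ := (volume (Yset T))⁻¹ • volume.restrict (Yset T)

/-- The first return time to `Y`: `τ(x) = inf {n ≥ 1 : Tⁿ(x) ∈ Y}`. -/
def tauY (T : ℝ → ℝ) (x : ℝ) : ℕ := sInf {n : ℕ | 1 ≤ n ∧ T^[n] x ∈ Yset T}

/-- The cylinder set `C_n(ℓ₀,…,ℓ_p) = (δ_{ℓ₀} ∪ Δ_{ℓ₀}) ∩ ⋂_{j<p} T^{-ℓ_j} δ_{ℓ_{j+1}-ℓ_j}`. -/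
def cylinder (T : ℝ → ℝ) (p : ℕ) (ℓ : ℕ → ℕ) : Set ℝ :=
  (smallDelta T (ℓ 0) ∪ bigDelta T (ℓ 0)) ∩
    ⋂ j ∈ Finset.range p, T^[ℓ j] ⁻¹' (smallDelta T (ℓ (j+1) - ℓ j))

/-! ### The branch near the fixed point -/

/-- The inverse branch of `T` near the neutral fixed point `1`. -/
def pkG (γ y : ℝ) : ℝ := y + (1 - y) ^ γ / (2 * γ)

lemma pk_rpow_sub (γ : ℝ) (hγ : 1 < γ) {s t : ℝ} (hs : 0 ≤ s) (hst : s ≤ t) (ht : t ≤ 1) :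
    0 ≤ t ^ γ - s ^ γ ∧ t ^ γ - s ^ γ ≤ γ * (t - s) := by
  have h0 : s ^ γ ≤ t ^ γ := Real.rpow_le_rpow hs hst (by linarith)
  refine ⟨by linarith, ?_⟩
  rcases eq_or_lt_of_le (hs.trans hst) with h | htp
  · have : s = 0 := by linarith
    subst this; rw [← h]; simp
  have hb := one_add_mul_self_le_rpow_one_add (s := s / t - 1) (p := γ)
    (by have : 0 ≤ s / t := by positivity
        linarith) hγ.le
  have e : (1 + (s / t - 1)) = s / t := by ring
  rw [e, Real.div_rpow hs htp.le] at hb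
  have htg : 0 < t ^ γ := Real.rpow_pos_of_pos htp γ
  have hb2 : (1 + γ * (s / t - 1)) * t ^ γ ≤ s ^ γ := by
    rwa [le_div_iff₀ htg] at hb
  have e2 : t ^ γ = t ^ (γ - 1) * t := by
    rw [← Real.rpow_add_one htp.ne']; congr 1; ring
  have e3 : (s / t - 1) * t ^ γ = (s - t) * t ^ (γ - 1) := by
    rw [e2]; field_simp
  have h1 : t ^ (γ - 1) ≤ 1 := Real.rpow_le_one htp.le ht (by linarith)
  have h4 : (t - s) * t ^ (γ - 1) ≤ (t - s) * 1 :=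
    mul_le_mul_of_nonneg_left h1 (by linarith)
  have h5 : γ * ((t - s) * t ^ (γ - 1)) ≤ γ * ((t - s) * 1) :=
    mul_le_mul_of_nonneg_left h4 (by linarith)
  nlinarith

lemma pkG_slope (γ : ℝ) (hγ : 1 < γ) {x y : ℝ} (hx : 0 ≤ x) (hxy : x ≤ y) (hy : y ≤ 1) :
    (y - x) / 2 ≤ pkG γ y - pkG γ x ∧ pkG γ y - pkG γ x ≤ y - x := by
  have h := pk_rpow_sub γ hγ (s := 1 - y) (t := 1 - x) (by linarith) (by linarith) (by linarith)
  have h2 : ((1 - x) ^ γ - (1 - y) ^ γ) / (2 * γ) ≤ (y - x) / 2 := by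
    rw [div_le_div_iff₀ (by linarith) (by norm_num)]
    nlinarith [h.2]
  have h3 : 0 ≤ ((1 - x) ^ γ - (1 - y) ^ γ) / (2 * γ) := div_nonneg h.1 (by linarith)
  rw [sub_div] at h2 h3
  unfold pkG
  constructor <;> linarith

lemma pkG_one (γ : ℝ) (hγ : 1 < γ) : pkG γ 1 = 1 := by
  unfold pkG; rw [sub_self, Real.zero_rpow (by linarith)]; simp

lemma pkG_zero (γ : ℝ) : pkG γ 0 = 1 / (2 * γ) := by
  unfold pkG; simp

lemma pkG_mem (γ : ℝ) (hγ : 1 < γ) {x : ℝ} (hx : x ∈ Set.Icc (0:ℝ) 1) :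
    pkG γ x ∈ Set.Icc (0:ℝ) 1 := by
  have h := pkG_slope γ hγ hx.1 hx.2 le_rfl
  rw [pkG_one γ hγ] at h
  have h' := pkG_slope γ hγ le_rfl hx.1 hx.2
  rw [pkG_zero] at h'
  have : 0 < 1 / (2 * γ) := by positivity
  constructor
  · linarith [hx.1, h'.1]
  · linarith [hx.2, h.1]

lemma pkG_iter_mem (γ : ℝ) (hγ : 1 < γ) (d : ℕ) {x : ℝ} (hx : x ∈ Set.Icc (0:ℝ) 1) :
    (pkG γ)^[d] x ∈ Set.Icc (0:ℝ) 1 := by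
  induction d with
  | zero => simpa using hx
  | succ d ih => rw [Function.iterate_succ_apply']; exact pkG_mem γ hγ ih

lemma pkG_iter_slope (γ : ℝ) (hγ : 1 < γ) (d : ℕ) {x y : ℝ} (hx : 0 ≤ x) (hxy : x ≤ y)
    (hy : y ≤ 1) :
    0 ≤ (pkG γ)^[d] y - (pkG γ)^[d] x ∧ (pkG γ)^[d] y - (pkG γ)^[d] x ≤ y - x := by
  induction d with
  | zero => simpa using hxy
  | succ d ih =>
    rw [Function.iterate_succ_apply', Function.iterate_succ_apply']
    have hx' := pkG_iter_mem γ hγ d (x := x) ⟨hx, hxy.trans hy⟩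
    have hy' := pkG_iter_mem γ hγ d (x := y) ⟨hx.trans hxy, hy⟩
    have h := pkG_slope γ hγ hx'.1 (by linarith [ih.1]) hy'.2
    constructor <;> linarith [ih.1, ih.2, h.1, h.2]

lemma pkG_convex (γ : ℝ) (hγ : 1 < γ) : ConvexOn ℝ (Set.Icc (0:ℝ) 1) (pkG γ) := by
  refine ⟨convex_Icc 0 1, ?_⟩
  intro x hx y hy a b ha hb hab
  have h := (convexOn_rpow hγ.le).2 (x := 1 - x) (y := 1 - y)
    (by simpa using hx.2) (by simpa using hy.2) ha hb hab
  simp only [smul_eq_mul] at h ⊢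
  unfold pkG
  have e : 1 - (a * x + b * y) = a * (1 - x) + b * (1 - y) := by
    linear_combination -hab
  rw [e]
  have h2 := div_le_div_of_nonneg_right h (show 0 ≤ 2 * γ by linarith)
  have e2 : (a * (1 - x) ^ γ + b * (1 - y) ^ γ) / (2 * γ) =
    a * ((1 - x) ^ γ / (2 * γ)) + b * ((1 - y) ^ γ / (2 * γ)) := by ring
  rw [e2] at h2
  linarith

lemma pkG_iter_convex (γ : ℝ) (hγ : 1 < γ) (d : ℕ) :
    ConvexOn ℝ (Set.Icc (0:ℝ) 1) ((pkG γ)^[d]) := by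
  induction d with
  | zero => exact ⟨convex_Icc 0 1, fun x _ y _ a b _ _ _ => le_rfl⟩
  | succ d ih =>
    refine ⟨convex_Icc 0 1, ?_⟩
    intro x hx y hy a b ha hb hab
    rw [Function.iterate_succ_apply', Function.iterate_succ_apply', Function.iterate_succ_apply']
    have hz := (convex_Icc (0:ℝ) 1) hx hy ha hb hab
    have hx' := pkG_iter_mem γ hγ d hx
    have hy' := pkG_iter_mem γ hγ d hy
    have hz' := pkG_iter_mem γ hγ d hz
    have hw' := (convex_Icc (0:ℝ) 1) hx' hy' ha hb hab
    have h1 := ih.2 hx hy ha hb hab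
    have h2 := (pkG_convex γ hγ).2 hx' hy' ha hb hab
    have h3 := (pkG_slope γ hγ hz'.1 h1 hw'.2).1
    linarith

/-- distance of the backward orbit of `0` to the fixed point -/
def pkU (γ : ℝ) (n : ℕ) : ℝ := 1 - (pkG γ)^[n] 0

lemma pkU_succ (γ : ℝ) (n : ℕ) : pkU γ (n+1) = pkU γ n - pkU γ n ^ γ / (2 * γ) := by
  unfold pkU; rw [Function.iterate_succ_apply']; unfold pkG; ring

lemma pkU_pos (γ : ℝ) (hγ : 1 < γ) (n : ℕ) : 0 < pkU γ n ∧ pkU γ n ≤ 1 := by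
  have h1 := (pkG_iter_mem γ hγ n (x := 0) (by simp)).1
  refine ⟨?_, by unfold pkU; linarith⟩
  induction n with
  | zero => simp [pkU]
  | succ n ih =>
    have hm := pkG_iter_mem γ hγ n (x := 0) (by simp)
    have h := (pkG_slope γ hγ hm.1 hm.2 le_rfl).2
    have hm' := ih hm.1
    rw [pkU_succ]
    have : pkU γ n ^ γ ≤ pkU γ n := by
      conv_rhs => rw [← Real.rpow_one (pkU γ n)]
      exact Real.rpow_le_rpow_of_exponent_ge hm' (by unfold pkU; linarith [hm.1]) hγ.le
    have : pkU γ n ^ γ / (2 * γ) < pkU γ n := by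
      rw [div_lt_iff₀ (by linarith)]
      nlinarith
    linarith

lemma pkU_bound (γ : ℝ) (hγ : 1 < γ) (n : ℕ) :
    1 + (γ - 1) / (2 * γ) * n ≤ pkU γ n ^ (-(γ - 1)) := by
  induction n with
  | zero => simp [pkU]
  | succ n ih =>
    have hu := pkU_pos γ hγ n
    have hu' := pkU_pos γ hγ (n+1)
    set u := pkU γ n with hudef
    set v := u ^ (-(γ - 1)) with hv
    have hvp : 0 < v := Real.rpow_pos_of_pos hu.1 _
    set t := u ^ (γ - 1) / (2 * γ) with ht
    have e : pkU γ (n+1) = u * (1 - t) := by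
      rw [pkU_succ, ← hudef, ht, mul_sub, mul_one, ← mul_div_assoc]
      congr 2
      rw [mul_comm, ← Real.rpow_add_one hu.1.ne']; congr 1; ring
    have h1t : 0 < 1 - t := by
      rw [e] at hu'
      exact pos_of_mul_pos_right hu'.1 hu.1.le
    have h2 : 1 + (γ - 1) * t ≤ (1 - t) ^ (-(γ - 1)) := by
      rw [Real.rpow_def_of_pos h1t]
      have hl := Real.log_le_sub_one_of_pos h1t
      have := Real.add_one_le_exp (Real.log (1 - t) * (-(γ - 1)))
      nlinarith
    have h3 : v * t = 1 / (2 * γ) := by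
      rw [ht, hv, Real.rpow_neg hu.1.le]
      have : u ^ (γ - 1) ≠ 0 := (Real.rpow_pos_of_pos hu.1 _).ne'
      field_simp
    rw [e, Real.mul_rpow hu.1.le h1t.le, ← hv]
    have h4 := mul_le_mul_of_nonneg_left h2 hvp.le
    have h5 : v * (1 + (γ - 1) * t) = v + (γ - 1) / (2 * γ) := by
      have : v * (1 + (γ - 1) * t) = v + (γ - 1) * (v * t) := by ring
      rw [this, h3]; ring
    push_cast
    linarith

lemma pkU_pow_bound (γ : ℝ) (hγ : 1 < γ) (n : ℕ) (hn : 1 ≤ n) :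
    pkU γ n ^ γ ≤ ((γ - 1) / (2 * γ)) ^ (-(γ / (γ - 1))) * (n : ℝ) ^ (-(γ / (γ - 1))) := by
  have hu := pkU_pos γ hγ n
  have hc : 0 < (γ - 1) / (2 * γ) := div_pos (by linarith) (by linarith)
  have hn' : (0:ℝ) < n := by exact_mod_cast hn
  have h1 : (γ - 1) / (2 * γ) * n ≤ pkU γ n ^ (-(γ - 1)) := by linarith [pkU_bound γ hγ n]
  have h2 := Real.rpow_le_rpow_of_nonpos (mul_pos hc hn') h1
    (show -(γ / (γ - 1)) ≤ 0 by
      have : 0 < γ / (γ - 1) := div_pos (by linarith) (by linarith)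
      linarith)
  rw [← Real.rpow_mul hu.1.le, Real.mul_rpow hc.le hn'.le] at h2
  have e : -(γ - 1) * -(γ / (γ - 1)) = γ := by
    have : γ - 1 ≠ 0 := by linarith
    field_simp
  rwa [e] at h2

/-- The constant in the Lipschitz bound. -/
def pkK (γ : ℝ) : ℝ :=
  ((γ - 1) / (2 * γ)) ^ (-(γ / (γ - 1))) / (pkU γ 1 ^ γ)

lemma pkK_pos (γ : ℝ) (hγ : 1 < γ) : 0 < pkK γ := by
  have hc : 0 < (γ - 1) / (2 * γ) := div_pos (by linarith) (by linarith)
  exact div_pos (Real.rpow_pos_of_pos hc _) (Real.rpow_pos_of_pos (pkU_pos γ hγ 1).1 _)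

/-- The Lipschitz bound -/
def pkq (γ : ℝ) (d : ℕ) : ℝ := min 1 (pkK γ * (d : ℝ) ^ (-(γ / (γ - 1))))

lemma pkq_nonneg (γ : ℝ) (hγ : 1 < γ) (d : ℕ) : 0 ≤ pkq γ d :=
  le_min zero_le_one (mul_nonneg (pkK_pos γ hγ).le (Real.rpow_nonneg (Nat.cast_nonneg d) _))

lemma pkq_anti (γ : ℝ) (hγ : 1 < γ) {d : ℕ} (hd : 1 ≤ d) : pkq γ (d+1) ≤ pkq γ d := by
  refine min_le_min le_rfl (mul_le_mul_of_nonneg_left ?_ (pkK_pos γ hγ).le)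
  apply Real.rpow_le_rpow_of_nonpos (by exact_mod_cast hd) (by push_cast; linarith)
  have : 0 < γ / (γ - 1) := div_pos (by linarith) (by linarith)
  linarith

lemma pkG_iter_lip (γ : ℝ) (hγ : 1 < γ) (d : ℕ) {x y : ℝ} (hx : 0 ≤ x) (hxy : x ≤ y)
    (hy : y ≤ 1 / (2 * γ)) :
    (pkG γ)^[d] y - (pkG γ)^[d] x ≤ pkq γ (d+1) * (y - x) := by
  rcases hxy.eq_or_lt with rfl | hlt
  · simp
  have hc : 1 / (2 * γ) ≤ 1 := by
    rw [div_le_one (by linarith)]; linarith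
  have h1 := (pkG_iter_slope γ hγ d hx hxy (hy.trans hc)).2
  rw [pkq, min_mul_of_nonneg _ _ (by linarith)]
  refine le_min (by linarith) ?_
  have hu1 := pkU_pos γ hγ 1
  have hua : 0 < pkU γ 1 ^ γ := Real.rpow_pos_of_pos hu1.1 _
  have e1 : (pkG γ)^[1] 0 = 1 / (2 * γ) := by simp [pkG]
  have hdiff : ∀ n, (pkG γ)^[n+1] 0 - (pkG γ)^[n] 0 = pkU γ n ^ γ / (2 * γ) := by
    intro n
    have := pkU_succ γ n
    unfold pkU at this ⊢
    linarith
  have hlt2 : (pkG γ)^[1] 0 < (pkG γ)^[2] 0 := by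
    have := hdiff 1
    have h2 : 0 < pkU γ 1 ^ γ / (2 * γ) := div_pos hua (by linarith)
    norm_num at this
    norm_num
    linarith
  have hm1 := pkG_iter_mem γ hγ 1 (x := 0) (by simp)
  have hm2 := pkG_iter_mem γ hγ 2 (x := 0) (by simp)
  have hcv := pkG_iter_convex γ hγ d
  have s1 : ((pkG γ)^[d] y - (pkG γ)^[d] x) / (y - x) ≤
      ((pkG γ)^[d] ((pkG γ)^[2] 0) - (pkG γ)^[d] ((pkG γ)^[1] 0)) /
        ((pkG γ)^[2] 0 - (pkG γ)^[1] 0) := by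
    rcases (hy.trans e1.ge).eq_or_lt with h | h
    · rw [h] at hlt ⊢
      exact hcv.slope_mono_adjacent ⟨hx, by linarith [hm1.2]⟩ hm2 hlt hlt2
    · exact (hcv.slope_mono_adjacent ⟨hx, by linarith⟩ hm1 hlt h).trans
        (hcv.slope_mono_adjacent ⟨by linarith, by linarith⟩ hm2 h hlt2)
  rw [← Function.iterate_add_apply, ← Function.iterate_add_apply] at s1
  have e2 := hdiff (d+1)
  have e3 := hdiff 1
  rw [show d + 2 = d + 1 + 1 from rfl, show (2:ℕ) = 1 + 1 from rfl] at s1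
  rw [e2, e3] at s1
  rw [div_le_iff₀ (by linarith)] at s1
  refine s1.trans (mul_le_mul_of_nonneg_right ?_ (by linarith))
  have hb := pkU_pow_bound γ hγ (d+1) (by omega)
  have e5 : pkU γ (d + 1) ^ γ / (2 * γ) / (pkU γ 1 ^ γ / (2 * γ)) =
    pkU γ (d+1) ^ γ / pkU γ 1 ^ γ := by
    field_simp
  rw [e5, pkK, div_mul_eq_mul_div]
  exact div_le_div_of_nonneg_right hb hua.le

/-! ### Dynamics -/

lemma DeltaP_sub (T : ℝ → ℝ) (n : ℕ) : DeltaP T n ⊆ Set.Ioo 0 1 := by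
  cases n <;> exact Set.inter_subset_right

lemma pk_eqG {γ : ℝ} {T : ℝ → ℝ} (hT : IsPikovsky γ T) {x : ℝ}
    (hx : x ∈ Set.Ioo (0:ℝ) 1) (hTx : 0 < T x) : x = pkG γ (T x) := by
  by_cases h : x ≤ 1 / (2 * γ)
  · linarith [(hT.2.1 x ⟨hx.1, h⟩).1.2]
  · exact (hT.2.2.1 x ⟨by linarith, hx.2.le⟩).2

lemma DeltaP_zero_sub {γ : ℝ} {T : ℝ → ℝ} (hT : IsPikovsky γ T) :
    DeltaP T 0 ⊆ Set.Icc 0 (1 / (2 * γ)) := by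
  rintro x ⟨h1, h2⟩
  refine ⟨h2.1.le, ?_⟩
  by_contra h
  have := (hT.2.2.1 x ⟨by linarith, h2.2.le⟩).1.1
  exact absurd h1.2 (by linarith)

lemma DeltaP_eq {γ : ℝ} {T : ℝ → ℝ} (hT : IsPikovsky γ T) (d : ℕ) {x : ℝ}
    (hx : x ∈ DeltaP T d) : T^[d] x ∈ DeltaP T 0 ∧ x = (pkG γ)^[d] (T^[d] x) := by
  induction d generalizing x with
  | zero => exact ⟨hx, rfl⟩
  | succ d ih =>
    obtain ⟨h1, h2⟩ := hx
    have h := ih h1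
    have h3 := pk_eqG hT h2 (DeltaP_sub T d h1).1
    rw [Function.iterate_succ_apply, Function.iterate_succ_apply', ← h.2]
    exact ⟨h.1, h3⟩

lemma deltaMs_eq {γ : ℝ} {T : ℝ → ℝ} (hT : IsPikovsky γ T) (d : ℕ) {x : ℝ}
    (hx : x ∈ deltaMs T (d+1)) : T^[d+1] x ∈ DeltaP T 0 ∧
      x = -((1 - (pkG γ)^[d] (T^[d+1] x)) ^ γ / (2 * γ)) := by
  obtain ⟨h1, h2, h3⟩ := hx
  have h := DeltaP_eq hT d (x := T x) h1
  rw [Function.iterate_succ_apply, ← h.2]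
  refine ⟨h.1, ?_⟩
  have e := hT.2.2.2 x ⟨h3.1.le, h3.2⟩
  have hpos : 0 < T x := h2.1
  have hle : -x ≤ 1 / (2 * γ) := by
    by_contra hh
    linarith [(hT.2.2.1 (-x) ⟨by linarith, by linarith [h3.1]⟩).1.1]
  have := (hT.2.1 (-x) ⟨by linarith [h3.2], hle⟩).2
  have e2 : 1 + T (-x) = 1 - T x := by linarith
  rw [e2] at this
  linarith

lemma pk_vol_image {f : ℝ → ℝ} {s : Set ℝ} {K : ℝ} (hK : 0 ≤ K)
    (h : ∀ x ∈ s, ∀ y ∈ s, x ≤ y → |f y - f x| ≤ K * (y - x)) :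
    volume (f '' s) ≤ ENNReal.ofReal K * volume s := by
  have hl : LipschitzOnWith (Real.toNNReal K) f s := by
    apply LipschitzOnWith.of_dist_le_mul
    intro x hx y hy
    rw [Real.coe_toNNReal K hK, Real.dist_eq, Real.dist_eq]
    rcases le_total x y with hxy | hxy
    · rw [abs_sub_comm, abs_sub_comm x y, abs_of_nonneg (sub_nonneg.2 hxy)]
      exact h x hx y hy hxy
    · rw [abs_of_nonneg (sub_nonneg.2 hxy)]
      exact h y hy x hx hxy
  have := hl.hausdorffMeasure_image_le (d := 1) zero_le_one
  rw [hausdorffMeasure_real] at this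
  simpa [ENNReal.ofReal] using this

lemma DeltaP_vol {γ : ℝ} (hγ : 1 < γ) {T : ℝ → ℝ} (hT : IsPikovsky γ T) (d : ℕ) (hd : 1 ≤ d)
    (A : Set ℝ) : volume (DeltaP T d ∩ T^[d] ⁻¹' A) ≤
      ENNReal.ofReal (pkq γ d) * volume (A ∩ DeltaP T 0) := by
  have hsub : DeltaP T d ∩ T^[d] ⁻¹' A ⊆ (pkG γ)^[d] '' (A ∩ DeltaP T 0) := by
    rintro x ⟨hx, hA⟩
    have := DeltaP_eq hT d hx
    exact ⟨_, ⟨hA, this.1⟩, this.2.symm⟩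
  refine (measure_mono hsub).trans (pk_vol_image (pkq_nonneg γ hγ d) ?_)
  intro x hx y hy hxy
  have hx' := DeltaP_zero_sub hT hx.2
  have hy' := DeltaP_zero_sub hT hy.2
  rw [abs_of_nonneg (pkG_iter_slope γ hγ d hx'.1 hxy (DeltaP_sub T 0 hy.2).2.le).1]
  exact (pkG_iter_lip γ hγ d hx'.1 hxy hy'.2).trans
    (mul_le_mul_of_nonneg_right (pkq_anti γ hγ hd) (by linarith))

lemma deltaMs_vol {γ : ℝ} (hγ : 1 < γ) {T : ℝ → ℝ} (hT : IsPikovsky γ T) (d : ℕ) (hd : 1 ≤ d)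
    (A : Set ℝ) : volume (deltaMs T d ∩ T^[d] ⁻¹' A) ≤
      ENNReal.ofReal (1 / 2 * pkq γ d) * volume (A ∩ DeltaP T 0) := by
  obtain ⟨d, rfl⟩ : ∃ k, d = k + 1 := ⟨d - 1, by omega⟩
  have hsub : deltaMs T (d+1) ∩ T^[d+1] ⁻¹' A ⊆
      (fun y => -((1 - (pkG γ)^[d] y) ^ γ / (2 * γ))) '' (A ∩ DeltaP T 0) := by
    rintro x ⟨hx, hA⟩
    have := deltaMs_eq hT d hx
    exact ⟨_, ⟨hA, this.1⟩, this.2.symm⟩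
  have hq := pkq_nonneg γ hγ (d+1)
  refine (measure_mono hsub).trans (pk_vol_image (by positivity) ?_)
  intro x hx y hy hxy
  have hx' := DeltaP_zero_sub hT hx.2
  have hy' := DeltaP_zero_sub hT hy.2
  have hy1 := (DeltaP_sub T 0 hy.2).2.le
  have h1 := (pkG_iter_slope γ hγ d hx'.1 hxy hy1).1
  have h2 := pkG_iter_lip γ hγ d hx'.1 hxy hy'.2
  have hmx := pkG_iter_mem γ hγ d (x := x) ⟨hx'.1, hxy.trans hy1⟩
  have hmy := pkG_iter_mem γ hγ d (x := y) ⟨hy'.1, hy1⟩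
  have h3 := pk_rpow_sub γ hγ (s := 1 - (pkG γ)^[d] y) (t := 1 - (pkG γ)^[d] x)
    (by linarith [hmy.2]) (by linarith) (by linarith [hmx.1])
  have e : -((1 - (pkG γ)^[d] y) ^ γ / (2 * γ)) - -((1 - (pkG γ)^[d] x) ^ γ / (2 * γ)) =
    ((1 - (pkG γ)^[d] x) ^ γ - (1 - (pkG γ)^[d] y) ^ γ) / (2 * γ) := by ring
  rw [e, abs_of_nonneg (div_nonneg h3.1 (by linarith)), div_le_iff₀ (by linarith)]
  nlinarith [h3.2]

/-! ### Reflection -/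

/-- The reflected map. -/
def pkR (T : ℝ → ℝ) (x : ℝ) : ℝ := -T (-x)

lemma pkR_pik {γ : ℝ} (hγ : 1 < γ) {T : ℝ → ℝ} (hT : IsPikovsky γ T) :
    IsPikovsky γ (pkR T) := by
  have hc0 : 0 < 1 / (2 * γ) := by positivity
  have hc : 1 / (2 * γ) ≤ 1 := by
    rw [div_le_one (by linarith)]; linarith
  have key : ∀ x, 0 < x → x ≤ 1 → pkR T x = T x := by
    intro x h0 h1
    have := hT.2.2.2 (-x) ⟨by linarith, by linarith⟩
    rw [neg_neg] at this
    rw [pkR, this, neg_neg]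
  refine ⟨?_, ?_, ?_, ?_⟩
  · intro x hx
    have := hT.1 (-x) ⟨by linarith [hx.2], by linarith [hx.1]⟩
    exact ⟨by unfold pkR; linarith [this.2], by unfold pkR; linarith [this.1]⟩
  · intro x hx
    rw [key x hx.1 (hx.2.trans hc)]
    exact hT.2.1 x hx
  · intro x hx
    rw [key x (hc0.trans_le hx.1) hx.2]
    exact hT.2.2.1 x hx
  · intro x hx
    rw [key (-x) (by linarith [hx.2]) (by linarith [hx.1])]
    rfl

lemma pkR_iter (T : ℝ → ℝ) (d : ℕ) (x : ℝ) : (pkR T)^[d] (-x) = -T^[d] x := by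
  induction d with
  | zero => rfl
  | succ d ih => rw [Function.iterate_succ_apply', Function.iterate_succ_apply', ih, pkR, neg_neg]

lemma DeltaM_refl (T : ℝ → ℝ) (n : ℕ) (x : ℝ) : x ∈ DeltaM T n ↔ -x ∈ DeltaP (pkR T) n := by
  induction n generalizing x with
  | zero =>
    simp only [DeltaM, DeltaP, Set.mem_inter_iff, Set.mem_preimage, Set.mem_Ioo, pkR, neg_neg]
    constructor <;> rintro ⟨⟨_, _⟩, _, _⟩ <;> refine ⟨⟨?_, ?_⟩, ?_, ?_⟩ <;> linarith
  | succ n ih =>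
    simp only [DeltaM, DeltaP, Set.mem_inter_iff, Set.mem_preimage, Set.mem_Ioo]
    rw [ih, pkR, neg_neg]
    constructor <;> rintro ⟨h, _, _⟩ <;> refine ⟨h, ?_, ?_⟩ <;> linarith

lemma pkR_pkR (T : ℝ → ℝ) : pkR (pkR T) = T := by
  funext x; simp [pkR]

lemma DeltaP_refl (T : ℝ → ℝ) (n : ℕ) (x : ℝ) : x ∈ DeltaP T n ↔ -x ∈ DeltaM (pkR T) n := by
  rw [DeltaM_refl, pkR_pkR, neg_neg]

lemma deltaPs_refl (T : ℝ → ℝ) (n : ℕ) (x : ℝ) : x ∈ deltaPs T n ↔ -x ∈ deltaMs (pkR T) n := by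
  simp only [deltaPs, deltaMs, Set.mem_inter_iff, Set.mem_preimage]
  rw [DeltaM_refl, DeltaP_refl T 0, pkR, neg_neg]

lemma DeltaM_vol {γ : ℝ} (hγ : 1 < γ) {T : ℝ → ℝ} (hT : IsPikovsky γ T) (d : ℕ) (hd : 1 ≤ d)
    (A : Set ℝ) : volume (DeltaM T d ∩ T^[d] ⁻¹' A) ≤
      ENNReal.ofReal (pkq γ d) * volume (A ∩ DeltaM T 0) := by
  have h := DeltaP_vol hγ (pkR_pik hγ hT) d hd (-A)
  have e1 : DeltaP (pkR T) d ∩ (pkR T)^[d] ⁻¹' (-A) = -(DeltaM T d ∩ T^[d] ⁻¹' A) := by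
    ext x
    have hi := pkR_iter T d (-x)
    rw [neg_neg] at hi
    simp only [Set.mem_inter_iff, Set.mem_preimage, Set.mem_neg, DeltaM_refl, neg_neg, hi]
  have e2 : -A ∩ DeltaP (pkR T) 0 = -(A ∩ DeltaM T 0) := by
    ext x
    simp only [Set.mem_inter_iff, Set.mem_neg, DeltaM_refl, neg_neg]
  rwa [e1, e2, Measure.measure_neg, Measure.measure_neg] at h

lemma deltaPs_vol {γ : ℝ} (hγ : 1 < γ) {T : ℝ → ℝ} (hT : IsPikovsky γ T) (d : ℕ) (hd : 1 ≤ d)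
    (A : Set ℝ) : volume (deltaPs T d ∩ T^[d] ⁻¹' A) ≤
      ENNReal.ofReal (1 / 2 * pkq γ d) * volume (A ∩ DeltaM T 0) := by
  have h := deltaMs_vol hγ (pkR_pik hγ hT) d hd (-A)
  have e1 : deltaMs (pkR T) d ∩ (pkR T)^[d] ⁻¹' (-A) = -(deltaPs T d ∩ T^[d] ⁻¹' A) := by
    ext x
    have hi := pkR_iter T d (-x)
    rw [neg_neg] at hi
    simp only [Set.mem_inter_iff, Set.mem_preimage, Set.mem_neg, deltaPs_refl, neg_neg, hi]
  have e2 : -A ∩ DeltaP (pkR T) 0 = -(A ∩ DeltaM T 0) := by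
    ext x
    simp only [Set.mem_inter_iff, Set.mem_neg, DeltaM_refl, neg_neg]
  rwa [e1, e2, Measure.measure_neg, Measure.measure_neg] at h

lemma pk_Y_split {T : ℝ → ℝ} (A : Set ℝ) :
    volume (A ∩ DeltaP T 0) + volume (A ∩ DeltaM T 0) ≤ volume (A ∩ Yset T) := by
  rw [← measure_inter_add_sdiff (A ∩ Yset T) (measurableSet_Ioi (a := (0:ℝ)))]
  refine add_le_add (measure_mono ?_) (measure_mono ?_)
  · rintro x ⟨hA, hx⟩
    exact ⟨⟨hA, Or.inr hx⟩, hx.2.1⟩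
  · rintro x ⟨hA, hx⟩
    exact ⟨⟨hA, Or.inl hx⟩, fun h => absurd hx.2.2 (not_lt.2 (le_of_lt h))⟩

lemma pk_Y_vol {γ : ℝ} (hγ : 1 < γ) {T : ℝ → ℝ} (hT : IsPikovsky γ T) :
    volume (Yset T) ≤ 1 := by
  have hsub : Yset T ⊆ Set.Icc (-(1/2)) (1/2) := by
    have hc : 1 / (2 * γ) ≤ 1 / 2 :=
      one_div_le_one_div_of_le (by norm_num) (by linarith)
    rintro x (hx | hx)
    · have := DeltaP_zero_sub (pkR_pik hγ hT) ((DeltaM_refl T 0 x).1 hx)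
      exact ⟨by linarith [this.2], by linarith [this.1]⟩
    · have := DeltaP_zero_sub hT hx
      exact ⟨by linarith [this.1], by linarith [this.2]⟩
  refine (measure_mono hsub).trans ?_
  rw [Real.volume_Icc]; norm_num

lemma pk_small_vol {γ : ℝ} (hγ : 1 < γ) {T : ℝ → ℝ} (hT : IsPikovsky γ T) (d : ℕ) (hd : 1 ≤ d)
    (A : Set ℝ) : volume (smallDelta T d ∩ T^[d] ⁻¹' A) ≤
      ENNReal.ofReal (1 / 2 * pkq γ d) * volume (A ∩ Yset T) := by
  rw [smallDelta, Set.union_inter_distrib_right]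
  calc _ ≤ _ := measure_union_le _ _
    _ ≤ _ := add_le_add (deltaMs_vol hγ hT d hd A) (deltaPs_vol hγ hT d hd A)
    _ ≤ _ := by rw [← mul_add]; gcongr; exact pk_Y_split A

lemma pk_big_vol {γ : ℝ} (hγ : 1 < γ) {T : ℝ → ℝ} (hT : IsPikovsky γ T) (d : ℕ) (hd : 1 ≤ d)
    (A : Set ℝ) : volume (bigDelta T d ∩ T^[d] ⁻¹' A) ≤
      ENNReal.ofReal (pkq γ d) * volume (A ∩ Yset T) := by
  rw [bigDelta, Set.union_inter_distrib_right, Set.union_comm]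
  calc _ ≤ _ := measure_union_le _ _
    _ ≤ _ := add_le_add (DeltaP_vol hγ hT d hd A) (DeltaM_vol hγ hT d hd A)
    _ ≤ _ := by rw [← mul_add]; gcongr; exact pk_Y_split A

/-- tail of the cylinder -/
def pkE (T : ℝ → ℝ) (k : ℕ) (ℓ : ℕ → ℕ) : Set ℝ :=
  {x | ∀ i < k, T^[ℓ i - ℓ 0] x ∈ smallDelta T (ℓ (i+1) - ℓ i)}

lemma pk_mono {p : ℕ} {ℓ : ℕ → ℕ} (h : ∀ j < p, ℓ j < ℓ (j+1)) {i : ℕ} (hi : i ≤ p) :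
    ℓ 0 ≤ ℓ i := by
  induction i with
  | zero => exact le_rfl
  | succ i ih => exact (ih (by omega)).trans (h i (by omega)).le

lemma pkE_vol {γ : ℝ} (hγ : 1 < γ) {T : ℝ → ℝ} (hT : IsPikovsky γ T) (k : ℕ) (ℓ : ℕ → ℕ)
    (h : ∀ j < k, ℓ j < ℓ (j+1)) :
    volume (pkE T k ℓ ∩ Yset T) ≤
      ENNReal.ofReal (∏ j ∈ Finset.range k, (1 / 2 * pkq γ (ℓ (j+1) - ℓ j))) := by
  induction k generalizing ℓ with
  | zero =>
    simp only [Finset.range_zero, Finset.prod_empty, ENNReal.ofReal_one]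
    exact (measure_mono Set.inter_subset_right).trans (pk_Y_vol hγ hT)
  | succ k ih =>
    have ih' := ih (fun j => ℓ (j+1)) (fun j hj => h (j+1) (by omega))
    have hsub : pkE T (k+1) ℓ ∩ Yset T ⊆ smallDelta T (ℓ 1 - ℓ 0) ∩
        T^[ℓ 1 - ℓ 0] ⁻¹' (pkE T k (fun j => ℓ (j+1))) := by
      rintro x ⟨hx, -⟩
      refine ⟨by simpa using hx 0 (by omega), ?_⟩
      intro i hi
      have := hx (i+1) (by omega)
      rw [← Function.iterate_add_apply]
      have h01 := h 0 (by omega)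
      have h1i := pk_mono (p := k) (ℓ := fun j => ℓ (j+1)) (fun j hj => h (j+1) (by omega)) hi.le
      simp only [zero_add] at h01 h1i ⊢
      have e : ℓ (i+1) - ℓ 1 + (ℓ 1 - ℓ 0) = ℓ (i+1) - ℓ 0 := by omega
      rw [e]
      exact this
    refine (measure_mono hsub).trans ((pk_small_vol hγ hT _ ?_ _).trans ?_)
    · have := h 0 (by omega)
      simp only [zero_add] at this
      omega
    · rw [Finset.prod_range_succ', mul_comm (∏ j ∈ _, _),
        ENNReal.ofReal_mul (mul_nonneg (by norm_num) (pkq_nonneg γ hγ _))]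
      exact mul_le_mul_right ih' _

lemma pk_cyl_vol {γ : ℝ} (hγ : 1 < γ) {T : ℝ → ℝ} (hT : IsPikovsky γ T) (p : ℕ) (ℓ : ℕ → ℕ)
    (h0 : 1 ≤ ℓ 0) (h : ∀ j < p, ℓ j < ℓ (j+1)) :
    pikMeasure (cylinder T p ℓ) ≤ ENNReal.ofReal
      (3 / 4 * pkq γ (ℓ 0) * ∏ j ∈ Finset.range p, (1 / 2 * pkq γ (ℓ (j+1) - ℓ j))) := by
  have hq := pkq_nonneg γ hγ (ℓ 0)
  have hsub : cylinder T p ℓ ⊆ (smallDelta T (ℓ 0) ∩ T^[ℓ 0] ⁻¹' (pkE T p ℓ)) ∪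
      (bigDelta T (ℓ 0) ∩ T^[ℓ 0] ⁻¹' (pkE T p ℓ)) := by
    rw [← Set.union_inter_distrib_right]
    rintro x ⟨hx, hx2⟩
    refine ⟨hx, ?_⟩
    intro i hi
    simp only [Set.mem_iInter, Finset.mem_range, Set.mem_preimage] at hx2
    rw [← Function.iterate_add_apply, Nat.sub_add_cancel (pk_mono h hi.le)]
    exact hx2 i hi
  have hE := pkE_vol hγ hT p ℓ h
  have hv : volume (cylinder T p ℓ) ≤ ENNReal.ofReal (3 / 2 * pkq γ (ℓ 0)) *
      ENNReal.ofReal (∏ j ∈ Finset.range p, (1 / 2 * pkq γ (ℓ (j+1) - ℓ j))) := by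
    calc _ ≤ _ := measure_mono hsub
      _ ≤ _ := measure_union_le _ _
      _ ≤ _ := add_le_add (pk_small_vol hγ hT _ h0 _) (pk_big_vol hγ hT _ h0 _)
      _ = ENNReal.ofReal (3 / 2 * pkq γ (ℓ 0)) * volume (pkE T p ℓ ∩ Yset T) := by
        rw [← add_mul, ← ENNReal.ofReal_add (by positivity) hq]
        congr 2; ring
      _ ≤ _ := by gcongr
  rw [pikMeasure, Measure.smul_apply, smul_eq_mul]
  calc _ ≤ (2⁻¹ : ℝ≥0∞) * volume (cylinder T p ℓ) := by
        exact mul_le_mul_right (Measure.restrict_apply_le _ _) _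
    _ ≤ (2⁻¹ : ℝ≥0∞) * (ENNReal.ofReal (3 / 2 * pkq γ (ℓ 0)) *
      ENNReal.ofReal (∏ j ∈ Finset.range p, (1 / 2 * pkq γ (ℓ (j+1) - ℓ j)))) := by gcongr
    _ = _ := by
      have e : (2⁻¹ : ℝ≥0∞) = ENNReal.ofReal (1 / 2) := by
        rw [one_div, ENNReal.ofReal_inv_of_pos (by norm_num), ENNReal.ofReal_ofNat]
      rw [e, ← ENNReal.ofReal_mul (by positivity), ← ENNReal.ofReal_mul (by norm_num)]
      congr 1; ring

lemma pk_sup (α : ℝ) : ∃ M : ℝ, 1 ≤ M ∧ ∀ p : ℕ, (3 / 4 : ℝ) ^ p * ((p : ℝ) + 1) ^ α ≤ M := by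
  obtain ⟨k, hk⟩ := exists_nat_ge α
  have ht := tendsto_pow_const_mul_const_pow_of_abs_lt_one k (r := (3/4 : ℝ))
    (by rw [abs_of_pos] <;> norm_num)
  obtain ⟨B, hB⟩ := ht.bddAbove_range
  refine ⟨max 1 (4 / 3 * B), le_max_left _ _, fun p => le_trans ?_ (le_max_right _ _)⟩
  have h1 := hB ⟨p+1, rfl⟩
  simp only [pow_succ, Nat.cast_add, Nat.cast_one] at h1
  have h2 : ((p : ℝ) + 1) ^ α ≤ ((p:ℝ) + 1) ^ k := by
    rw [← Real.rpow_natCast]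
    exact Real.rpow_le_rpow_of_exponent_le (by linarith [(Nat.cast_nonneg p : (0:ℝ) ≤ p)]) hk
  have h3 : (3 / 4 : ℝ) ^ p * ((p : ℝ) + 1) ^ α ≤ (3 / 4 : ℝ) ^ p * ((p : ℝ) + 1) ^ k :=
    mul_le_mul_of_nonneg_left h2 (by positivity)
  nlinarith

lemma pk_prod_one (γ : ℝ) (hγ : 1 < γ) (p m : ℕ) (g : ℕ → ℕ) (hm : m < p) :
    ∏ j ∈ Finset.range p, (3 / 4 * pkq γ (g j)) ≤ (3 / 4) ^ p * pkq γ (g m) := by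
  rw [Finset.prod_mul_distrib, Finset.prod_const, Finset.card_range]
  refine mul_le_mul_of_nonneg_left ?_ (by positivity)
  rw [← Finset.mul_prod_erase _ _ (Finset.mem_range.2 hm)]
  refine mul_le_of_le_one_right (pkq_nonneg γ hγ _) ?_
  exact Finset.prod_le_one (fun i _ => pkq_nonneg γ hγ _) (fun i _ => min_le_left _ _)

/-- estimates (5.4)–(5.5) of the paper: for `γ > 1` and the Pikovsky map `T`
with parameter `γ` there are constants `Λ > 1` and `C_γ > 0` depending only on `γ` such that
for every `n ≥ 1` and every admissible tuple `(ℓ₀,…,ℓ_p)`: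
(a) `λ(C_n(ℓ₀)) ≤ C_γ ℓ₀^{−γ/(γ−1)}` when `p = 0`;
(b) for `p ≥ 1`,
`λ(C_n(ℓ₀,…,ℓ_p)) ≤ min{Λ⁻¹, C_γ ℓ₀^{−γ/(γ−1)}} ∏_{j<p} min{Λ⁻¹, C_γ (ℓ_{j+1}−ℓ_j)^{−γ/(γ−1)}}`;
(c) for all `p ≥ 0`, `λ(C_n(ℓ₀,…,ℓ_p)) ≤ C_γ n^{−γ/(γ−1)}`. -/
theorem pikovsky_cylinder_estimates (γ : ℝ) (hγ : 1 < γ) (T : ℝ → ℝ) (hT : IsPikovsky γ T) :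
    ∃ Λ : ℝ, 1 < Λ ∧ ∃ Cγ : ℝ, 0 < Cγ ∧
      ∀ n : ℕ, 1 ≤ n → ∀ (p : ℕ) (ℓ : ℕ → ℕ),
        1 ≤ ℓ 0 → (∀ j < p, ℓ j < ℓ (j+1)) →
        (p = 0 → n < ℓ 0) → (0 < p → ℓ (p-1) ≤ n ∧ n < ℓ p) →
        ((p = 0 →
          pikMeasure (cylinder T p ℓ)
            ≤ ENNReal.ofReal (Cγ * ((ℓ 0 : ℝ) ^ (-(γ / (γ - 1)))))) ∧
        (1 ≤ p →
          pikMeasure (cylinder T p ℓ)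
            ≤ ENNReal.ofReal
              (min Λ⁻¹ (Cγ * ((ℓ 0 : ℝ) ^ (-(γ / (γ - 1))))) *
                ∏ j ∈ Finset.range p,
                  min Λ⁻¹ (Cγ * (((ℓ (j+1) - ℓ j : ℕ) : ℝ) ^ (-(γ / (γ - 1))))))) ∧
        pikMeasure (cylinder T p ℓ)
          ≤ ENNReal.ofReal (Cγ * ((n : ℝ) ^ (-(γ / (γ - 1)))))) := by
  have hα : 0 < γ / (γ - 1) := div_pos (by linarith) (by linarith)
  set α := γ / (γ - 1) with hαdef
  have hK := pkK_pos γ hγ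
  obtain ⟨M, hM1, hM⟩ := pk_sup α
  have hKM : pkK γ ≤ pkK γ * M := le_mul_of_one_le_right hK.le hM1
  have hqC : ∀ d : ℕ, pkq γ d ≤ pkK γ * M * (d : ℝ) ^ (-α) := fun d =>
    (min_le_right _ _).trans
      (mul_le_mul_of_nonneg_right hKM (Real.rpow_nonneg (Nat.cast_nonneg d) _))
  have hq0 := pkq_nonneg γ hγ
  have hq1 : ∀ d, pkq γ d ≤ 1 := fun d => min_le_left _ _
  refine ⟨4 / 3, by norm_num, pkK γ * M, by positivity, ?_⟩
  intro n hn p ℓ h0 hl hp0 hp1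
  have hcyl := pk_cyl_vol hγ hT p ℓ h0 hl
  have hmin : ∀ d c, 0 ≤ c → c ≤ 3 / 4 →
      c * pkq γ d ≤ min (4 / 3 : ℝ)⁻¹ (pkK γ * M * (d : ℝ) ^ (-α)) := by
    intro d c hc hc'
    refine le_min ?_ ?_
    · have := hq1 d
      have := hq0 d
      norm_num
      nlinarith
    · have := hqC d
      have := hq0 d
      nlinarith
  have hprod0 : 0 ≤ ∏ j ∈ Finset.range p, (1 / 2 * pkq γ (ℓ (j+1) - ℓ j)) :=
    Finset.prod_nonneg fun j _ => mul_nonneg (by norm_num) (hq0 _)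
  refine ⟨?_, ?_, ?_⟩
  · rintro rfl
    refine hcyl.trans (ENNReal.ofReal_le_ofReal ?_)
    simp only [Finset.range_zero, Finset.prod_empty, mul_one]
    linarith [hqC (ℓ 0), hq0 (ℓ 0)]
  · intro _
    refine hcyl.trans (ENNReal.ofReal_le_ofReal ?_)
    refine mul_le_mul (hmin _ _ (by norm_num) le_rfl) ?_ hprod0 ?_
    · exact Finset.prod_le_prod (fun j _ => mul_nonneg (by norm_num) (hq0 _))
        (fun j _ => hmin _ _ (by norm_num) (by norm_num))
    · exact (mul_nonneg (by norm_num) (hq0 _)).trans (hmin (ℓ 0) _ (by norm_num) le_rfl)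
  · refine hcyl.trans (ENNReal.ofReal_le_ofReal ?_)
    have hn' : (0:ℝ) < n := by exact_mod_cast hn
    -- some gap is large
    let g : ℕ → ℕ := fun j => if j = 0 then ℓ 0 else ℓ j - ℓ (j-1)
    have hnlt : n < ℓ p := by
      rcases Nat.eq_zero_or_pos p with h | h
      · subst h; exact hp0 rfl
      · exact (hp1 h).2
    have hsum : ∀ k ≤ p, ∑ j ∈ Finset.range (k+1), g j = ℓ k := by
      intro k hk
      induction k with
      | zero => simp [g]
      | succ k ih =>
        rw [Finset.sum_range_succ, ih (by omega)]
        have := hl k (by omega)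
        simp only [g, Nat.succ_ne_zero, if_false, Nat.add_sub_cancel]
        omega
    have hex : ∃ m < p + 1, (n : ℝ) / (p + 1) ≤ g m := by
      by_contra hcon
      push Not at hcon
      have h1 : ∑ j ∈ Finset.range (p+1), (g j : ℝ) <
          ∑ j ∈ Finset.range (p+1), (n : ℝ) / (p + 1) :=
        Finset.sum_lt_sum_of_nonempty ⟨0, by simp⟩ (fun j hj => hcon j (Finset.mem_range.1 hj))
      rw [← Nat.cast_sum, hsum p le_rfl, Finset.sum_const, Finset.card_range, nsmul_eq_mul] at h1
      push_cast at h1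
      rw [mul_div_cancel₀ _ (by positivity)] at h1
      have : ℓ p < n := by exact_mod_cast h1
      omega
    obtain ⟨m, hm, hgm⟩ := hex
    have e1 : 3 / 4 * pkq γ (ℓ 0) * ∏ j ∈ Finset.range p, (1 / 2 * pkq γ (ℓ (j+1) - ℓ j)) ≤
        ∏ j ∈ Finset.range (p+1), (3 / 4 * pkq γ (g j)) := by
      rw [Finset.prod_range_succ', mul_comm]
      have : g 0 = ℓ 0 := by simp [g]
      rw [this]
      refine mul_le_mul_of_nonneg_right ?_ (mul_nonneg (by norm_num) (hq0 _))
      refine Finset.prod_le_prod (fun j _ => mul_nonneg (by norm_num) (hq0 _)) (fun j _ => ?_)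
      have : g (j+1) = ℓ (j+1) - ℓ j := by simp [g]
      rw [this]
      linarith [hq0 (ℓ (j+1) - ℓ j)]
    refine e1.trans ((pk_prod_one γ hγ (p+1) m g hm).trans ?_)
    have e2 : pkq γ (g m) ≤ pkK γ * (((p:ℝ) + 1) ^ α * (n:ℝ) ^ (-α)) := by
      refine (min_le_right _ _).trans (mul_le_mul_of_nonneg_left ?_ hK.le)
      refine (Real.rpow_le_rpow_of_nonpos (by positivity) hgm (by linarith)).trans (le_of_eq ?_)
      rw [Real.div_rpow hn'.le (by positivity), Real.rpow_neg (by positivity : (0:ℝ) ≤ (p:ℝ) + 1),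
        div_inv_eq_mul, mul_comm]
    have e3 := hM p
    have hnα : 0 < (n:ℝ) ^ (-α) := Real.rpow_pos_of_pos hn' _
    calc (3 / 4 : ℝ) ^ (p+1) * pkq γ (g m)
        ≤ (3 / 4) ^ p * pkq γ (g m) := by
          refine mul_le_mul_of_nonneg_right ?_ (hq0 _)
          exact pow_le_pow_of_le_one (by norm_num) (by norm_num) (by omega)
      _ ≤ (3 / 4) ^ p * (pkK γ * (((p:ℝ) + 1) ^ α * (n:ℝ) ^ (-α))) :=
          mul_le_mul_of_nonneg_left e2 (by positivity)
      _ = pkK γ * ((3 / 4) ^ p * ((p:ℝ) + 1) ^ α) * (n:ℝ) ^ (-α) := by ring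
      _ ≤ pkK γ * M * (n:ℝ) ^ (-α) := by gcongr

end
end
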